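/- Suppose α = 3/2 (so that β ∈ [3/4,1)). Then there exists a constant C > 0, depending only on φ, ψ, β, λ, a, b and x (but not on n or d), such that for all integers n ≥ 1 and d ≥ 3, d_W(W̃_{n,⌊dx⌋}, Z̃_n) ≤ C n^{3/2} / ln d. -/

import Mathlib

open MeasureTheory ProbabilityTheory Filter

noncomputable section

/-- Hypotheses (H.1) and (H.2) on the pair `(φ, ψ)`, together with the
parameter constraints `β ∈ (0,1)`, `λ > 0`, `α ∈ (0, 2β]`, `ν ∈ (1,2]`. -/
def SelfSimilarHyp (β lam α ν : ℝ) (φ ψ : ℝ → ℝ) : Prop :=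
  β ∈ Set.Ioo (0 : ℝ) 1 ∧ 0 < lam ∧ α ∈ Set.Ioc (0 : ℝ) (2 * β) ∧
  ν ∈ Set.Ioc (1 : ℝ) 2 ∧
  -- (H.1): φ(y) = −λ(y−1)^α + ψ(y) on [1,∞)
  (∀ y : ℝ, 1 ≤ y → φ y = -lam * (y - 1) ^ α + ψ y) ∧
  -- ψ is twice differentiable on an open set containing [1,∞)
  (∃ S : Set ℝ, IsOpen S ∧ Set.Ici (1 : ℝ) ⊆ S ∧
    ∀ y ∈ S, DifferentiableAt ℝ ψ y ∧ DifferentiableAt ℝ (deriv ψ) y) ∧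
  -- bounds (a), (b) on ψ', ψ''
  (∃ C₀ : ℝ, 0 ≤ C₀ ∧
    (∀ y : ℝ, 1 < y → |deriv ψ y| ≤ C₀ * y ^ (α - 1)) ∧
    (∀ y : ℝ, 1 < y → |deriv (deriv ψ) y| ≤ C₀ * y⁻¹ * (y - 1) ^ (α - 1))) ∧
  -- (c): ψ'(1) = βψ(1) when α ≥ 1
  (1 ≤ α → deriv ψ 1 = β * ψ 1) ∧
  -- (H.2): bounds (d), (e) on φ', φ'' for y ≥ 2
  (∃ C₁ : ℝ, 0 < C₁ ∧ ∀ y : ℝ, 2 ≤ y →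
    ((α < 1 → |deriv φ y| ≤ C₁ * (y - 1) ^ (-ν) ∧
        |deriv (deriv φ) y| ≤ C₁ * (y - 1) ^ (-ν - 1)) ∧
     (1 ≤ α → |deriv φ y| ≤ C₁ * (y - 1) ^ (α - 2) ∧
        |deriv (deriv φ) y| ≤ C₁ * (y - 1) ^ (α - 3))))

/-- The covariance function `R(s,t) = (s∧t)^{2β} φ((s∨t)/(s∧t))` for `s,t > 0`,
and `R(s,t) = 0` if `s = 0` or `t = 0`. -/
def covR (β : ℝ) (φ : ℝ → ℝ) (s t : ℝ) : ℝ :=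
  if s = 0 ∨ t = 0 then 0 else (min s t) ^ (2 * β) * φ (max s t / min s t)

/-- `Δ(k,l) = R(k+1,l+1) − R(k,l+1) − R(k+1,l) + R(k,l)`. -/
def covΔ (β : ℝ) (φ : ℝ → ℝ) (k l : ℕ) : ℝ :=
  covR β φ (k + 1) (l + 1) - covR β φ k (l + 1) - covR β φ (k + 1) l + covR β φ k l

/-- `δ_{kl} = Δ(k,l)/√(Δ(k,k)Δ(l,l))`. -/
def covδ (β : ℝ) (φ : ℝ → ℝ) (k l : ℕ) : ℝ :=
  covΔ β φ k l / Real.sqrt (covΔ β φ k k * covΔ β φ l l)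

/-- For `m ∈ ℤ`, `a_α(m) = (1/2)(|m+1|^α + |m−1|^α − 2|m|^α)`. -/
def aFun (α : ℝ) (m : ℤ) : ℝ :=
  (|(m : ℝ) + 1| ^ α + |(m : ℝ) - 1| ^ α - 2 * |(m : ℝ)| ^ α) / 2

attribute [local instance] Matrix.frobeniusNormedAddCommGroup

/-- The Wasserstein distance between the laws of `U` (under `P₁`) and `V` (under `P₂`):
the supremum of `|E[g(U)] − E[g(V)]|` over `1`-Lipschitz `g : E → ℝ`. -/
def wassersteinDist {Ω₁ Ω₂ : Type*} [MeasurableSpace Ω₁] [MeasurableSpace Ω₂]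
    {E : Type*} [NormedAddCommGroup E]
    (P₁ : Measure Ω₁) (P₂ : Measure Ω₂) (U : Ω₁ → E) (V : Ω₂ → E) : ℝ :=
  sSup {r : ℝ | ∃ g : E → ℝ, LipschitzWith 1 g ∧
    r = |(∫ ω, g (U ω) ∂P₁) - (∫ ω, g (V ω) ∂P₂)|}

/-- A family of real random variables is centered jointly Gaussian if every finite
real-linear combination of its members has a centered Gaussian law. -/
def IsCenteredGaussianFamily {Ω ι : Type*} [MeasurableSpace Ω] (P : Measure Ω)
    (X : ι → Ω → ℝ) : Prop :=
  ∀ (s : Finset ι) (c : ι → ℝ), ∃ v : NNReal,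
    P.map (fun ω => ∑ i ∈ s, c i * X i ω) = gaussianReal 0 v

set_option linter.unusedSectionVars false
set_option linter.unusedVariables false
set_option linter.unusedSimpArgs false

/-- One-dimensional Gaussian integration by parts. -/
lemma gauss_ibp1 (v : NNReal) (f f' : ℝ → ℝ) (hf : ∀ x, HasDerivAt f (f' x) x)
    (h1 : Integrable (fun x => x * f x) (gaussianReal 0 v))
    (h2 : Integrable f' (gaussianReal 0 v)) (h3 : Integrable f (gaussianReal 0 v)) :
    ∫ x, x * f x ∂(gaussianReal 0 v) = v * ∫ x, f' x ∂(gaussianReal 0 v) := by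
  by_cases hv : v = 0
  · subst hv
    simp [gaussianReal_zero_var]
  have key : ∀ h : ℝ → ℝ, Integrable h (gaussianReal 0 v) →
      Integrable (fun x => h x * gaussianPDFReal 0 v x) := by
    intro h hh
    rw [gaussianReal_of_var_ne_zero 0 hv,
      integrable_withDensity_iff (measurable_gaussianPDF 0 v)
        (ae_of_all _ fun x => gaussianPDF_lt_top)] at hh
    simpa using hh
  have hder : ∀ x, HasDerivAt (fun x => -(v : ℝ) * gaussianPDFReal 0 v x)
      (x * gaussianPDFReal 0 v x) x := by
    intro x
    have hv' : (v : ℝ) ≠ 0 := by exact_mod_cast hv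
    have hpdf : gaussianPDFReal 0 v = fun x => (√(2 * Real.pi * v))⁻¹ * Real.exp (-(x - 0) ^ 2 / (2 * v)) := by
      ext x; simp [gaussianPDFReal]
    rw [hpdf]
    have h : HasDerivAt (fun x : ℝ => -(x - 0) ^ 2 / (2 * (v : ℝ))) (-(2 * x) / (2 * v)) x := by
      have := (((hasDerivAt_id x).sub_const 0).pow 2).neg.div_const (2 * (v : ℝ))
      refine this.congr_deriv ?_
      simp
    have := ((h.exp).const_mul ((√(2 * Real.pi * v))⁻¹)).const_mul (-(v : ℝ))
    refine this.congr_deriv ?_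
    field_simp
  rw [integral_gaussianReal_eq_integral_smul hv, integral_gaussianReal_eq_integral_smul hv]
  simp only [smul_eq_mul]
  have := integral_mul_deriv_eq_deriv_mul_of_integrable (u := f) (u' := f')
    (v := fun x => -(v : ℝ) * gaussianPDFReal 0 v x) (v' := fun x => x * gaussianPDFReal 0 v x)
    (fun x _ => hf x) (fun x _ => hder x) ?_ ?_ ?_
  · calc _ = ∫ x, f x * (x * gaussianPDFReal 0 v x) := by
          congr 1; ext x; ring
      _ = _ := this
      _ = _ := by
        rw [← integral_neg, ← integral_const_mul]
        congr 1; ext x; ring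
  · refine (key _ h1).congr (ae_of_all _ fun x => ?_)
    simp only [Pi.mul_apply]; ring
  · refine ((key _ h2).const_mul (-(v : ℝ))).congr (ae_of_all _ fun x => ?_)
    simp only [Pi.mul_apply]; ring
  · refine ((key _ h3).const_mul (-(v : ℝ))).congr (ae_of_all _ fun x => ?_)
    simp only [Pi.mul_apply]; ring

/-- Integration by parts in one Gaussian variable independent of the rest. -/
lemma gauss_ibp2 {Ω E : Type*} [MeasurableSpace Ω] [MeasurableSpace E] {μ : Measure Ω}
    [IsProbabilityMeasure μ] (X : Ω → ℝ) (R : Ω → E) (hX : Measurable X) (hR : Measurable R)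
    (hind : IndepFun X R μ) (v : NNReal) (hlaw : μ.map X = gaussianReal 0 v)
    (f f' : ℝ → E → ℝ) (hf : ∀ x r, HasDerivAt (fun x => f x r) (f' x r) x)
    (hfm : Measurable (fun p : ℝ × E => f p.1 p.2))
    (hfm' : Measurable (fun p : ℝ × E => f' p.1 p.2))
    (h1 : Integrable (fun ω => X ω * f (X ω) (R ω)) μ)
    (h2 : Integrable (fun ω => f' (X ω) (R ω)) μ) (h3 : Integrable (fun ω => f (X ω) (R ω)) μ) :
    ∫ ω, X ω * f (X ω) (R ω) ∂μ = v * ∫ ω, f' (X ω) (R ω) ∂μ := by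
  have hpair : μ.map (fun ω => (X ω, R ω)) = (gaussianReal 0 v).prod (μ.map R) := by
    rw [(indepFun_iff_map_prod_eq_prod_map_map hX.aemeasurable hR.aemeasurable).1 hind, hlaw]
  have : IsProbabilityMeasure (μ.map R) := Measure.isProbabilityMeasure_map hR.aemeasurable
  have hm : Measurable (fun ω => (X ω, R ω)) := hX.prodMk hR
  have tr : ∀ F : ℝ × E → ℝ, Measurable F →
      (∫ ω, F (X ω, R ω) ∂μ = ∫ p, F p ∂((gaussianReal 0 v).prod (μ.map R))) := by
    intro F hF
    rw [← hpair, integral_map hm.aemeasurable hF.aestronglyMeasurable]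
  have ti : ∀ F : ℝ × E → ℝ, Measurable F → Integrable (fun ω => F (X ω, R ω)) μ →
      Integrable F ((gaussianReal 0 v).prod (μ.map R)) := by
    intro F hF hi
    rw [← hpair, integrable_map_measure hF.aestronglyMeasurable hm.aemeasurable]
    exact hi
  have m1 : Measurable (fun p : ℝ × E => p.1 * f p.1 p.2) := measurable_fst.mul hfm
  have i1 := ti _ m1 h1
  have i2 := ti _ hfm' h2
  have i3 := ti _ hfm h3
  rw [tr _ m1, tr _ hfm', integral_prod_symm _ i1, integral_prod_symm _ i2, ← integral_const_mul]
  refine integral_congr_ae ?_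
  filter_upwards [i1.prod_left_ae, i2.prod_left_ae, i3.prod_left_ae] with r a1 a2 a3
  exact gauss_ibp1 v _ _ (fun x => hf x r) a1 a2 a3

/-- Gaussian integration by parts for a centered Gaussian vector. -/
lemma gauss_ibp {Ω ι : Type*} [MeasurableSpace Ω] [Fintype ι] {μ : Measure Ω}
    [IsProbabilityMeasure μ] (V : ι → Ω → ℝ) (hVm : ∀ i, Measurable (V i))
    (hV : HasGaussianLaw (fun ω i => V i ω) μ) (h0 : ∀ i, ∫ ω, V i ω ∂μ = 0)
    (C : ι → ι → ℝ) (hC : ∀ i j, ∫ ω, V i ω * V j ω ∂μ = C i j) (p : ι)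
    (F F' : (ι → ℝ) → ℝ) (hF : Continuous F) (hF' : Continuous F')
    (hd : ∀ v, HasLineDerivAt ℝ F (F' v) v (C p))
    (h1 : Integrable (fun ω => V p ω * F (fun i => V i ω)) μ)
    (h2 : Integrable (fun ω => F' (fun i => V i ω)) μ)
    (h3 : Integrable (fun ω => F (fun i => V i ω)) μ) :
    ∫ ω, V p ω * F (fun i => V i ω) ∂μ = ∫ ω, F' (fun i => V i ω) ∂μ := by
  have hL2 : ∀ i, MemLp (V i) 2 μ := fun i => (hV.eval i).memLp_two
  have hlaw : μ.map (V p) = gaussianReal 0 (C p p).toNNReal := by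
    rw [(hV.eval p).map_eq_gaussianReal, h0 p, variance_eq_integral (hVm p).aemeasurable, h0 p,
      ← hC p p]
    congr 3
    ext ω; simp [pow_two]
  have hCpp : 0 ≤ C p p := by
    rw [← hC]; exact integral_nonneg fun ω => mul_self_nonneg _
  rcases hCpp.eq_or_lt with hz | hpos
  · -- degenerate case
    have hz0 : V p =ᵐ[μ] 0 := by
      have := hC p p
      rw [← hz, integral_eq_zero_iff_of_nonneg (fun ω => mul_self_nonneg _)
        ((hL2 p).integrable_mul (hL2 p))] at this
      filter_upwards [this] with ω hω
      simpa using hω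
    have hCz : C p = 0 := by
      ext j
      rw [← hC p j]
      rw [integral_congr_ae (g := fun _ => (0 : ℝ))]
      · simp
      · filter_upwards [hz0] with ω hω
        simp [hω]
    have hFz : ∀ v, F' v = 0 := by
      intro v
      have h := hd v
      rw [hCz] at h
      exact h.unique (hasLineDerivAt_zero)
    rw [integral_congr_ae (g := fun _ => (0 : ℝ))]
    · simp [hFz]
    · filter_upwards [hz0] with ω hω
      simp [hω]
  -- the nondegenerate case
  set b : ι → ℝ := fun j => C p j / C p p with hb
  set R : Ω → ι → ℝ := fun ω j => V j ω - b j * V p ω with hRdef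
  have hRm : Measurable R := by
    refine measurable_pi_lambda _ fun j => (hVm j).sub ((hVm p).const_mul _)
  have hrec : ∀ ω, (fun i => V i ω) = R ω + V p ω • b := by
    intro ω; ext j; simp [hRdef]; ring
  have hind : IndepFun (V p) R μ := by
    let L : (ι → ℝ) →L[ℝ] (Unit → ℝ) × (ι → ℝ) :=
      (ContinuousLinearMap.pi fun _ => ContinuousLinearMap.proj p).prod
        (ContinuousLinearMap.pi fun j => ContinuousLinearMap.proj j - b j • ContinuousLinearMap.proj p)
    have hjoint : HasGaussianLaw (fun ω => ((fun _ : Unit => V p ω), fun j => R ω j)) μ := by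
      exact hV.map_fun L
    have := HasGaussianLaw.indepFun_of_covariance_eval (X := fun _ : Unit => V p)
      (Y := fun j ω => R ω j) hjoint ?_
    · exact this.comp (φ := fun x : Unit → ℝ => x ()) (ψ := id) (measurable_pi_apply _) measurable_id
    · intro _ j
      have hR2 : MemLp (fun ω => R ω j) 2 μ := (hL2 j).sub ((hL2 p).const_mul _)
      rw [covariance_eq_sub (hL2 p) hR2]
      simp only [h0, zero_mul, sub_zero, Pi.mul_apply, hRdef]
      have : ∀ ω, V p ω * (V j ω - b j * V p ω) = V p ω * V j ω - b j * (V p ω * V p ω) := by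
        intro ω; ring
      simp_rw [this]
      have e1 : Integrable (fun ω => V p ω * V j ω) μ := (hL2 p).integrable_mul (hL2 j)
      have e2 : Integrable (fun ω => V p ω * V p ω) μ := (hL2 p).integrable_mul (hL2 p)
      rw [integral_sub e1 (e2.const_mul _), integral_const_mul, hC, hC]
      simp only [hb]; field_simp; ring
  have hcont : Continuous fun q : ℝ × (ι → ℝ) => q.2 + q.1 • b := by fun_prop
  have := gauss_ibp2 (V p) R (hVm p) hRm hind _ hlaw (fun x r => F (r + x • b))
    (fun x r => F' (r + x • b) / C p p) ?_ (hF.comp hcont).measurable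
    ((hF'.comp hcont).div_const _).measurable ?_ ?_ ?_
  · simp only [← hrec] at this
    rw [this, integral_div, Real.coe_toNNReal _ hCpp]
    rw [mul_div_cancel₀ _ hpos.ne']
  · intro x r
    have h := hd (r + x • b)
    have h' : HasDerivAt (fun t : ℝ => F (r + x • b + t • C p)) (F' (r + x • b))
      ((x - x) / C p p) := by simpa [HasLineDerivAt] using h
    have h2 : HasDerivAt (fun y : ℝ => (y - x) / C p p) (1 / C p p) x :=
      ((hasDerivAt_id x).sub_const x).div_const _
    have h3 := HasDerivAt.comp x h' h2
    have heq : (fun x => F (r + x • b)) =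
        (fun t : ℝ => F (r + x • b + t • C p)) ∘ (fun y : ℝ => (y - x) / C p p) := by
      ext y
      simp only [Function.comp]
      congr 1
      ext j
      simp only [hb, Pi.add_apply, Pi.smul_apply, smul_eq_mul]
      field_simp; ring
    rw [heq]
    refine h3.congr_deriv ?_
    ring
  · simpa only [← hrec] using h1
  · simpa only [← hrec] using h2.div_const _
  · simpa only [← hrec] using h3

/-- membership in all `L^p`, `p < ∞`. -/
def AllLp {Ω : Type*} [MeasurableSpace Ω] (μ : Measure Ω) (f : Ω → ℝ) : Prop :=
  ∀ p : ENNReal, p ≠ ⊤ → MemLp f p μ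

namespace AllLp
variable {Ω : Type*} [MeasurableSpace Ω] {μ : Measure Ω} [IsProbabilityMeasure μ] {f g : Ω → ℝ}

lemma add (hf : AllLp μ f) (hg : AllLp μ g) : AllLp μ (fun ω => f ω + g ω) :=
  fun p hp => (hf p hp).add (hg p hp)

lemma sub (hf : AllLp μ f) (hg : AllLp μ g) : AllLp μ (fun ω => f ω - g ω) :=
  fun p hp => (hf p hp).sub (hg p hp)

lemma mul (hf : AllLp μ f) (hg : AllLp μ g) : AllLp μ (fun ω => f ω * g ω) := by
  intro p hp
  have h2 : 2 * p ≠ ⊤ := ENNReal.mul_ne_top (by simp) hp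
  have : ENNReal.HolderTriple (2 * p) (2 * p) p := by
    constructor
    rw [ENNReal.mul_inv (by simp) (by simp), ← add_mul, ENNReal.inv_two_add_inv_two, one_mul]
  exact (hg (2 * p) h2).mul' (hf (2 * p) h2)

lemma const (c : ℝ) : AllLp μ (fun _ => c) := fun p _ => memLp_const c

lemma const_mul (c : ℝ) (hf : AllLp μ f) : AllLp μ (fun ω => c * f ω) :=
  fun p hp => (hf p hp).const_mul c

lemma sum {ι : Type*} (s : Finset ι) {f : ι → Ω → ℝ} (hf : ∀ i ∈ s, AllLp μ (f i)) :
    AllLp μ (fun ω => ∑ i ∈ s, f i ω) :=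
  fun p hp => memLp_finsetSum s fun i hi => hf i hi p hp

lemma of_bdd (hm : AEStronglyMeasurable f μ) (C : ℝ) (h : ∀ ω, |f ω| ≤ C) : AllLp μ f :=
  fun p _ => MemLp.of_bound hm C (ae_of_all _ h)

lemma integrable (hf : AllLp μ f) : Integrable f μ :=
  memLp_one_iff_integrable.1 (hf 1 (by simp))

end AllLp

section Stein

variable {n : ℕ} {κ : Type} [Fintype κ]

/-- the index type of the joint Gaussian family. -/
abbrev JI (n : ℕ) (κ : Type) := (Fin n × κ) ⊕ (Fin n × Fin n)

/-- the space of matrices with the Euclidean norm. -/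
abbrev ME (n : ℕ) := EuclideanSpace ℝ (Fin n × Fin n)

/-- joint covariance. -/
def jcov (δ : κ → κ → ℝ) (r : ℝ) : JI n κ → JI n κ → ℝ
  | .inl p, .inl q => if p.1 = q.1 then δ p.2 q.2 else 0
  | .inl _, .inr _ => 0
  | .inr _, .inl _ => 0
  | .inr p, .inr q => r * ((if p = q then 1 else 0) + (if (p.2, p.1) = q then 1 else 0))

/-- basis vectors. -/
abbrev eb (p : Fin n × Fin n) : ME n := EuclideanSpace.single p (1 : ℝ)

def Qm (c : ℝ) (v : JI n κ → ℝ) : ME n :=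
  WithLp.toLp 2 fun p => c * ∑ k, (v (.inl (p.1, k)) * v (.inl (p.2, k)) - if p.1 = p.2 then 1 else 0)

def Zm (v : JI n κ → ℝ) : ME n := WithLp.toLp 2 fun p => v (.inr p)

def Um (c θ : ℝ) (v : JI n κ → ℝ) : ME n := Real.sin θ • Qm c v + Real.cos θ • Zm v

def Sm (δ : κ → κ → ℝ) (v : JI n κ → ℝ) (j q : Fin n) : ℝ :=
  ∑ k, ∑ l, δ k l * v (.inl (j, k)) * v (.inl (q, l))

def Nm (δ : κ → κ → ℝ) (c r : ℝ) (v : JI n κ → ℝ) (j q : Fin n) : ℝ :=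
  c ^ 2 * Sm δ v j q - r * if j = q then 1 else 0

def ZNm (δ : κ → κ → ℝ) (c r : ℝ) (v : JI n κ → ℝ) : ME n :=
  WithLp.toLp 2 fun p => ∑ q, v (.inr (p.1, q)) * Nm δ c r v p.2 q

lemma continuous_Qm (c : ℝ) : Continuous (Qm c : (JI n κ → ℝ) → ME n) := by
  unfold Qm; fun_prop
lemma continuous_Zm : Continuous (Zm : (JI n κ → ℝ) → ME n) := by
  unfold Zm; fun_prop
lemma continuous_Um (c θ : ℝ) : Continuous (Um c θ : (JI n κ → ℝ) → ME n) := by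
  unfold Um
  have hz : Continuous (Zm : (JI n κ → ℝ) → ME n) := continuous_Zm
  exact ((continuous_Qm c).const_smul (Real.sin θ)).add (hz.const_smul (Real.cos θ))
lemma continuous_Nm (δ : κ → κ → ℝ) (c r : ℝ) (j q : Fin n) :
    Continuous fun v : JI n κ → ℝ => Nm δ c r v j q := by
  unfold Nm Sm; fun_prop

lemma ME_expand (L : ME n →L[ℝ] ℝ) (x : ME n) : L x = ∑ i, ∑ j, x (i, j) * L (eb (i, j)) := by
  have h := Fintype.sum_prod_type' (fun i j : Fin n => x (i, j) * L (eb (i, j)))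
  rw [← h]
  conv_lhs => rw [← (EuclideanSpace.basisFun (Fin n × Fin n) ℝ).sum_repr x]
  simp [map_sum]

/-- derivative of `Um` along the covariance direction of a `Y` variable. -/
lemma hasDerivAt_Um_Y (δ : κ → κ → ℝ) (c r θ : ℝ) (v : JI n κ → ℝ) (i : Fin n) (k : κ) :
    HasDerivAt (fun t : ℝ => Um c θ (v + t • jcov δ r (.inl (i, k))))
      (∑ q, (Real.sin θ * c * ∑ l, δ k l * v (.inl (q, l))) • (eb (i, q) + eb (q, i))) 0 := by
  have hpoly : ∀ t : ℝ, Um c θ (v + t • jcov δ r (.inl (i, k))) =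
      Um c θ v + t • (∑ q, (Real.sin θ * c * ∑ l, δ k l * v (.inl (q, l))) • (eb (i, q) + eb (q, i)))
      + t ^ 2 • ((Real.sin θ * c * ∑ l, δ k l ^ 2) • eb (i, i)) := by
    intro t
    ext ⟨a, b⟩
    simp only [Um, Qm, Zm, jcov, PiLp.add_apply, PiLp.smul_apply, smul_eq_mul, Pi.add_apply,
      Pi.smul_apply, mul_zero, add_zero, PiLp.toLp_apply, WithLp.ofLp_sum, Finset.sum_apply,
      PiLp.single_apply, Prod.mk.injEq]
    have h1 : (∑ q, (Real.sin θ * c * ∑ l, δ k l * v (.inl (q, l))) *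
        ((if a = i ∧ b = q then (1:ℝ) else 0) + (if a = q ∧ b = i then 1 else 0))) =
        Real.sin θ * c * ∑ l, ((if i = a then δ k l else 0) * v (.inl (b, l)) +
          (if i = b then δ k l else 0) * v (.inl (a, l))) := by
      simp only [mul_add, Finset.sum_add_distrib, mul_ite, mul_one, mul_zero, ite_and]
      congr 1
      · by_cases h : a = i
        · simp [h]
        · simp [h, Ne.symm h]
      · by_cases h : b = i
        · subst h; simp
        · simp [h, Ne.symm h]
    rw [h1]
    by_cases ha : i = a
    · by_cases hb : i = b
      · subst ha; subst hb
        simp only [Finset.mul_sum, ← Finset.sum_add_distrib, and_self, if_true, mul_one]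
        conv_rhs => rw [add_assoc, ← Finset.sum_add_distrib, add_right_comm, ← Finset.sum_add_distrib]
        congr 1
        refine Finset.sum_congr rfl fun l _ => ?_
        ring
      · have hab : a ≠ b := fun h => hb (ha.trans h)
        have hb' : b ≠ i := Ne.symm hb
        subst ha
        simp only [if_true, hb, hb', hab, and_false, if_false, mul_zero, add_zero, zero_mul,
          Finset.mul_sum]
        rw [add_right_comm, ← Finset.sum_add_distrib]
        congr 1
        refine Finset.sum_congr rfl fun l _ => ?_
        ring
    · have ha' : a ≠ i := Ne.symm ha
      by_cases hb : i = b
      · subst hb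
        simp only [if_true, ha, ha', false_and, if_false, mul_zero, add_zero, zero_mul, zero_add,
          Finset.mul_sum]
        rw [add_right_comm, ← Finset.sum_add_distrib]
        congr 1
        refine Finset.sum_congr rfl fun l _ => ?_
        ring
      · have hb' : b ≠ i := Ne.symm hb
        simp [ha, hb, ha']
  rw [funext hpoly]
  have h1 := ((hasDerivAt_id (0 : ℝ)).smul_const
    (∑ q, (Real.sin θ * c * ∑ l, δ k l * v (.inl (q, l))) • (eb (i, q) + eb (q, i)))).const_add (Um c θ v)
  have h2 := ((hasDerivAt_id (0 : ℝ)).pow 2).smul_const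
    ((Real.sin θ * c * ∑ l, δ k l ^ 2) • (eb (i, i) : ME n))
  have h3 := h1.add h2
  refine h3.congr_deriv ?_
  simp

/-- derivative of `Um` along the covariance direction of a `Z` variable. -/
lemma hasDerivAt_Um_Z (δ : κ → κ → ℝ) (c r θ : ℝ) (v : JI n κ → ℝ) (i q : Fin n) :
    HasDerivAt (fun t : ℝ => Um c θ (v + t • jcov δ r (.inr (i, q))))
      ((Real.cos θ * r) • (eb (i, q) + eb (q, i))) 0 := by
  have hpoly : ∀ t : ℝ, Um c θ (v + t • jcov δ r (.inr (i, q))) =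
      Um c θ v + t • ((Real.cos θ * r) • (eb (i, q) + eb (q, i))) := by
    intro t
    ext ⟨a, b⟩
    simp only [Um, Qm, Zm, jcov, PiLp.add_apply, PiLp.smul_apply, smul_eq_mul, Pi.add_apply,
      Pi.smul_apply, mul_zero, add_zero, PiLp.toLp_apply,
      PiLp.single_apply, eq_comm (b := (a, b))]
    ring
  rw [funext hpoly]
  have h1 := ((hasDerivAt_id (0 : ℝ)).smul_const
    ((Real.cos θ * r) • (eb (i, q) + eb (q, i) : ME n))).const_add (Um c θ v)
  refine h1.congr_deriv ?_
  simp

lemma hasDerivAt_Dg {g : ME n → ℝ} (hg : ContDiff ℝ 2 g) (e : ME n) (γ : ℝ → ME n) (γ' : ME n)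
    (h : HasDerivAt γ γ' 0) :
    HasDerivAt (fun t => fderiv ℝ g (γ t) e) (fderiv ℝ (fderiv ℝ g) (γ 0) γ' e) 0 := by
  have hd : Differentiable ℝ (fderiv ℝ g) :=
    (hg.fderiv_right (m := 1) (by norm_num)).differentiable (by norm_num)
  have h1 := (hd (γ 0)).hasFDerivAt.comp_hasDerivAt (0 : ℝ) h
  refine (h1.clm_apply (hasDerivAt_const (0 : ℝ) e)).congr_deriv ?_
  simp

end Stein

section Stein2
variable {n : ℕ} {κ : Type} [Fintype κ]

/-- The joint Gaussian setting. -/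
structure JG {Ω : Type*} [MeasurableSpace Ω] (μ : Measure Ω) (V : JI n κ → Ω → ℝ)
    (δ : κ → κ → ℝ) (r : ℝ) : Prop where
  meas : ∀ i, Measurable (V i)
  law : HasGaussianLaw (fun ω i => V i ω) μ
  zero : ∀ i, ∫ ω, V i ω ∂μ = 0
  cov : ∀ i j, ∫ ω, V i ω * V j ω ∂μ = jcov δ r i j

variable {Ω : Type*} [MeasurableSpace Ω] {μ : Measure Ω} [IsProbabilityMeasure μ]
  {V : JI n κ → Ω → ℝ} {δ : κ → κ → ℝ} {r : ℝ}

lemma JG.allLp (h : JG μ V δ r) (i : JI n κ) : AllLp μ (V i) :=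
  fun p hp => (h.law.eval i).memLp hp

lemma JG.vmeas (h : JG μ V δ r) : Measurable (fun ω i => V i ω) := measurable_pi_lambda _ h.meas

lemma JG.allLp_bdd (h : JG μ V δ r) {F : (JI n κ → ℝ) → ℝ} (hF : Continuous F) (C : ℝ)
    (hb : ∀ v, |F v| ≤ C) : AllLp μ (fun ω => F (fun i => V i ω)) :=
  AllLp.of_bdd (hF.measurable.comp h.vmeas).aestronglyMeasurable C fun ω => hb _

lemma JG.allLp_N (h : JG μ V δ r) (c : ℝ) (j q : Fin n) :
    AllLp μ (fun ω => Nm δ c r (fun i => V i ω) j q) := by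
  unfold Nm Sm
  refine AllLp.sub (AllLp.const_mul _ (AllLp.sum _ fun k _ => AllLp.sum _ fun l _ => ?_)) (AllLp.const _)
  exact ((h.allLp _).const_mul _).mul (h.allLp _)

lemma JG.allLp_S (h : JG μ V δ r) (j q : Fin n) :
    AllLp μ (fun ω => Sm δ (fun i => V i ω) j q) := by
  unfold Sm
  refine (AllLp.sum _ fun k _ => AllLp.sum _ fun l _ => ?_)
  exact ((h.allLp _).const_mul _).mul (h.allLp _)

/-- Smooth test function hypotheses. -/
structure GoodG (g : ME n → ℝ) (M : ℝ) : Prop where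
  cd : ContDiff ℝ 2 g
  b1 : ∀ x, ‖fderiv ℝ g x‖ ≤ 1
  b2 : ∀ x, ‖fderiv ℝ (fderiv ℝ g) x‖ ≤ M

variable {g : ME n → ℝ} {M : ℝ}

lemma GoodG.c1 (hg : GoodG g M) : Continuous (fderiv ℝ g) :=
  hg.cd.continuous_fderiv (by norm_num)

lemma GoodG.c2 (hg : GoodG g M) : Continuous (fderiv ℝ (fderiv ℝ g)) :=
  (hg.cd.fderiv_right (m := 1) (by norm_num)).continuous_fderiv (by norm_num)

lemma GoodG.a1 (hg : GoodG g M) (h : JG μ V δ r) (c θ : ℝ) (e : ME n) :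
    AllLp μ (fun ω => fderiv ℝ g (Um c θ (fun i => V i ω)) e) := by
  refine h.allLp_bdd (F := fun v => fderiv ℝ g (Um c θ v) e)
    ((hg.c1.comp (continuous_Um c θ)).clm_apply continuous_const) ‖e‖ fun v => ?_
  rw [← Real.norm_eq_abs]
  exact ((fderiv ℝ g (Um c θ v)).le_opNorm e).trans
    (by simpa using mul_le_mul_of_nonneg_right (hg.b1 _) (norm_nonneg e))

lemma GoodG.a2 (hg : GoodG g M) (h : JG μ V δ r) (c θ : ℝ) (e f : ME n) :
    AllLp μ (fun ω => fderiv ℝ (fderiv ℝ g) (Um c θ (fun i => V i ω)) f e) := by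
  refine h.allLp_bdd (F := fun v => fderiv ℝ (fderiv ℝ g) (Um c θ v) f e)
    (((hg.c2.comp (continuous_Um c θ)).clm_apply continuous_const).clm_apply continuous_const)
    (M * ‖f‖ * ‖e‖) fun v => ?_
  rw [← Real.norm_eq_abs]
  refine ((fderiv ℝ (fderiv ℝ g) (Um c θ v) f).le_opNorm e).trans ?_
  gcongr
  exact ((fderiv ℝ (fderiv ℝ g) (Um c θ v)).le_opNorm f).trans
    (by gcongr; exact hg.b2 _)

/-- IBP in a `Z` variable. -/
lemma ibp_Z (hg : GoodG g M) (h : JG μ V δ r) (c θ : ℝ) (i q : Fin n) (e : ME n)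
    (w : (JI n κ → ℝ) → ℝ) (hw : Continuous w) (hwL : AllLp μ fun ω => w fun i => V i ω)
    (hwz : ∀ (v : JI n κ → ℝ) (t : ℝ), w (v + t • jcov δ r (.inr (i, q))) = w v) :
    ∫ ω, V (.inr (i, q)) ω * (w (fun i => V i ω) * fderiv ℝ g (Um c θ fun i => V i ω) e) ∂μ
     = Real.cos θ * r * ∫ ω, w (fun i => V i ω) *
        fderiv ℝ (fderiv ℝ g) (Um c θ fun i => V i ω) (eb (i, q) + eb (q, i)) e ∂μ := by
  rw [gauss_ibp V h.meas h.law h.zero _ h.cov (.inr (i, q))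
    (fun v => w v * fderiv ℝ g (Um c θ v) e)
    (fun v => Real.cos θ * r * (w v *
      fderiv ℝ (fderiv ℝ g) (Um c θ v) (eb (i, q) + eb (q, i)) e)) ?_ ?_ ?_ ?_ ?_ ?_,
    integral_const_mul]
  · exact hw.mul ((hg.c1.comp (continuous_Um c θ)).clm_apply continuous_const)
  · exact continuous_const.mul (hw.mul (((hg.c2.comp (continuous_Um c θ)).clm_apply
      continuous_const).clm_apply continuous_const))
  · intro v
    unfold HasLineDerivAt
    simp only [hwz]
    refine ((hasDerivAt_Dg hg.cd e _ _ (hasDerivAt_Um_Z δ c r θ v i q)).const_mul (w v)).congr_deriv ?_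
    simp only [zero_smul, add_zero, map_smul, _root_.smul_apply, smul_eq_mul]
    ring
  · exact ((h.allLp _).mul (hwL.mul (hg.a1 h c θ e))).integrable
  · exact ((hwL.mul (hg.a2 h c θ e _)).const_mul _).integrable
  · exact (hwL.mul (hg.a1 h c θ e)).integrable

/-- IBP in a `Y` variable. -/
lemma ibp_Y (hg : GoodG g M) (h : JG μ V δ r) (hδ : ∀ k, δ k k = 1)
    (c θ : ℝ) (i j : Fin n) (k : κ) (e : ME n) :
    ∫ ω, V (.inl (i, k)) ω * (V (.inl (j, k)) ω * fderiv ℝ g (Um c θ fun i => V i ω) e) ∂μ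
     = (if i = j then 1 else 0) * ∫ ω, fderiv ℝ g (Um c θ fun i => V i ω) e ∂μ +
      ∑ q, ∫ ω, V (.inl (j, k)) ω * ((Real.sin θ * c * ∑ l, δ k l * V (.inl (q, l)) ω) *
        fderiv ℝ (fderiv ℝ g) (Um c θ fun i => V i ω) (eb (i, q) + eb (q, i)) e) ∂μ := by
  have hLq : ∀ q, AllLp μ fun ω => V (.inl (j, k)) ω * ((Real.sin θ * c * ∑ l, δ k l * V (.inl (q, l)) ω) *
        fderiv ℝ (fderiv ℝ g) (Um c θ fun i => V i ω) (eb (i, q) + eb (q, i)) e) := fun q =>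
    (h.allLp _).mul (((AllLp.sum _ fun l _ => (h.allLp _).const_mul _).const_mul _).mul (hg.a2 h c θ e _))
  rw [gauss_ibp V h.meas h.law h.zero _ h.cov (.inl (i, k))
    (fun v => v (.inl (j, k)) * fderiv ℝ g (Um c θ v) e)
    (fun v => (if i = j then 1 else 0) * fderiv ℝ g (Um c θ v) e + ∑ q, v (.inl (j, k)) * ((Real.sin θ * c * ∑ l, δ k l * v (.inl (q, l))) *
      fderiv ℝ (fderiv ℝ g) (Um c θ v) (eb (i, q) + eb (q, i)) e)) ?_ ?_ ?_ ?_ ?_ ?_]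
  · rw [integral_add, integral_const_mul, integral_finsetSum]
    · exact fun q _ => (hLq q).integrable
    · exact ((hg.a1 h c θ e).const_mul _).integrable
    · exact (AllLp.sum _ fun q _ => hLq q).integrable
  · exact (by fun_prop : Continuous fun v : JI n κ → ℝ => v (.inl (j, k))).mul ((hg.c1.comp (continuous_Um c θ)).clm_apply continuous_const)
  · refine (continuous_const.mul ((hg.c1.comp (continuous_Um c θ)).clm_apply continuous_const)).add ?_
    refine continuous_finsetSum _ fun q _ => ?_
    refine Continuous.mul (by fun_prop) (Continuous.mul (by fun_prop) ?_)
    exact (((hg.c2.comp (continuous_Um c θ)).clm_apply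
      continuous_const).clm_apply continuous_const)
  · intro v
    unfold HasLineDerivAt
    have h1 := hasDerivAt_Dg hg.cd e _ _ (hasDerivAt_Um_Y δ c r θ v i k)
    have h2 : HasDerivAt (fun t : ℝ => (v + t • jcov δ r (.inl (i, k))) (.inl (j, k)))
        (if i = j then 1 else 0) 0 := by
      have := ((hasDerivAt_id (0 : ℝ)).mul_const (jcov δ r (.inl (i, k)) (.inl (j, k)))).const_add (v (.inl (j, k)))
      refine this.congr_deriv ?_
      simp [jcov, hδ]
    refine (h2.mul h1).congr_deriv ?_
    simp only [zero_smul, add_zero, map_sum, map_smul, _root_.smul_apply, smul_eq_mul,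
      _root_.sum_apply, Finset.mul_sum]
  · exact ((h.allLp _).mul ((h.allLp _).mul (hg.a1 h c θ e))).integrable
  · exact (((hg.a1 h c θ e).const_mul _).add (AllLp.sum _ fun q _ => hLq q)).integrable
  · exact ((h.allLp _).mul (hg.a1 h c θ e)).integrable

end Stein2

section Stein3
variable {n : ℕ} {κ : Type} [Fintype κ]
variable {Ω : Type*} [MeasurableSpace Ω] {μ : Measure Ω} [IsProbabilityMeasure μ]
  {V : JI n κ → Ω → ℝ} {δ : κ → κ → ℝ} {r : ℝ} {g : ME n → ℝ} {M : ℝ}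

lemma stein_Q (hg : GoodG g M) (h : JG μ V δ r) (hδ : ∀ k, δ k k = 1) (c θ : ℝ) :
    ∫ ω, fderiv ℝ g (Um c θ fun i => V i ω) (Qm c fun i => V i ω) ∂μ =
    Real.sin θ * c ^ 2 * ∑ i, ∑ j, ∑ q, ∫ ω, Sm δ (fun i => V i ω) j q *
      fderiv ℝ (fderiv ℝ g) (Um c θ fun i => V i ω) (eb (i, q) + eb (q, i)) (eb (i, j)) ∂μ := by
  have hI : ∀ i j : Fin n, ∀ k : κ, Integrable (fun ω => V (.inl (i, k)) ω * (V (.inl (j, k)) ω *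
      fderiv ℝ g (Um c θ fun i => V i ω) (eb (i, j)))) μ := fun i j k =>
    ((h.allLp _).mul ((h.allLp _).mul (hg.a1 h c θ _))).integrable
  have hD : ∀ i j : Fin n, Integrable (fun ω =>
      fderiv ℝ g (Um c θ fun i => V i ω) (eb (i, j))) μ := fun i j => (hg.a1 h c θ _).integrable
  have e1 : ∀ ω, fderiv ℝ g (Um c θ fun i => V i ω) (Qm c fun i => V i ω) =
      ∑ i, ∑ j, c * ∑ k, (V (.inl (i, k)) ω * (V (.inl (j, k)) ω *
      fderiv ℝ g (Um c θ fun i => V i ω) (eb (i, j))) - (if i = j then 1 else 0) *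
        fderiv ℝ g (Um c θ fun i => V i ω) (eb (i, j))) := by
    intro ω
    rw [ME_expand]
    refine Finset.sum_congr rfl fun i _ => Finset.sum_congr rfl fun j _ => ?_
    simp only [Qm, PiLp.toLp_apply]
    rw [mul_assoc, Finset.sum_mul]
    congr 1
    refine Finset.sum_congr rfl fun k _ => ?_
    ring
  have hI2 : ∀ i j : Fin n, ∀ k : κ, Integrable (fun ω => V (.inl (i, k)) ω * (V (.inl (j, k)) ω *
      fderiv ℝ g (Um c θ fun i => V i ω) (eb (i, j))) - (if i = j then 1 else 0) *
        fderiv ℝ g (Um c θ fun i => V i ω) (eb (i, j))) μ := fun i j k =>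
    (hI i j k).sub ((hD i j).const_mul _)
  simp only [e1]
  rw [integral_finsetSum _ fun i _ => integrable_finsetSum _ fun j _ =>
    (integrable_finsetSum _ fun k _ => hI2 i j k).const_mul c, Finset.mul_sum]
  refine Finset.sum_congr rfl fun i _ => ?_
  rw [integral_finsetSum _ fun j _ => (integrable_finsetSum _ fun k _ => hI2 i j k).const_mul c,
    Finset.mul_sum]
  refine Finset.sum_congr rfl fun j _ => ?_
  rw [integral_const_mul, integral_finsetSum _ fun k _ => hI2 i j k]
  have e2 : ∀ k, ∫ ω, (V (.inl (i, k)) ω * (V (.inl (j, k)) ω *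
      fderiv ℝ g (Um c θ fun i => V i ω) (eb (i, j))) - (if i = j then 1 else 0) *
        fderiv ℝ g (Um c θ fun i => V i ω) (eb (i, j))) ∂μ =
      ∑ q, ∫ ω, V (.inl (j, k)) ω * ((Real.sin θ * c * ∑ l, δ k l * V (.inl (q, l)) ω) *
        fderiv ℝ (fderiv ℝ g) (Um c θ fun i => V i ω) (eb (i, q) + eb (q, i)) (eb (i, j))) ∂μ := by
    intro k
    rw [integral_sub (hI i j k) ((hD i j).const_mul _), ibp_Y hg h hδ, integral_const_mul]
    ring
  simp only [e2]
  rw [Finset.sum_comm, Finset.mul_sum, Finset.mul_sum]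
  refine Finset.sum_congr rfl fun q _ => ?_
  rw [← integral_finsetSum, ← integral_const_mul, ← integral_const_mul]
  · refine integral_congr_ae (ae_of_all _ fun ω => ?_)
    simp only [Sm]
    rw [Finset.mul_sum, Finset.sum_mul, Finset.mul_sum]
    refine Finset.sum_congr rfl fun k _ => ?_
    have : ∑ l, δ k l * V (.inl (j, k)) ω * V (.inl (q, l)) ω =
        V (.inl (j, k)) ω * ∑ l, δ k l * V (.inl (q, l)) ω := by
      rw [Finset.mul_sum]
      exact Finset.sum_congr rfl fun l _ => by ring
    rw [this]
    ring
  · intro k _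
    exact ((h.allLp _).mul (((AllLp.sum _ fun l _ => (h.allLp _).const_mul _).const_mul _).mul
      (hg.a2 h c θ _ _))).integrable

lemma stein_Z (hg : GoodG g M) (h : JG μ V δ r) (c θ : ℝ) :
    ∫ ω, fderiv ℝ g (Um c θ fun i => V i ω) (Zm fun i => V i ω) ∂μ =
    Real.cos θ * r * ∑ i, ∑ j, ∫ ω,
      fderiv ℝ (fderiv ℝ g) (Um c θ fun i => V i ω) (eb (i, j) + eb (j, i)) (eb (i, j)) ∂μ := by
  have e1 : ∀ ω, fderiv ℝ g (Um c θ fun i => V i ω) (Zm fun i => V i ω) =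
      ∑ i, ∑ j, V (.inr (i, j)) ω * (1 * fderiv ℝ g (Um c θ fun i => V i ω) (eb (i, j))) := by
    intro ω
    rw [ME_expand]
    simp [Zm]
  have hI : ∀ i j : Fin n, Integrable (fun ω => V (.inr (i, j)) ω *
      (1 * fderiv ℝ g (Um c θ fun i => V i ω) (eb (i, j)))) μ := fun i j =>
    ((h.allLp _).mul ((AllLp.const _).mul (hg.a1 h c θ _))).integrable
  simp only [e1]
  rw [integral_finsetSum _ fun i _ => integrable_finsetSum _ fun j _ => hI i j, Finset.mul_sum]
  refine Finset.sum_congr rfl fun i _ => ?_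
  rw [integral_finsetSum _ fun j _ => hI i j, Finset.mul_sum]
  refine Finset.sum_congr rfl fun j _ => ?_
  have := ibp_Z hg h c θ i j (eb (i, j)) (fun _ => 1) continuous_const (AllLp.const _)
    (fun _ _ => rfl)
  simpa using this

lemma Nm_invar (c r : ℝ) (δ : κ → κ → ℝ) (v : JI n κ → ℝ) (p : Fin n × Fin n) (t : ℝ) (j q : Fin n) :
    Nm δ c r (v + t • jcov δ r (.inr p)) j q = Nm δ c r v j q := by
  simp [Nm, Sm, jcov]

lemma stein_ZN (hg : GoodG g M) (h : JG μ V δ r) (c θ : ℝ) :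
    ∫ ω, fderiv ℝ g (Um c θ fun i => V i ω) (ZNm δ c r fun i => V i ω) ∂μ =
    Real.cos θ * r * ∑ i, ∑ j, ∑ q, ∫ ω, Nm δ c r (fun i => V i ω) j q *
      fderiv ℝ (fderiv ℝ g) (Um c θ fun i => V i ω) (eb (i, q) + eb (q, i)) (eb (i, j)) ∂μ := by
  have e1 : ∀ ω, fderiv ℝ g (Um c θ fun i => V i ω) (ZNm δ c r fun i => V i ω) =
      ∑ i, ∑ j, ∑ q, V (.inr (i, q)) ω * (Nm δ c r (fun i => V i ω) j q *
        fderiv ℝ g (Um c θ fun i => V i ω) (eb (i, j))) := by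
    intro ω
    rw [ME_expand]
    simp [ZNm, Finset.sum_mul, mul_assoc]
  have hI : ∀ i j q : Fin n, Integrable (fun ω => V (.inr (i, q)) ω *
      (Nm δ c r (fun i => V i ω) j q * fderiv ℝ g (Um c θ fun i => V i ω) (eb (i, j)))) μ :=
    fun i j q => ((h.allLp _).mul ((h.allLp_N c j q).mul (hg.a1 h c θ _))).integrable
  simp only [e1]
  rw [integral_finsetSum _ fun i _ => integrable_finsetSum _ fun j _ =>
    integrable_finsetSum _ fun q _ => hI i j q, Finset.mul_sum]
  refine Finset.sum_congr rfl fun i _ => ?_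
  rw [integral_finsetSum _ fun j _ => integrable_finsetSum _ fun q _ => hI i j q, Finset.mul_sum]
  refine Finset.sum_congr rfl fun j _ => ?_
  rw [integral_finsetSum _ fun q _ => hI i j q, Finset.mul_sum]
  refine Finset.sum_congr rfl fun q _ => ?_
  exact ibp_Z hg h c θ i q (eb (i, j)) (fun v => Nm δ c r v j q) (continuous_Nm δ c r j q)
    (h.allLp_N c j q) (fun v t => Nm_invar c r δ v (i, q) t j q)

lemma memLp_of_coord {X : Ω → ME n} (hX : ∀ p, AllLp μ (fun ω => X ω p)) (p : ENNReal)
    (hp : p ≠ ⊤) : MemLp X p μ := by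
  have : X = fun ω => ∑ q, X ω q • (eb q : ME n) := by
    funext ω
    conv_lhs => rw [← (EuclideanSpace.basisFun (Fin n × Fin n) ℝ).sum_repr (X ω)]
    simp
  rw [this]
  refine memLp_finsetSum _ fun q _ => ?_
  exact (ContinuousLinearMap.toSpanSingleton ℝ (eb q : ME n)).comp_memLp' (hX q p hp)

lemma allLp_norm_of_coord {X : Ω → ME n} (hX : ∀ p, AllLp μ (fun ω => X ω p)) :
    AllLp μ fun ω => ‖X ω‖ := fun p hp => (memLp_of_coord hX p hp).norm

lemma allLp_fderiv (hg : GoodG g M) (h : JG μ V δ r) (c θ : ℝ) {X : Ω → ME n}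
    (hX : ∀ p, AllLp μ (fun ω => X ω p)) :
    AllLp μ fun ω => fderiv ℝ g (Um c θ fun i => V i ω) (X ω) := by
  have : (fun ω => fderiv ℝ g (Um c θ fun i => V i ω) (X ω)) = fun ω =>
      ∑ i, ∑ j, X ω (i, j) * fderiv ℝ g (Um c θ fun i => V i ω) (eb (i, j)) := by
    funext ω
    exact ME_expand _ _
  rw [this]
  exact AllLp.sum _ fun i _ => AllLp.sum _ fun j _ => (hX _).mul (hg.a1 h c θ _)

lemma JG.allLp_Q (h : JG μ V δ r) (c : ℝ) (p : Fin n × Fin n) :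
    AllLp μ (fun ω => Qm c (fun i => V i ω) p) := by
  simp only [Qm, PiLp.toLp_apply]
  exact (AllLp.sum _ fun k _ => ((h.allLp _).mul (h.allLp _)).sub (AllLp.const _)).const_mul _

lemma JG.allLp_Z (h : JG μ V δ r) (p : Fin n × Fin n) :
    AllLp μ (fun ω => Zm (fun i => V i ω) p) := by
  simp only [Zm, PiLp.toLp_apply]
  exact h.allLp _

lemma JG.allLp_ZN (h : JG μ V δ r) (c : ℝ) (p : Fin n × Fin n) :
    AllLp μ (fun ω => ZNm δ c r (fun i => V i ω) p) := by
  simp only [ZNm, PiLp.toLp_apply]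
  exact AllLp.sum _ fun q _ => (h.allLp _).mul (h.allLp_N _ _ _)

lemma stein_id (hg : GoodG g M) (h : JG μ V δ r) (hδ : ∀ k, δ k k = 1) (c θ : ℝ) :
    r * ∫ ω, fderiv ℝ g (Um c θ fun i => V i ω)
        (Real.cos θ • (Qm c fun i => V i ω) - Real.sin θ • (Zm fun i => V i ω)) ∂μ =
    Real.sin θ * ∫ ω, fderiv ℝ g (Um c θ fun i => V i ω) (ZNm δ c r fun i => V i ω) ∂μ := by
  have hIQ : Integrable (fun ω => fderiv ℝ g (Um c θ fun i => V i ω) (Qm c fun i => V i ω)) μ := by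
    exact (allLp_fderiv hg h c θ (h.allLp_Q c)).integrable
  have hIZ : Integrable (fun ω => fderiv ℝ g (Um c θ fun i => V i ω) (Zm fun i => V i ω)) μ := by
    exact (allLp_fderiv hg h c θ h.allLp_Z).integrable
  simp only [map_sub, map_smul, smul_eq_mul]
  rw [integral_sub (hIQ.const_mul _) (hIZ.const_mul _), integral_const_mul, integral_const_mul,
    stein_Q hg h hδ, stein_Z hg h, stein_ZN hg h]
  have e : ∀ i j, ∑ q, ∫ ω, Nm δ c r (fun i => V i ω) j q *
      fderiv ℝ (fderiv ℝ g) (Um c θ fun i => V i ω) (eb (i, q) + eb (q, i)) (eb (i, j)) ∂μ =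
      c ^ 2 * ∑ q, ∫ ω, Sm δ (fun i => V i ω) j q *
      fderiv ℝ (fderiv ℝ g) (Um c θ fun i => V i ω) (eb (i, q) + eb (q, i)) (eb (i, j)) ∂μ -
      r * ∫ ω, fderiv ℝ (fderiv ℝ g) (Um c θ fun i => V i ω) (eb (i, j) + eb (j, i)) (eb (i, j)) ∂μ := by
    intro i j
    have : r * ∫ ω, fderiv ℝ (fderiv ℝ g) (Um c θ fun i => V i ω) (eb (i, j) + eb (j, i)) (eb (i, j)) ∂μ
      = ∑ q, (r * if j = q then 1 else 0) * ∫ ω, fderiv ℝ (fderiv ℝ g) (Um c θ fun i => V i ω)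
        (eb (i, q) + eb (q, i)) (eb (i, j)) ∂μ := by
      simp only [mul_ite, mul_one, mul_zero, ite_mul, zero_mul]
      simp only [Finset.sum_ite_eq, Finset.mem_univ, if_true]
    rw [this, Finset.mul_sum, ← Finset.sum_sub_distrib]
    refine Finset.sum_congr rfl fun q _ => ?_
    rw [← integral_const_mul, ← integral_const_mul, ← integral_sub]
    · refine integral_congr_ae (ae_of_all _ fun ω => ?_)
      simp only [Nm]
      ring
    · exact (((h.allLp_S j q).mul (hg.a2 h c θ _ _)).const_mul _).integrable
    · exact ((hg.a2 h c θ _ _).const_mul _).integrable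
  simp only [e, Finset.sum_sub_distrib, ← Finset.mul_sum]
  ring

end Stein3

section Stein4
variable {n : ℕ} {κ : Type} [Fintype κ]
variable {Ω : Type*} [MeasurableSpace Ω] {μ : Measure Ω} [IsProbabilityMeasure μ]
  {V : JI n κ → Ω → ℝ} {δ : κ → κ → ℝ} {r : ℝ} {g : ME n → ℝ} {M : ℝ}

lemma GoodG.lip (hg : GoodG g M) : LipschitzWith 1 g := by
  refine lipschitzWith_of_nnnorm_fderiv_le (𝕜 := ℝ) (hg.cd.differentiable (by norm_num)) fun x => ?_
  exact_mod_cast hg.b1 x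

lemma interp_bound (hg : GoodG g M) (h : JG μ V δ r) (hδ : ∀ k, δ k k = 1) (hr : 0 < r) (c : ℝ) :
    |∫ ω, g (Qm c fun i => V i ω) ∂μ - ∫ ω, g (Zm fun i => V i ω) ∂μ| ≤
      Real.pi / 2 * (r⁻¹ * ∫ ω, ‖ZNm δ c r fun i => V i ω‖ ∂μ) := by
  have hnQ := allLp_norm_of_coord (μ := μ) (h.allLp_Q c)
  have hnZ := allLp_norm_of_coord (μ := μ) h.allLp_Z
  have hnN := allLp_norm_of_coord (μ := μ) (h.allLp_ZN c)
  have hUm : ∀ θ, Measurable fun ω => Um c θ fun i => V i ω := fun θ =>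
    (continuous_Um c θ).measurable.comp h.vmeas
  have hgm : ∀ θ, AEStronglyMeasurable (fun ω => g (Um c θ fun i => V i ω)) μ := fun θ =>
    (hg.cd.continuous.measurable.comp (hUm θ)).aestronglyMeasurable
  have hUn : ∀ θ ω, ‖Um c θ fun i => V i ω‖ ≤ ‖Qm c fun i => V i ω‖ + ‖Zm fun i => V i ω‖ := by
    intro θ ω
    unfold Um
    refine (norm_add_le _ _).trans ?_
    rw [norm_smul, norm_smul]
    have h1 := Real.abs_sin_le_one θ
    have h2 := Real.abs_cos_le_one θ
    simp only [Real.norm_eq_abs]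
    nlinarith [norm_nonneg (Qm c fun i => V i ω), norm_nonneg (Zm fun i => V i ω)]
  have hgi : ∀ θ, Integrable (fun ω => g (Um c θ fun i => V i ω)) μ := by
    intro θ
    refine Integrable.mono' (((hnQ.add hnZ).add (AllLp.const |g 0|)).integrable) (hgm θ)
      (ae_of_all _ fun ω => ?_)
    have h1 := hg.lip.dist_le_mul (Um c θ fun i => V i ω) 0
    rw [Real.dist_eq, dist_zero_right] at h1
    have h2 := abs_sub_abs_le_abs_sub (g (Um c θ fun i => V i ω)) (g 0)
    have h3 := hUn θ ω
    rw [Real.norm_eq_abs]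
    simp only [NNReal.coe_one, one_mul] at h1
    linarith
  have hder : ∀ θ : ℝ, HasDerivAt (fun θ => ∫ ω, g (Um c θ fun i => V i ω) ∂μ)
      (∫ ω, fderiv ℝ g (Um c θ fun i => V i ω)
        (Real.cos θ • (Qm c fun i => V i ω) - Real.sin θ • (Zm fun i => V i ω)) ∂μ) θ := by
    intro θ
    have hX : ∀ p, AllLp μ fun ω => (Real.cos θ • (Qm c fun i => V i ω) -
        Real.sin θ • (Zm fun i => V i ω) : ME n) p := by
      intro p
      simp only [PiLp.sub_apply, PiLp.smul_apply, smul_eq_mul]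
      exact ((h.allLp_Q c p).const_mul _).sub ((h.allLp_Z p).const_mul _)
    refine (hasDerivAt_integral_of_dominated_loc_of_deriv_le (s := Set.univ) (F := fun θ ω => g (Um c θ fun i => V i ω))
      (F' := fun θ ω => fderiv ℝ g (Um c θ fun i => V i ω)
        (Real.cos θ • (Qm c fun i => V i ω) - Real.sin θ • (Zm fun i => V i ω)))
      (bound := fun ω => ‖Qm c fun i => V i ω‖ + ‖Zm fun i => V i ω‖) univ_mem
      (Eventually.of_forall hgm) (hgi θ) (allLp_fderiv hg h c θ hX).integrable.aestronglyMeasurable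
      (ae_of_all _ fun ω θ _ => ?_) (hnQ.add hnZ).integrable (ae_of_all _ fun ω θ _ => ?_)).2
    · refine ((fderiv ℝ g _).le_opNorm _).trans ?_
      have h0 := hg.b1 (Um c θ fun i => V i ω)
      have h1 := Real.abs_sin_le_one θ
      have h2 := Real.abs_cos_le_one θ
      have h3 : ‖Real.cos θ • (Qm c fun i => V i ω) - Real.sin θ • (Zm fun i => V i ω)‖ ≤
          ‖Qm c fun i => V i ω‖ + ‖Zm fun i => V i ω‖ := by
        refine (norm_sub_le _ _).trans ?_
        rw [norm_smul, norm_smul]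
        simp only [Real.norm_eq_abs]
        nlinarith [norm_nonneg (Qm c fun i => V i ω), norm_nonneg (Zm fun i => V i ω)]
      exact (mul_le_of_le_one_left (norm_nonneg _) h0).trans h3
    · have h1 : HasDerivAt (fun θ => Um c θ fun i => V i ω)
          (Real.cos θ • (Qm c fun i => V i ω) - Real.sin θ • (Zm fun i => V i ω)) θ := by
        unfold Um
        refine (((Real.hasDerivAt_sin θ).smul_const _).add
          ((Real.hasDerivAt_cos θ).smul_const _)).congr_deriv ?_
        rw [neg_smul, sub_eq_add_neg]
      exact ((hg.cd.differentiable (by norm_num)) _).hasFDerivAt.comp_hasDerivAt θ h1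
  have hbd : ∀ θ : ℝ, ‖∫ ω, fderiv ℝ g (Um c θ fun i => V i ω)
        (Real.cos θ • (Qm c fun i => V i ω) - Real.sin θ • (Zm fun i => V i ω)) ∂μ‖ ≤
        r⁻¹ * ∫ ω, ‖ZNm δ c r fun i => V i ω‖ ∂μ := by
    intro θ
    have e := stein_id hg h hδ c θ
    rw [← eq_inv_mul_iff_mul_eq₀ hr.ne'] at e
    rw [e, norm_mul, Real.norm_of_nonneg (inv_nonneg.2 hr.le), norm_mul]
    gcongr
    refine (mul_le_of_le_one_left (norm_nonneg _) (Real.abs_sin_le_one θ)).trans ?_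
    refine norm_integral_le_of_norm_le hnN.integrable (ae_of_all _ fun ω => ?_)
    exact ((fderiv ℝ g _).le_opNorm _).trans (mul_le_of_le_one_left (norm_nonneg _) (hg.b1 _))
  have key := Convex.norm_image_sub_le_of_norm_hasDerivWithin_le (s := Set.univ)
    (x := 0) (y := Real.pi / 2)
    (fun θ _ => (hder θ).hasDerivWithinAt) (fun θ _ => hbd θ) convex_univ trivial trivial
  simp only [Um, Real.sin_pi_div_two, Real.cos_pi_div_two, Real.sin_zero, Real.cos_zero, one_smul,
    zero_smul, add_zero, zero_add, sub_zero] at key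
  rw [Real.norm_eq_abs, Real.norm_of_nonneg (by positivity)] at key
  linarith

end Stein4

section Stein5
variable {n : ℕ} {κ : Type} [Fintype κ]
variable {Ω : Type*} [MeasurableSpace Ω] {μ : Measure Ω} [IsProbabilityMeasure μ]
  {V : JI n κ → Ω → ℝ} {δ : κ → κ → ℝ} {r : ℝ}

lemma hasDerivAt_coord (v w : JI n κ → ℝ) (b : JI n κ) :
    HasDerivAt (fun t : ℝ => (v + t • w) b) (w b) 0 := by
  have := ((hasDerivAt_id (0 : ℝ)).mul_const (w b)).const_add (v b)
  exact this.congr_deriv (by simp)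

lemma wick4 (h : JG μ V δ r) (a b c d : JI n κ) :
    ∫ ω, V a ω * (V b ω * V c ω * V d ω) ∂μ =
      jcov δ r a b * jcov δ r c d + jcov δ r a c * jcov δ r b d + jcov δ r a d * jcov δ r b c := by
  rw [gauss_ibp V h.meas h.law h.zero _ h.cov a (fun v => v b * v c * v d)
    (fun v => jcov δ r a b * (v c * v d) + jcov δ r a c * (v b * v d) + jcov δ r a d * (v b * v c))
    (by fun_prop) (by fun_prop) ?_ ?_ ?_ ?_]
  · have H := fun i j => ((h.allLp i).mul (h.allLp j)).integrable
    rw [integral_add, integral_add, integral_const_mul, integral_const_mul, integral_const_mul,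
      h.cov, h.cov, h.cov]
    · exact (H _ _).const_mul _
    · exact (H _ _).const_mul _
    · exact ((H _ _).const_mul _).add ((H _ _).const_mul _)
    · exact (H _ _).const_mul _
  · intro v
    have := ((hasDerivAt_coord v (jcov δ r a) b).mul (hasDerivAt_coord v (jcov δ r a) c)).mul
      (hasDerivAt_coord v (jcov δ r a) d)
    refine HasDerivAt.congr_deriv this ?_
    simp
    ring
  · exact ((h.allLp _).mul (((h.allLp _).mul (h.allLp _)).mul (h.allLp _))).integrable
  · exact (((((h.allLp _).mul (h.allLp _)).const_mul _).add (((h.allLp _).mul (h.allLp _)).const_mul _)).add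
      (((h.allLp _).mul (h.allLp _)).const_mul _)).integrable
  · exact (((h.allLp _).mul (h.allLp _)).mul (h.allLp _)).integrable

/-- sum of squares of the correlations. -/
def tau2 (δ : κ → κ → ℝ) : ℝ := ∑ k, ∑ l, δ k l ^ 2
/-- trace of the fourth power of the correlation matrix. -/
def tau4 (δ : κ → κ → ℝ) : ℝ := ∑ k, ∑ l, ∑ k', ∑ l', δ k l * δ k' l' * (δ k k' * δ l l')

lemma int_S (h : JG μ V δ r) (j q : Fin n) :
    ∫ ω, Sm δ (fun i => V i ω) j q ∂μ = if j = q then tau2 δ else 0 := by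
  unfold Sm
  have H := fun i j => ((h.allLp i).mul (h.allLp j)).integrable
  have H' : ∀ k l, Integrable (fun ω => δ k l * V (.inl (j, k)) ω * V (.inl (q, l)) ω) μ := by
    intro k l
    simp only [mul_assoc]
    exact (H _ _).const_mul _
  rw [integral_finsetSum _ fun k _ => integrable_finsetSum _ fun l _ => H' k l]
  have : ∀ k, ∫ ω, ∑ l, δ k l * V (.inl (j, k)) ω * V (.inl (q, l)) ω ∂μ =
      ∑ l, δ k l * jcov δ r (.inl (j, k) : JI n κ) (.inl (q, l)) := by
    intro k
    rw [integral_finsetSum _ fun l _ => H' k l]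
    refine Finset.sum_congr rfl fun l _ => ?_
    simp only [mul_assoc]
    rw [integral_const_mul, h.cov]
  simp only [this, jcov, tau2]
  split_ifs with hj
  · refine Finset.sum_congr rfl fun k _ => Finset.sum_congr rfl fun l _ => ?_
    ring
  · simp

lemma int_S2 (h : JG μ V δ r) (hs : ∀ k l, δ k l = δ l k) (j q : Fin n) :
    ∫ ω, Sm δ (fun i => V i ω) j q * Sm δ (fun i => V i ω) j q ∂μ =
      tau4 δ + if j = q then tau2 δ ^ 2 + tau4 δ else 0 := by
  have e : ∀ ω, Sm δ (fun i => V i ω) j q * Sm δ (fun i => V i ω) j q =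
      ∑ k, ∑ l, ∑ k', ∑ l', δ k l * δ k' l' * (V (.inl (j, k)) ω * (V (.inl (q, l)) ω *
        V (.inl (j, k')) ω * V (.inl (q, l')) ω)) := by
    intro ω
    simp only [Sm, Finset.sum_mul, Finset.mul_sum]
    refine Finset.sum_congr rfl fun k _ => Finset.sum_congr rfl fun l _ =>
      Finset.sum_congr rfl fun k' _ => Finset.sum_congr rfl fun l' _ => ?_
    ring
  have H : ∀ k l k' l', Integrable (fun ω => δ k l * δ k' l' * (V (.inl (j, k)) ω * (V (.inl (q, l)) ω *
        V (.inl (j, k')) ω * V (.inl (q, l')) ω))) μ := fun k l k' l' =>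
    (((h.allLp _).mul (((h.allLp _).mul (h.allLp _)).mul (h.allLp _))).const_mul _).integrable
  simp only [e]
  rw [integral_finsetSum _ fun k _ => integrable_finsetSum _ fun l _ => integrable_finsetSum _
    fun k' _ => integrable_finsetSum _ fun l' _ => H k l k' l']
  have e2 : ∀ k l k' l', ∫ ω, δ k l * δ k' l' * (V (.inl (j, k)) ω * (V (.inl (q, l)) ω *
        V (.inl (j, k')) ω * V (.inl (q, l')) ω)) ∂μ =
      δ k l * δ k' l' * (δ k k' * δ l l') + ((if j = q then δ k l ^ 2 * δ k' l' ^ 2 else 0)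
       + if j = q then δ k l * δ l' k' * (δ k l' * δ l k') else 0) := by
    intro k l k' l'
    rw [integral_const_mul, wick4 h]
    simp only [jcov, if_true]
    by_cases hjq : j = q
    · subst hjq
      simp only [if_true]
      rw [hs l' k']
      ring
    · simp [hjq]
  have e3 : ∀ k, ∫ ω, ∑ l, ∑ k', ∑ l', δ k l * δ k' l' * (V (.inl (j, k)) ω * (V (.inl (q, l)) ω *
        V (.inl (j, k')) ω * V (.inl (q, l')) ω)) ∂μ = ∑ l, ∑ k', ∑ l', (δ k l * δ k' l' * (δ k k' * δ l l') + ((if j = q then δ k l ^ 2 * δ k' l' ^ 2 else 0)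
       + if j = q then δ k l * δ l' k' * (δ k l' * δ l k') else 0)) := by
    intro k
    rw [integral_finsetSum _ fun l _ => integrable_finsetSum _
      fun k' _ => integrable_finsetSum _ fun l' _ => H k l k' l']
    refine Finset.sum_congr rfl fun l _ => ?_
    rw [integral_finsetSum _
      fun k' _ => integrable_finsetSum _ fun l' _ => H k l k' l']
    refine Finset.sum_congr rfl fun k' _ => ?_
    rw [integral_finsetSum _ fun l' _ => H k l k' l']
    exact Finset.sum_congr rfl fun l' _ => e2 k l k' l'
  simp only [e3, Finset.sum_add_distrib]
  congr 1
  by_cases hjq : j = q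
  · simp only [hjq, if_true]
    congr 1
    · simp only [tau2, sq (∑ k, ∑ l, δ k l ^ 2), Finset.sum_mul, Finset.mul_sum]
      refine Finset.sum_congr rfl fun k _ => Finset.sum_congr rfl fun l _ =>
        Finset.sum_congr rfl fun k' _ => Finset.sum_congr rfl fun l' _ => mul_comm _ _
    · simp only [tau4]
      refine Finset.sum_congr rfl fun k _ => Finset.sum_congr rfl fun l _ => ?_
      exact Finset.sum_comm
  · simp [hjq]

lemma sum_N2 (h : JG μ V δ r) (hs : ∀ k l, δ k l = δ l k) (c : ℝ) :
    ∑ j : Fin n, ∑ q : Fin n, ∫ ω, Nm δ c r (fun i => V i ω) j q * Nm δ c r (fun i => V i ω) j q ∂μ =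
      c ^ 4 * ((n : ℝ) ^ 2 + n) * tau4 δ + n * (c ^ 2 * tau2 δ - r) ^ 2 := by
  have e : ∀ j q : Fin n, ∫ ω, Nm δ c r (fun i => V i ω) j q * Nm δ c r (fun i => V i ω) j q ∂μ =
      c ^ 4 * tau4 δ + if j = q then c ^ 4 * tau4 δ + (c ^ 2 * tau2 δ - r) ^ 2 else 0 := by
    intro j q
    have e1 : ∀ ω, Nm δ c r (fun i => V i ω) j q * Nm δ c r (fun i => V i ω) j q =
      c ^ 4 * (Sm δ (fun i => V i ω) j q * Sm δ (fun i => V i ω) j q) -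
      (2 * c ^ 2 * r * if j = q then 1 else 0) * Sm δ (fun i => V i ω) j q +
      r ^ 2 * if j = q then 1 else 0 := by
      intro ω
      simp only [Nm]
      split_ifs <;> ring
    simp only [e1]
    have i1 := (((h.allLp_S j q).mul (h.allLp_S j q)).const_mul (c ^ 4)).integrable
    have i2 := ((h.allLp_S j q).const_mul (2 * c ^ 2 * r * if j = q then 1 else 0)).integrable
    have i3 : Integrable (fun ω => c ^ 4 * (Sm δ (fun i => V i ω) j q * Sm δ (fun i => V i ω) j q) -
      (2 * c ^ 2 * r * if j = q then 1 else 0) * Sm δ (fun i => V i ω) j q) μ := i1.sub i2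
    rw [integral_add i3 (integrable_const _), integral_sub i1 i2, integral_const_mul,
      integral_const_mul, int_S h, int_S2 h hs, integral_const]
    simp only [probReal_univ, one_smul]
    split_ifs <;> ring
  simp only [e, Finset.sum_add_distrib, Finset.sum_ite_eq, Finset.mem_univ, if_true,
    Finset.sum_const, Finset.card_univ, Fintype.card_fin, nsmul_eq_mul]
  ring

lemma int_ZZNN (h : JG μ V δ r) (c : ℝ) (i j q q' : Fin n) :
    ∫ ω, V (.inr (i, q)) ω * (V (.inr (i, q')) ω * (Nm δ c r (fun i => V i ω) j q *
      Nm δ c r (fun i => V i ω) j q')) ∂μ =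
    (r * ((if q = q' then 1 else 0) + if q = i ∧ i = q' then 1 else 0)) *
      ∫ ω, Nm δ c r (fun i => V i ω) j q * Nm δ c r (fun i => V i ω) j q' ∂μ := by
  rw [gauss_ibp V h.meas h.law h.zero _ h.cov (.inr (i, q))
    (fun v => v (.inr (i, q')) * (Nm δ c r v j q * Nm δ c r v j q'))
    (fun v => (r * ((if q = q' then 1 else 0) + if q = i ∧ i = q' then 1 else 0)) *
      (Nm δ c r v j q * Nm δ c r v j q'))
    ?_ ?_ ?_ ?_ ?_ ?_, integral_const_mul]
  · exact (by fun_prop : Continuous fun v : JI n κ → ℝ => v (.inr (i, q'))).mul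
      ((continuous_Nm δ c r j q).mul (continuous_Nm δ c r j q'))
  · exact continuous_const.mul
      ((continuous_Nm δ c r j q).mul (continuous_Nm δ c r j q'))
  · intro v
    unfold HasLineDerivAt
    simp only [Nm_invar]
    refine ((hasDerivAt_coord v (jcov δ r (.inr (i, q))) (.inr (i, q'))).mul_const _).congr_deriv ?_
    simp [jcov, Prod.mk.injEq]
  · exact ((h.allLp _).mul ((h.allLp _).mul ((h.allLp_N c _ _).mul (h.allLp_N c _ _)))).integrable
  · exact (((h.allLp_N c _ _).mul (h.allLp_N c _ _)).const_mul _).integrable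
  · exact ((h.allLp _).mul ((h.allLp_N c _ _).mul (h.allLp_N c _ _))).integrable

lemma int_ZN2 (h : JG μ V δ r) (hs : ∀ k l, δ k l = δ l k) (c : ℝ) :
    ∫ ω, ‖ZNm δ c r fun i => V i ω‖ ^ 2 ∂μ = r * (n + 1) *
      (c ^ 4 * ((n : ℝ) ^ 2 + n) * tau4 δ + n * (c ^ 2 * tau2 δ - r) ^ 2) := by
  have e : ∀ ω, ‖ZNm δ c r fun i => V i ω‖ ^ 2 = ∑ i, ∑ j, ∑ q, ∑ q',
      V (.inr (i, q)) ω * (V (.inr (i, q')) ω * (Nm δ c r (fun i => V i ω) j q *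
      Nm δ c r (fun i => V i ω) j q')) := by
    intro ω
    rw [EuclideanSpace.norm_sq_eq, Fintype.sum_prod_type]
    refine Finset.sum_congr rfl fun i _ => Finset.sum_congr rfl fun j _ => ?_
    simp only [ZNm, PiLp.toLp_apply, Real.norm_eq_abs, sq_abs]
    rw [sq, Finset.sum_mul_sum]
    refine Finset.sum_congr rfl fun q _ => Finset.sum_congr rfl fun q' _ => ?_
    ring
  have H : ∀ i j q q', Integrable (fun ω => V (.inr (i, q)) ω * (V (.inr (i, q')) ω *
      (Nm δ c r (fun i => V i ω) j q * Nm δ c r (fun i => V i ω) j q'))) μ := fun i j q q' =>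
    ((h.allLp _).mul ((h.allLp _).mul ((h.allLp_N c _ _).mul (h.allLp_N c _ _)))).integrable
  simp only [e]
  rw [integral_finsetSum _ fun i _ => integrable_finsetSum _ fun j _ => integrable_finsetSum _
    fun q _ => integrable_finsetSum _ fun q' _ => H i j q q']
  have e3 : ∀ i, ∫ ω, ∑ j, ∑ q, ∑ q',
      V (.inr (i, q)) ω * (V (.inr (i, q')) ω * (Nm δ c r (fun i => V i ω) j q *
      Nm δ c r (fun i => V i ω) j q')) ∂μ = ∑ j, (r * ∑ q, ∫ ω, Nm δ c r (fun i => V i ω) j q *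
      Nm δ c r (fun i => V i ω) j q ∂μ + r * ∫ ω, Nm δ c r (fun i => V i ω) j i *
      Nm δ c r (fun i => V i ω) j i ∂μ) := by
    intro i
    rw [integral_finsetSum _ fun j _ => integrable_finsetSum _
      fun q _ => integrable_finsetSum _ fun q' _ => H i j q q']
    refine Finset.sum_congr rfl fun j _ => ?_
    rw [integral_finsetSum _
      fun q _ => integrable_finsetSum _ fun q' _ => H i j q q']
    have : ∀ q, ∫ ω, ∑ q', V (.inr (i, q)) ω * (V (.inr (i, q')) ω * (Nm δ c r (fun i => V i ω) j q *
      Nm δ c r (fun i => V i ω) j q')) ∂μ = r * ∫ ω, Nm δ c r (fun i => V i ω) j q *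
      Nm δ c r (fun i => V i ω) j q ∂μ + if q = i then r * ∫ ω, Nm δ c r (fun i => V i ω) j q *
      Nm δ c r (fun i => V i ω) j i ∂μ else 0 := by
      intro q
      rw [integral_finsetSum _ fun q' _ => H i j q q']
      simp only [int_ZZNN h, mul_add, add_mul, Finset.sum_add_distrib, ite_and]
      congr 1
      · simp
      · split_ifs with hq
        · simp
        · simp
    simp only [this, Finset.sum_add_distrib, Finset.sum_ite_eq', Finset.mem_univ, if_true, Finset.mul_sum]
  simp only [e3]
  rw [← sum_N2 h hs c]
  simp only [Finset.sum_add_distrib, ← Finset.mul_sum, Finset.sum_const, Finset.card_univ,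
    Fintype.card_fin, nsmul_eq_mul]
  rw [Finset.sum_comm (f := fun i j => ∫ ω, Nm δ c r (fun i => V i ω) j i *
      Nm δ c r (fun i => V i ω) j i ∂μ)]
  ring

lemma stein_final {g : ME n → ℝ} {M : ℝ} (hg : GoodG g M) (h : JG μ V δ r) (hδ : ∀ k, δ k k = 1)
    (hs : ∀ k l, δ k l = δ l k) (hr : 0 < r) (c : ℝ) :
    |∫ ω, g (Qm c fun i => V i ω) ∂μ - ∫ ω, g (Zm fun i => V i ω) ∂μ| ≤
      Real.pi / 2 * (r⁻¹ * Real.sqrt (r * (n + 1) *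
      (c ^ 4 * ((n : ℝ) ^ 2 + n) * tau4 δ + n * (c ^ 2 * tau2 δ - r) ^ 2))) := by
  refine (interp_bound hg h hδ hr c).trans ?_
  gcongr
  rw [← int_ZN2 h hs c]
  refine Real.le_sqrt_of_sq_le ?_
  have hn := allLp_norm_of_coord (μ := μ) (h.allLp_ZN c)
  have := variance_nonneg (fun ω => ‖ZNm δ c r fun i => V i ω‖) μ
  rw [variance_eq_sub (hn 2 (by simp))] at this
  simp only [Pi.pow_apply] at this
  linarith

end Stein5

section Moll
open scoped Convolution

lemma conv_lip {E E' F : Type*} [NormedAddCommGroup E] [InnerProductSpace ℝ E]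
    [FiniteDimensional ℝ E] [MeasurableSpace E] [BorelSpace E]
    [NormedAddCommGroup E'] [NormedSpace ℝ E'] [NormedAddCommGroup F] [NormedSpace ℝ F]
    (f : E → E') (hf : Continuous f) (hc : HasCompactSupport f) (g : E → ℝ) (hg : LipschitzWith 1 g)
    (L : E' →L[ℝ] ℝ →L[ℝ] F) (x y : E) :
    ‖(f ⋆[L, volume] g) x - (f ⋆[L, volume] g) y‖ ≤ (‖L‖ * ∫ t, ‖f t‖) * ‖x - y‖ := by
  have hex : ConvolutionExists f g L volume :=
    hc.convolutionExists_left L hf (hg.continuous.locallyIntegrable)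
  have h1 : Integrable (fun t => f t) (volume : Measure E) := hf.integrable_of_hasCompactSupport hc
  unfold convolution
  rw [← integral_sub (hex x) (hex y)]
  have e : (‖L‖ * ∫ t, ‖f t‖) * ‖x - y‖ = ∫ t, ‖L‖ * ‖f t‖ * ‖x - y‖ := by
    rw [integral_mul_const, integral_const_mul]
  rw [e]
  refine norm_integral_le_of_norm_le ((h1.norm.const_mul _).mul_const _) (ae_of_all _ fun t => ?_)
  rw [← map_sub]
  refine (L.le_opNorm₂ _ _).trans ?_
  gcongr
  have := hg.dist_le_mul (x - t) (y - t)
  rw [Real.dist_eq, dist_eq_norm] at this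
  simpa using this

lemma conv_lip2 {E E' F : Type*} [NormedAddCommGroup E] [InnerProductSpace ℝ E]
    [FiniteDimensional ℝ E] [MeasurableSpace E] [BorelSpace E]
    [NormedAddCommGroup E'] [NormedSpace ℝ E'] [NormedAddCommGroup F] [NormedSpace ℝ F]
    (f : E → E') (hf : Continuous f) (hc : HasCompactSupport f) (g : E → ℝ) (hg : LipschitzWith 1 g)
    (L : E' →L[ℝ] ℝ →L[ℝ] F) : ∃ K : NNReal, LipschitzWith K (f ⋆[L, volume] g) := by
  have hnn : 0 ≤ ‖L‖ * ∫ t, ‖f t‖ :=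
    mul_nonneg L.opNorm_nonneg (integral_nonneg fun t => norm_nonneg _)
  refine ⟨⟨_, hnn⟩, LipschitzWith.of_dist_le_mul fun x y => ?_⟩
  rw [dist_eq_norm, dist_eq_norm]
  exact conv_lip f hf hc g hg L x y

lemma exists_moll {n : ℕ} (g : ME n → ℝ) (hg : LipschitzWith 1 g) (ε : ℝ) (hε : 0 < ε) :
    ∃ G : ME n → ℝ, ∃ M : ℝ, GoodG G M ∧ ∀ x, |G x - g x| ≤ ε := by
  let φ : ContDiffBump (0 : ME n) := ⟨ε / 2, ε, by positivity, by linarith⟩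
  have hφc : HasCompactSupport (φ.normed volume) := φ.hasCompactSupport_normed
  have hφd : ContDiff ℝ 2 (φ.normed volume) := φ.contDiff_normed
  have hφd1 : ContDiff ℝ 1 (φ.normed volume) := φ.contDiff_normed
  have hgl : LocallyIntegrable g (volume : Measure (ME n)) := hg.continuous.locallyIntegrable
  let L := ContinuousLinearMap.lsmul ℝ ℝ (E := ℝ)
  obtain ⟨K, hK⟩ := conv_lip2 _ (hφd1.continuous_fderiv (by norm_num)) (hφc.fderiv ℝ) g hg
    (L.precompL (ME n))
  refine ⟨φ.normed volume ⋆[L, volume] g, K,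
    ⟨hφc.contDiff_convolution_left L hφd hgl, fun x => ?_, fun x => ?_⟩, fun x => ?_⟩
  · have hl : LipschitzWith 1 (φ.normed volume ⋆[L, volume] g) := by
      refine LipschitzWith.of_dist_le_mul fun x y => ?_
      rw [dist_eq_norm, dist_eq_norm]
      refine (conv_lip _ hφd.continuous hφc g hg L x y).trans ?_
      gcongr
      have h1 : ∫ t, ‖φ.normed volume t‖ = 1 := by
        rw [← φ.integral_normed (μ := volume)]
        refine integral_congr_ae (ae_of_all _ fun t => ?_)
        exact Real.norm_of_nonneg (φ.nonneg_normed t)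
      rw [h1, mul_one]
      exact ContinuousLinearMap.opNorm_lsmul_le
    exact_mod_cast norm_fderiv_le_of_lipschitz ℝ hl (x₀ := x)
  · have hfd : fderiv ℝ (φ.normed volume ⋆[L, volume] g) =
        (fderiv ℝ (φ.normed volume) ⋆[L.precompL (ME n), volume] g) := by
      funext y
      exact (hφc.hasFDerivAt_convolution_left L hφd1 hgl y).fderiv
    rw [hfd]
    exact norm_fderiv_le_of_lipschitz ℝ hK (x₀ := x)
  · have := φ.dist_normed_convolution_le (μ := volume) (g := g) (x₀ := x) (ε := ε)
      hg.continuous.aestronglyMeasurable (fun y hy => ?_)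
    · rwa [Real.dist_eq] at this
    · have h1 := hg.dist_le_mul y x
      have h2 : dist y x < ε := hy
      simp only [NNReal.coe_one, one_mul] at h1
      linarith
end Moll

section Joint
variable {n : ℕ} {κ : Type} [Fintype κ]

lemma stein_lip {Ω : Type*} [MeasurableSpace Ω] {μ : Measure Ω} [IsProbabilityMeasure μ]
    {V : JI n κ → Ω → ℝ} {δ : κ → κ → ℝ} {r : ℝ} {g : ME n → ℝ} (hg : LipschitzWith 1 g)
    (h : JG μ V δ r) (hδ : ∀ k, δ k k = 1)
    (hs : ∀ k l, δ k l = δ l k) (hr : 0 < r) (c : ℝ) :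
    |∫ ω, g (Qm c fun i => V i ω) ∂μ - ∫ ω, g (Zm fun i => V i ω) ∂μ| ≤
      Real.pi / 2 * (r⁻¹ * Real.sqrt (r * (n + 1) *
      (c ^ 4 * ((n : ℝ) ^ 2 + n) * tau4 δ + n * (c ^ 2 * tau2 δ - r) ^ 2))) := by
  refine le_of_forall_pos_le_add fun ε hε => ?_
  obtain ⟨G, M, hG, hGg⟩ := exists_moll g hg (ε / 2) (by positivity)
  have h1 := stein_final hG h hδ hs hr c
  have hInteg : ∀ (f : ME n → ℝ), LipschitzWith 1 f → ∀ X : Ω → ME n,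
      (∀ p, AllLp μ (fun ω => X ω p)) → Integrable (fun ω => f (X ω)) μ := by
    intro f hf X hX
    have hXL := memLp_of_coord hX 1 (by simp)
    refine Integrable.mono' (((allLp_norm_of_coord (μ := μ) hX).add (AllLp.const |f 0|)).integrable)
      (hf.continuous.comp_aestronglyMeasurable hXL.1) (ae_of_all _ fun ω => ?_)
    have h1 := hf.dist_le_mul (X ω) 0
    rw [Real.dist_eq, dist_zero_right] at h1
    have h2 := abs_sub_abs_le_abs_sub (f (X ω)) (f 0)
    rw [Real.norm_eq_abs]
    simp only [NNReal.coe_one, one_mul] at h1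
    linarith
  have hcl : ∀ X : Ω → ME n, (∀ p, AllLp μ (fun ω => X ω p)) →
      |∫ ω, G (X ω) ∂μ - ∫ ω, g (X ω) ∂μ| ≤ ε / 2 := by
    intro X hX
    rw [← integral_sub (hInteg G hG.lip X hX) (hInteg g hg X hX), ← Real.norm_eq_abs]
    refine (norm_integral_le_of_norm_le (integrable_const (ε / 2))
      (ae_of_all _ fun ω => hGg _)).trans ?_
    simp
  have h2 := hcl _ (h.allLp_Q c)
  have h3 := hcl _ h.allLp_Z
  rw [abs_le] at *
  constructor <;> linarith [h1.1, h1.2, h2.1, h2.2, h3.1, h3.2]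

lemma joint_JG {Ω₁ Ω₂ : Type*} [MeasurableSpace Ω₁] [MeasurableSpace Ω₂] {P₁ : Measure Ω₁}
    {P₂ : Measure Ω₂} [IsProbabilityMeasure P₁] [IsProbabilityMeasure P₂] {δ : κ → κ → ℝ} {r : ℝ}
    (X : Fin n × κ → Ω₁ → ℝ) (Z : Fin n × Fin n → Ω₂ → ℝ) (hXm : ∀ p, Measurable (X p))
    (hZm : ∀ p, Measurable (Z p)) (hX : HasGaussianLaw (fun ω p => X p ω) P₁)
    (hZ : HasGaussianLaw (fun ω p => Z p ω) P₂) (hX0 : ∀ p, ∫ ω, X p ω ∂P₁ = 0)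
    (hZ0 : ∀ p, ∫ ω, Z p ω ∂P₂ = 0)
    (hXc : ∀ p q, ∫ ω, X p ω * X q ω ∂P₁ = jcov δ r (.inl p : JI n κ) (.inl q))
    (hZc : ∀ p q, ∫ ω, Z p ω * Z q ω ∂P₂ = jcov δ r (.inr p : JI n κ) (.inr q)) :
    JG (P₁.prod P₂) (Sum.elim (fun p ω => X p ω.1) (fun p ω => Z p ω.2) : JI n κ → Ω₁ × Ω₂ → ℝ) δ r := by
  have hXM : Measurable (fun ω p => X p ω) := measurable_pi_lambda _ hXm
  have hZM : Measurable (fun ω p => Z p ω) := measurable_pi_lambda _ hZm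
  constructor
  · rintro (p | p)
    · exact (hXm p).comp measurable_fst
    · exact (hZm p).comp measurable_snd
  · have h1 : HasGaussianLaw (fun ω : Ω₁ × Ω₂ => fun p => X p ω.1) (P₁.prod P₂) := by
      constructor
      have : (P₁.prod P₂).map (fun ω : Ω₁ × Ω₂ => fun p => X p ω.1) = P₁.map (fun ω p => X p ω) := by
        have e := Measure.map_map (μ := P₁.prod P₂) hXM measurable_fst
        rw [Measure.map_fst_prod] at e
        simp only [measure_univ, one_smul] at e
        exact e.symm
      rw [this]; exact hX.isGaussian_map
    have h2 : HasGaussianLaw (fun ω : Ω₁ × Ω₂ => fun p => Z p ω.2) (P₁.prod P₂) := by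
      constructor
      have : (P₁.prod P₂).map (fun ω : Ω₁ × Ω₂ => fun p => Z p ω.2) = P₂.map (fun ω p => Z p ω) := by
        have e := Measure.map_map (μ := P₁.prod P₂) hZM measurable_snd
        rw [Measure.map_snd_prod] at e
        simp only [measure_univ, one_smul] at e
        exact e.symm
      rw [this]; exact hZ.isGaussian_map
    have h3 := IndepFun.hasGaussianLaw h1 h2 (indepFun_prod hXM hZM)
    let L : ((Fin n × κ → ℝ) × (Fin n × Fin n → ℝ)) →L[ℝ] (JI n κ → ℝ) :=
      ContinuousLinearMap.pi (Sum.elim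
        (fun p => (ContinuousLinearMap.proj p).comp (ContinuousLinearMap.fst ℝ _ _))
        (fun p => (ContinuousLinearMap.proj p).comp (ContinuousLinearMap.snd ℝ _ _)))
    have h4 := h3.map_fun L
    have e : (fun ω (i : JI n κ) => (Sum.elim (fun p ω => X p ω.1) (fun p ω => Z p ω.2) :
        JI n κ → Ω₁ × Ω₂ → ℝ) i ω) =
        fun ω : Ω₁ × Ω₂ => L ((fun p => X p ω.1), (fun p => Z p ω.2)) := by
      funext ω i
      rcases i with p | p <;> simp [L]
    rw [e]
    exact h4
  · rintro (p | p)
    · simp only [Sum.elim_inl]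
      rw [integral_fun_fst (f := fun ω => X p ω), hX0]; simp
    · simp only [Sum.elim_inr]
      rw [integral_fun_snd (f := fun ω => Z p ω), hZ0]; simp
  · rintro (p | p) (q | q)
    · simp only [Sum.elim_inl]
      rw [integral_fun_fst (f := fun ω => X p ω * X q ω), hXc]; simp
    · simp only [Sum.elim_inl, Sum.elim_inr]
      rw [integral_prod_mul (fun ω => X p ω) (fun ω => Z q ω), hX0]; simp [jcov]
    · simp only [Sum.elim_inl, Sum.elim_inr, mul_comm (Z p _)]
      rw [integral_prod_mul (fun ω => X q ω) (fun ω => Z p ω), hX0]; simp [jcov]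
    · simp only [Sum.elim_inr]
      rw [integral_fun_snd (f := fun ω => Z p ω * Z q ω), hZc]; simp

lemma law_of_comb {Ω ι : Type*} [MeasurableSpace Ω] [Fintype ι] {P : Measure Ω} (X : ι → Ω → ℝ)
    (hXm : ∀ p, Measurable (X p))
    (h : ∀ c : ι → ℝ, ∃ v : NNReal, P.map (fun ω => ∑ p, c p * X p ω) = gaussianReal 0 v) :
    HasGaussianLaw (fun ω p => X p ω) P ∧ ∀ p, ∫ ω, X p ω ∂P = 0 := by
  classical
  have hXM : Measurable (fun ω p => X p ω) := measurable_pi_lambda _ hXm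
  constructor
  · constructor
    refine isGaussian_of_map_eq_gaussianReal fun L => ?_
    obtain ⟨v, hv⟩ := h (fun p => L (Pi.single p 1))
    refine ⟨0, v, ?_⟩
    rw [Measure.map_map L.continuous.measurable hXM, ← hv]
    congr 1
    funext ω
    simp only [Function.comp]
    conv_lhs => rw [pi_eq_sum_univ (fun p => X p ω), map_sum]
    refine Finset.sum_congr rfl fun p _ => ?_
    rw [map_smul, smul_eq_mul, mul_comm]
    congr 2
    funext j
    simp [Pi.single_apply, eq_comm]
  · intro p
    obtain ⟨v, hv⟩ := h (Pi.single p 1)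
    have : (fun ω => ∑ q, (Pi.single p 1 : ι → ℝ) q * X q ω) = X p := by
      funext ω
      simp [Pi.single_apply]
    rw [this] at hv
    have h2 := integral_map (μ := P) (hXm p).aemeasurable (f := fun x : ℝ => x)
      measurable_id.aestronglyMeasurable
    rw [← h2, hv]
    exact integral_id_gaussianReal

lemma goe_props {Ω : Type*} [MeasurableSpace Ω] {P : Measure Ω} [IsProbabilityMeasure P] {r : ℝ}
    (hr : 0 < r) (Z : Ω → Matrix (Fin n) (Fin n) ℝ)
    (hm : ∀ i j : Fin n, Measurable fun ω => Z ω i j)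
    (hsym : ∀ (ω : Ω) (i j : Fin n), Z ω i j = Z ω j i)
    (hd : ∀ i : Fin n, P.map (fun ω => Z ω i i) = gaussianReal 0 (Real.toNNReal (2 * r)))
    (ho : ∀ i j : Fin n, i ≠ j → P.map (fun ω => Z ω i j) = gaussianReal 0 (Real.toNNReal r))
    (hi : iIndepFun (m := fun _ => (inferInstance : MeasurableSpace ℝ))
          (fun (p : {p : Fin n × Fin n // p.1 ≤ p.2}) ω => Z ω p.1.1 p.1.2) P) (δ : κ → κ → ℝ) :
    HasGaussianLaw (fun ω (p : Fin n × Fin n) => Z ω p.1 p.2) P ∧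
    (∀ p : Fin n × Fin n, ∫ ω, Z ω p.1 p.2 ∂P = 0) ∧
    ∀ p q : Fin n × Fin n, ∫ ω, Z ω p.1 p.2 * Z ω q.1 q.2 ∂P =
      jcov δ r (.inr p : JI n κ) (.inr q) := by
  have hg : ∀ i j, ∃ v, P.map (fun ω => Z ω i j) = gaussianReal 0 v := by
    intro i j
    by_cases h : i = j
    · subst h; exact ⟨_, hd i⟩
    · exact ⟨_, ho i j h⟩
  have hmean : ∀ i j, ∫ ω, Z ω i j ∂P = 0 := by
    intro i j
    obtain ⟨v, hv⟩ := hg i j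
    have h2 := integral_map (μ := P) (hm i j).aemeasurable (f := fun x : ℝ => x)
      measurable_id.aestronglyMeasurable
    rw [← h2, hv]
    exact integral_id_gaussianReal
  have hvar : ∀ i j (v : NNReal), P.map (fun ω => Z ω i j) = gaussianReal 0 v →
      ∫ ω, Z ω i j * Z ω i j ∂P = v := by
    intro i j v hv
    have h2 := integral_map (μ := P) (hm i j).aemeasurable (f := fun x : ℝ => x * x)
      (by fun_prop)
    rw [← h2, hv]
    have := variance_fun_id_gaussianReal (μ := 0) (v := v)
    rw [variance_eq_integral (by fun_prop)] at this
    simpa [sq] using this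
  have hlaw0 : HasGaussianLaw (fun ω (p : {p : Fin n × Fin n // p.1 ≤ p.2}) => Z ω p.1.1 p.1.2) P := by
    refine iIndepFun.hasGaussianLaw (fun p => ?_) hi
    constructor
    obtain ⟨v, hv⟩ := hg p.1.1 p.1.2
    rw [hv]; infer_instance
  let s : Fin n × Fin n → {p : Fin n × Fin n // p.1 ≤ p.2} := fun p =>
    if h : p.1 ≤ p.2 then ⟨p, h⟩ else ⟨(p.2, p.1), (not_le.1 h).le⟩
  have hs : ∀ ω p, Z ω p.1 p.2 = Z ω (s p).1.1 (s p).1.2 := by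
    intro ω p
    simp only [s]
    split_ifs with h
    · rfl
    · exact hsym _ _ _
  refine ⟨?_, fun p => hmean _ _, ?_⟩
  · let L : ({p : Fin n × Fin n // p.1 ≤ p.2} → ℝ) →L[ℝ] (Fin n × Fin n → ℝ) :=
      ContinuousLinearMap.pi fun p => ContinuousLinearMap.proj (s p)
    have e : (fun ω (p : Fin n × Fin n) => Z ω p.1 p.2) = fun ω =>
        L (fun p : {p : Fin n × Fin n // p.1 ≤ p.2} => Z ω p.1.1 p.1.2) := by
      funext ω p
      exact hs ω p
    rw [e]
    exact hlaw0.map_fun L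
  · intro p q
    by_cases h : s p = s q
    · have hpq : p = q ∨ (p.2, p.1) = q := by
        have key : ∀ p, (s p).1 = p ∨ (s p).1 = (p.2, p.1) := by
          intro p
          by_cases hp : p.1 ≤ p.2
          · left; simp only [s, dif_pos hp]
          · right; simp only [s, dif_neg hp]
        have h' := congrArg Subtype.val h
        have flip : ∀ p q : Fin n × Fin n, (p.2, p.1) = (q.2, q.1) → p = q := by
          rintro ⟨a, b⟩ ⟨a', b'⟩ hh
          simp only [Prod.mk.injEq] at hh ⊢
          exact ⟨hh.2, hh.1⟩
        rcases key p with h1 | h1 <;> rcases key q with h2 | h2 <;> rw [h1, h2] at h'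
        · exact Or.inl h'
        · right; rw [h']
        · exact Or.inr h'
        · exact Or.inl (flip _ _ h')
      have e : ∀ ω, Z ω p.1 p.2 * Z ω q.1 q.2 = Z ω p.1 p.2 * Z ω p.1 p.2 := by
        intro ω; rw [hs ω q, ← h, ← hs ω p]
      simp only [e, jcov]
      obtain ⟨a, b⟩ := p
      obtain ⟨a', b'⟩ := q
      by_cases hab : a = b
      · subst hab
        rw [hvar a a _ (hd a), Real.coe_toNNReal _ (by positivity)]
        have : (a, a) = (a', b') := by rcases hpq with h | h <;> exact h
        simp [this]; ring
      · rw [hvar a b _ (ho a b hab), Real.coe_toNNReal _ hr.le]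
        rcases hpq with h | h
        · simp only [Prod.mk.injEq] at h
          obtain ⟨rfl, rfl⟩ := h
          simp [Ne.symm hab]
        · simp only [Prod.mk.injEq] at h
          obtain ⟨rfl, rfl⟩ := h
          simp [hab]
    · have hne : ¬ (p = q) := by rintro rfl; exact h rfl
      have hne2 : ¬ ((p.2, p.1) = q) := by
        rintro rfl
        apply h
        simp only [s]
        obtain ⟨a, b⟩ := p
        rcases lt_trichotomy a b with hl | hl | hl
        · simp [hl.le, not_le.2 hl]
        · subst hl; rfl
        · simp [hl.le, not_le.2 hl]
      simp only [jcov, hne, hne2, if_false, add_zero, mul_zero]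
      have := (hi.indepFun h).integral_mul_eq_mul_integral (by exact (hm _ _).aestronglyMeasurable)
        (by exact (hm _ _).aestronglyMeasurable)
      simp only [hs _ p, hs _ q]
      simp only [Pi.mul_apply] at this
      rw [this, hmean]; simp

end Joint

/-- matrix of a Euclidean vector. -/
def toMx {n : ℕ} (v : ME n) : Matrix (Fin n) (Fin n) ℝ := Matrix.of fun i j => v (i, j)

lemma toMx_lip {n : ℕ} : LipschitzWith 1 (toMx : ME n → Matrix (Fin n) (Fin n) ℝ) := by
  refine LipschitzWith.of_dist_le_mul fun u v => ?_
  rw [dist_eq_norm, dist_eq_norm, Matrix.frobenius_norm_def, EuclideanSpace.norm_eq,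
    Real.sqrt_eq_rpow, Fintype.sum_prod_type]
  simp [toMx]

lemma wass_bound {n D : ℕ} {Ω₁ Ω₂ : Type*} [MeasurableSpace Ω₁] [MeasurableSpace Ω₂]
    {P₁ : Measure Ω₁} {P₂ : Measure Ω₂} [IsProbabilityMeasure P₁] [IsProbabilityMeasure P₂]
    (δ : ℕ → ℕ → ℝ) (hδ : ∀ k, δ k k = 1) (hδs : ∀ k l, δ k l = δ l k) {r : ℝ} (hr : 0 < r) (c : ℝ)
    (Y : Fin n → ℕ → Ω₁ → ℝ) (hYm : ∀ (i : Fin n) (k : ℕ), Measurable (Y i k))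
    (hYg : IsCenteredGaussianFamily P₁ (fun p : Fin n × ℕ => Y p.1 p.2))
    (hYc : ∀ (i j : Fin n) (k l : ℕ), k ∈ Finset.Icc 1 D → l ∈ Finset.Icc 1 D →
          ∫ ω, Y i k ω * Y j l ω ∂P₁ = if i = j then δ k l else 0)
    (Z : Ω₂ → Matrix (Fin n) (Fin n) ℝ)
    (hm : ∀ i j : Fin n, Measurable fun ω => Z ω i j)
    (hsym : ∀ (ω : Ω₂) (i j : Fin n), Z ω i j = Z ω j i)
    (hd : ∀ i : Fin n, P₂.map (fun ω => Z ω i i) = gaussianReal 0 (Real.toNNReal (2 * r)))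
    (ho : ∀ i j : Fin n, i ≠ j → P₂.map (fun ω => Z ω i j) = gaussianReal 0 (Real.toNNReal r))
    (hi : iIndepFun (m := fun _ => (inferInstance : MeasurableSpace ℝ))
          (fun (p : {p : Fin n × Fin n // p.1 ≤ p.2}) ω => Z ω p.1.1 p.1.2) P₂) :
    wassersteinDist P₁ P₂
          (fun ω => Matrix.of fun i j : Fin n =>
            c * ∑ k ∈ Finset.Icc 1 D, (Y i k ω * Y j k ω - if i = j then 1 else 0)) Z ≤
      Real.pi / 2 * (r⁻¹ * Real.sqrt (r * (n + 1) *
      (c ^ 4 * ((n : ℝ) ^ 2 + n) * (tau4 fun k l : Finset.Icc 1 D => δ k l) +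
        n * (c ^ 2 * (tau2 fun k l : Finset.Icc 1 D => δ k l) - r) ^ 2))) := by
  classical
  unfold wassersteinDist
  refine Real.sSup_le ?_ (by positivity)
  rintro t ⟨g, hg, rfl⟩
  let κ : Type := Finset.Icc 1 D
  let X : Fin n × κ → Ω₁ → ℝ := fun p => Y p.1 p.2
  have hXm : ∀ p, Measurable (X p) := fun p => hYm _ _
  obtain ⟨hX, hX0⟩ := law_of_comb (P := P₁) X hXm (by
    intro c
    obtain ⟨v, hv⟩ := hYg (Finset.univ.image fun p : Fin n × κ => (p.1, (p.2 : ℕ)))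
      (fun p => if h : p.2 ∈ Finset.Icc 1 D then c (p.1, ⟨p.2, h⟩) else 0)
    refine ⟨v, ?_⟩
    rw [← hv]
    congr 1
    funext ω
    rw [Finset.sum_image]
    · refine Finset.sum_congr rfl fun p _ => ?_
      have : (p.2 : ℕ) ∈ Finset.Icc 1 D := p.2.2
      rw [dif_pos this]
    · rintro ⟨a, b⟩ _ ⟨a', b'⟩ _ h
      simp only [Prod.mk.injEq] at h
      rw [h.1, Subtype.ext h.2])
  obtain ⟨hZ, hZ0, hZc⟩ := goe_props hr Z hm hsym hd ho hi (fun k l : κ => δ k.1 l.1)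
  have hJ := joint_JG (δ := fun k l : κ => δ k.1 l.1) (r := r) X (fun p ω => Z ω p.1 p.2) hXm
    (fun p => hm _ _) hX hZ hX0 hZ0
    (fun p q => hYc p.1 q.1 p.2 q.2 p.2.2 q.2.2) hZc
  have hG : LipschitzWith 1 (g ∘ (toMx : ME n → _)) := by simpa using hg.comp toMx_lip
  have := stein_lip hG hJ (fun k => hδ _) (fun k l => hδs _ _) hr c
  have e1 : ∫ ω, g (Matrix.of fun i j : Fin n =>
            c * ∑ k ∈ Finset.Icc 1 D, (Y i k ω * Y j k ω - if i = j then 1 else 0)) ∂P₁ =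
      ∫ ω, (g ∘ (toMx : ME n → _)) (Qm c fun i => (Sum.elim (fun p ω => X p ω.1)
        (fun p ω => Z ω.2 p.1 p.2) : JI n κ → Ω₁ × Ω₂ → ℝ) i ω) ∂(P₁.prod P₂) := by
    have := integral_fun_fst (μ := P₁) (ν := P₂) (f := fun ω => g (Matrix.of fun i j : Fin n =>
            c * ∑ k ∈ Finset.Icc 1 D, (Y i k ω * Y j k ω - if i = j then 1 else 0)))
    simp only [probReal_univ, one_smul] at this
    rw [← this]
    refine integral_congr_ae (ae_of_all _ fun ω => ?_)
    simp only [Function.comp]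
    congr 1
    ext i j
    simp only [toMx, Qm, Matrix.of_apply, Sum.elim_inl, X]
    rw [← Finset.sum_coe_sort]
  have e2 : ∫ ω, g (Z ω) ∂P₂ =
      ∫ ω, (g ∘ (toMx : ME n → _)) (Zm fun i => (Sum.elim (fun p ω => X p ω.1)
        (fun p ω => Z ω.2 p.1 p.2) : JI n κ → Ω₁ × Ω₂ → ℝ) i ω) ∂(P₁.prod P₂) := by
    have := integral_fun_snd (μ := P₁) (ν := P₂) (f := fun ω => g (Z ω))
    simp only [probReal_univ, one_smul] at this
    rw [← this]
    rfl
  rw [e1, e2]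
  exact this

/-- Cauchy–Schwarz: correlations are at most one. -/
lemma cov_le_one {n D : ℕ} (hn : 1 ≤ n) {Ω₁ : Type*} [MeasurableSpace Ω₁]
    {P₁ : Measure Ω₁} [IsProbabilityMeasure P₁]
    (δ : ℕ → ℕ → ℝ) (hδ : ∀ k, δ k k = 1)
    (Y : Fin n → ℕ → Ω₁ → ℝ) (hYm : ∀ (i : Fin n) (k : ℕ), Measurable (Y i k))
    (hYc : ∀ (i j : Fin n) (k l : ℕ), k ∈ Finset.Icc 1 D → l ∈ Finset.Icc 1 D →
          ∫ ω, Y i k ω * Y j l ω ∂P₁ = if i = j then δ k l else 0) :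
    ∀ k ∈ Finset.Icc 1 D, ∀ l ∈ Finset.Icc 1 D, |δ k l| ≤ 1 := by
  intro k hk l hl
  let i : Fin n := ⟨0, hn⟩
  have h1 := hYc i i k k hk hk
  have h2 := hYc i i l l hl hl
  have h3 := hYc i i k l hk hl
  simp only [if_true, hδ] at h1 h2 h3
  have i1 : Integrable (fun ω => Y i k ω * Y i k ω) P₁ := by
    by_contra h; rw [integral_undef h] at h1; norm_num at h1
  have i2 : Integrable (fun ω => Y i l ω * Y i l ω) P₁ := by
    by_contra h; rw [integral_undef h] at h2; norm_num at h2
  rw [← h3]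
  have : ‖∫ ω, Y i k ω * Y i l ω ∂P₁‖ ≤
      ∫ ω, (1/2 * (Y i k ω * Y i k ω) + 1/2 * (Y i l ω * Y i l ω)) ∂P₁ := by
    refine norm_integral_le_of_norm_le ((i1.const_mul _).add (i2.const_mul _))
      (ae_of_all _ fun ω => ?_)
    rw [Real.norm_eq_abs, abs_le]
    constructor <;> nlinarith [sq_nonneg (Y i k ω + Y i l ω), sq_nonneg (Y i k ω - Y i l ω)]
  rw [integral_add (i1.const_mul _) (i2.const_mul _), integral_const_mul, integral_const_mul,
    h1, h2] at this
  rw [Real.norm_eq_abs] at this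
  linarith

/-- the working form of the hypotheses for `α = 3/2`. -/
structure H32 (β lam : ℝ) (φ ψ : ℝ → ℝ) (C₀ C₁ : ℝ) : Prop where
  hβ0 : 3 / 4 ≤ β
  hβ1 : β < 1
  hlam : 0 < lam
  hφ : ∀ y : ℝ, 1 ≤ y → φ y = -lam * (y - 1) ^ (3 / 2 : ℝ) + ψ y
  hd1 : ∀ y : ℝ, 1 ≤ y → DifferentiableAt ℝ ψ y
  hd2 : ∀ y : ℝ, 1 ≤ y → DifferentiableAt ℝ (deriv ψ) y
  hC₀ : 0 ≤ C₀
  hC₁ : 0 < C₁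
  hψ1 : ∀ y : ℝ, 1 < y → |deriv ψ y| ≤ C₀ * √y
  hψ2 : ∀ y : ℝ, 1 < y → |deriv (deriv ψ) y| ≤ C₀ * y⁻¹ * √(y - 1)
  h1 : deriv ψ 1 = β * ψ 1
  hφ1 : ∀ y : ℝ, 2 ≤ y → |deriv φ y| ≤ C₁ / √(y - 1)
  hφ2 : ∀ y : ℝ, 2 ≤ y → |deriv (deriv φ) y| ≤ C₁ / ((y - 1) * √(y - 1))

lemma H32.of_hyp {β lam α ν : ℝ} {φ ψ : ℝ → ℝ} (hyp : SelfSimilarHyp β lam α ν φ ψ)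
    (hα : α = 3 / 2) : ∃ C₀ C₁, H32 β lam φ ψ C₀ C₁ := by
  subst hα
  obtain ⟨hβ, hl, ha, hν, hφ, ⟨S, hS, hSI, hSd⟩, ⟨C₀, hC₀, hp1, hp2⟩, hc, ⟨C₁, hC₁, hf⟩⟩ := hyp
  have e1 : (3 / 2 : ℝ) - 1 = 1 / 2 := by norm_num
  refine ⟨C₀, C₁, ⟨by linarith [ha.2], hβ.2, hl, hφ, fun y hy => (hSd y (hSI hy)).1,
    fun y hy => (hSd y (hSI hy)).2, hC₀, hC₁, ?_, ?_, hc (by norm_num), ?_, ?_⟩⟩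
  · intro y hy
    rw [Real.sqrt_eq_rpow, ← e1]; exact hp1 y hy
  · intro y hy
    rw [Real.sqrt_eq_rpow, ← e1]; exact hp2 y hy
  · intro y hy
    have := ((hf y hy).2 (by norm_num)).1
    rw [show (3 / 2 : ℝ) - 2 = -(1 / 2) by norm_num, Real.rpow_neg (by linarith),
      ← Real.sqrt_eq_rpow] at this
    exact this
  · intro y hy
    have := ((hf y hy).2 (by norm_num)).2
    rw [show (3 / 2 : ℝ) - 3 = -(1 + 1 / 2) by norm_num, Real.rpow_neg (by linarith),
      Real.rpow_add (by linarith), Real.rpow_one, ← Real.sqrt_eq_rpow] at this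
    exact this

namespace H32
variable {β lam : ℝ} {φ ψ : ℝ → ℝ} {C₀ C₁ : ℝ}

lemma hasDeriv (h : H32 β lam φ ψ C₀ C₁) {y : ℝ} (hy : 1 < y) :
    HasDerivAt φ (-lam * (3 / 2 * √(y - 1)) + deriv ψ y) y := by
  have h1 : HasDerivAt (fun y : ℝ => -lam * (y - 1) ^ (3 / 2 : ℝ) + ψ y)
      (-lam * (3 / 2 * √(y - 1)) + deriv ψ y) y := by
    refine HasDerivAt.add (HasDerivAt.const_mul _ ?_) (h.hd1 y hy.le).hasDerivAt
    have := ((hasDerivAt_id y).sub_const 1).rpow_const (p := 3 / 2) (Or.inr (by norm_num))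
    refine HasDerivAt.congr_deriv this ?_
    rw [Real.sqrt_eq_rpow]; norm_num
  refine h1.congr_of_eventuallyEq ?_
  filter_upwards [lt_mem_nhds hy] with z hz using h.hφ z hz.le

lemma hasDeriv2 (h : H32 β lam φ ψ C₀ C₁) {y : ℝ} (hy : 1 < y) :
    HasDerivAt (deriv φ) (-lam * (3 / 4 / √(y - 1)) + deriv (deriv ψ) y) y := by
  have h1 : HasDerivAt (fun y : ℝ => -lam * (3 / 2 * √(y - 1)) + deriv ψ y)
      (-lam * (3 / 4 / √(y - 1)) + deriv (deriv ψ) y) y := by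
    refine HasDerivAt.add (HasDerivAt.const_mul _ ?_) (h.hd2 y hy.le).hasDerivAt
    have := ((((hasDerivAt_id y).sub_const 1).sqrt (sub_pos.2 hy).ne')).const_mul (3 / 2 : ℝ)
    refine HasDerivAt.congr_deriv this ?_
    simp only [id_eq]
    ring
  refine h1.congr_of_eventuallyEq ?_
  filter_upwards [lt_mem_nhds hy] with z hz using (h.hasDeriv hz).deriv

lemma kernel (h : H32 β lam φ ψ C₀ C₁) : ∃ C, 0 < C ∧ ∀ y : ℝ, 1 < y →
    |(2 * β - 1) * deriv φ y - y * deriv (deriv φ) y - 3 / 4 * lam / √(y - 1)| ≤ C / √y := by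
  have hl := h.hlam
  have h0 := h.hC₀
  have hc1 := h.hC₁
  refine ⟨9 * lam + 9 * C₀ + 9 * C₁, by positivity, fun y hy => ?_⟩
  have hy0 : 0 < √(y - 1) := Real.sqrt_pos.2 (by linarith)
  have hyy : 0 < √y := Real.sqrt_pos.2 (by linarith)
  have hb : |2 * β - 1| ≤ 1 := by
    rw [abs_le]; constructor <;> linarith [h.hβ0, h.hβ1]
  have hs : √(y - 1) * √(y - 1) = y - 1 := Real.mul_self_sqrt (by linarith)
  have hsy : √y * √y = y := Real.mul_self_sqrt (by linarith)
  rcases le_total y 2 with h2 | h2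
  · have e1 : |deriv φ y| ≤ 3 / 2 * lam + 2 * C₀ := by
      rw [(h.hasDeriv hy).deriv]
      have a1 : √(y - 1) ≤ 1 := Real.sqrt_le_one.2 (by linarith)
      have a2 : √y ≤ 2 := by rw [Real.sqrt_le_left (by norm_num)]; linarith
      refine (abs_add_le _ _).trans (add_le_add ?_ ((h.hψ1 y hy).trans (by nlinarith)))
      rw [abs_mul, abs_neg, abs_of_pos hl, abs_of_nonneg (by positivity)]
      nlinarith
    have e2 : y * deriv (deriv φ) y + 3 / 4 * lam / √(y - 1) =
        - (3 / 4 * lam * √(y - 1)) + y * deriv (deriv ψ) y := by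
      rw [(h.hasDeriv2 hy).deriv]
      field_simp
      nlinarith
    have e3 : |y * deriv (deriv ψ) y| ≤ C₀ := by
      rw [abs_mul, abs_of_pos (by linarith)]
      have a1 : √(y - 1) ≤ 1 := Real.sqrt_le_one.2 (by linarith)
      calc y * |deriv (deriv ψ) y| ≤ y * (C₀ * y⁻¹ * √(y - 1)) :=
            mul_le_mul_of_nonneg_left (h.hψ2 y hy) (by linarith)
        _ = C₀ * √(y - 1) := by field_simp
        _ ≤ C₀ := by nlinarith
    have e4 : |3 / 4 * lam * √(y - 1)| ≤ lam := by
      have a1 : √(y - 1) ≤ 1 := Real.sqrt_le_one.2 (by linarith)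
      rw [abs_of_nonneg (by positivity)]; nlinarith
    have a2 : √y ≤ 2 := by rw [Real.sqrt_le_left (by norm_num)]; linarith
    have e5 : |(2 * β - 1) * deriv φ y| ≤ 3 / 2 * lam + 2 * C₀ := by
      rw [abs_mul]
      nlinarith [abs_nonneg (deriv φ y), abs_nonneg (2 * β - 1)]
    have e6 : (2 * β - 1) * deriv φ y - y * deriv (deriv φ) y - 3 / 4 * lam / √(y - 1) =
      (2 * β - 1) * deriv φ y + 3 / 4 * lam * √(y - 1) - y * deriv (deriv ψ) y := by linarith
    rw [e6]
    have : (9 * lam + 9 * C₀ + 9 * C₁) / 2 ≤ (9 * lam + 9 * C₀ + 9 * C₁) / √y := by gcongr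
    refine le_trans ?_ this
    rw [abs_le] at *
    constructor <;> linarith [e3.1, e3.2, e4.1, e4.2, e5.1, e5.2]
  · have hy1 : (√(y - 1))⁻¹ ≤ 2 * (√y)⁻¹ := by
      rw [← div_eq_mul_inv, inv_eq_one_div, div_le_div_iff₀ hy0 hyy]
      have : √y ≤ √(2 ^ 2 * (y - 1)) := Real.sqrt_le_sqrt (by linarith)
      rw [Real.sqrt_mul (by norm_num), Real.sqrt_sq (by norm_num)] at this
      linarith
    have e5 : |(2 * β - 1) * deriv φ y| ≤ C₁ * (√(y - 1))⁻¹ := by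
      have := h.hφ1 y h2
      rw [div_eq_mul_inv] at this
      rw [abs_mul]
      nlinarith [abs_nonneg (deriv φ y), abs_nonneg (2 * β - 1)]
    have e3 : |y * deriv (deriv φ) y| ≤ 2 * C₁ * (√(y - 1))⁻¹ := by
      rw [abs_mul, abs_of_pos (by linarith)]
      calc y * |deriv (deriv φ) y| ≤ (2 * (y - 1)) * (C₁ / ((y - 1) * √(y - 1))) :=
            mul_le_mul (by linarith) (h.hφ2 y h2) (abs_nonneg _) (by linarith)
        _ = 2 * C₁ * (√(y - 1))⁻¹ := by
          have : y - 1 ≠ 0 := by linarith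
          field_simp
    have e4 : |3 / 4 * lam / √(y - 1)| ≤ lam * (√(y - 1))⁻¹ := by
      rw [abs_of_nonneg (by positivity), div_eq_mul_inv]
      have : 0 < (√(y - 1))⁻¹ := by positivity
      nlinarith
    have : (3 * C₁ + lam) * (√(y - 1))⁻¹ ≤ (9 * lam + 9 * C₀ + 9 * C₁) / √y := by
      rw [div_eq_mul_inv]
      have : 0 < (√y)⁻¹ := by positivity
      nlinarith
    refine le_trans ?_ this
    rw [abs_le] at *
    constructor <;> linarith [e3.1, e3.2, e4.1, e4.2, e5.1, e5.2]

end H32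

lemma covR_of_le {β : ℝ} {φ : ℝ → ℝ} {s t : ℝ} (hs : 0 < s) (hst : s ≤ t) :
    covR β φ s t = s ^ (2 * β) * φ (t / s) := by
  unfold covR
  rw [if_neg (by push Not; constructor <;> linarith), min_eq_left hst, max_eq_right hst]

lemma covR_symm {β : ℝ} {φ : ℝ → ℝ} (s t : ℝ) : covR β φ s t = covR β φ t s := by
  unfold covR
  simp only [min_comm s t, max_comm s t, or_comm (a := s = 0)]

lemma covΔ_symm {β : ℝ} {φ : ℝ → ℝ} (k l : ℕ) : covΔ β φ k l = covΔ β φ l k := by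
  unfold covΔ
  rw [covR_symm ((k : ℝ) + 1) (l + 1), covR_symm (k : ℝ) (l + 1), covR_symm ((k : ℝ) + 1) l,
    covR_symm (k : ℝ) l]
  ring

lemma covδ_symm {β : ℝ} {φ : ℝ → ℝ} (k l : ℕ) : covδ β φ k l = covδ β φ l k := by
  unfold covδ
  rw [covΔ_symm k l, mul_comm]

namespace H32
variable {β lam : ℝ} {φ ψ : ℝ → ℝ} {C₀ C₁ : ℝ}

lemma offdiag_mvt (h : H32 β lam φ ψ C₀ C₁) (k l : ℕ) (hk : 1 ≤ k) (hl : k + 2 ≤ l) :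
    ∃ s t : ℝ, (k : ℝ) < s ∧ s < k + 1 ∧ (l : ℝ) < t ∧ t < l + 1 ∧
    covΔ β φ k l = s ^ (2 * β - 2) *
      ((2 * β - 1) * deriv φ (t / s) - (t / s) * deriv (deriv φ) (t / s)) := by
  have hk0 : (1 : ℝ) ≤ k := by exact_mod_cast hk
  have hkl : (k : ℝ) + 2 ≤ l := by exact_mod_cast hl
  -- derivative in the first variable
  have hD : ∀ s t : ℝ, 0 < s → s < t → HasDerivAt (fun s => s ^ (2 * β) * φ (t / s))
      (2 * β * s ^ (2 * β - 1) * φ (t / s) - s ^ (2 * β - 2) * t * deriv φ (t / s)) s := by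
    intro s t hs hst
    have hy : 1 < t / s := by rwa [one_lt_div hs]
    have e1 := Real.hasDerivAt_rpow_const (x := s) (p := 2 * β) (Or.inl hs.ne')
    have e2 : HasDerivAt (fun s => t / s) (-t / s ^ 2) s := by
      have := (hasDerivAt_const s t).div (hasDerivAt_id s) hs.ne'
      refine HasDerivAt.congr_deriv this ?_
      simp
    have e3 := (h.hasDeriv hy).differentiableAt.hasDerivAt.comp s e2
    refine HasDerivAt.congr_deriv (e1.mul e3) ?_
    have : s ^ (2 * β) = s ^ (2 * β - 2) * s ^ 2 := by
      rw [← Real.rpow_natCast, ← Real.rpow_add hs]; norm_num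
    rw [this]
    field_simp
    ring
  have hD2 : ∀ s t : ℝ, 0 < s → s < t → HasDerivAt (fun t =>
      2 * β * s ^ (2 * β - 1) * φ (t / s) - s ^ (2 * β - 2) * t * deriv φ (t / s))
      (s ^ (2 * β - 2) * ((2 * β - 1) * deriv φ (t / s) - (t / s) * deriv (deriv φ) (t / s))) t := by
    intro s t hs hst
    have hy : 1 < t / s := by rwa [one_lt_div hs]
    have e2 : HasDerivAt (fun t => t / s) (1 / s) t := (hasDerivAt_id t).div_const s
    have e3 := ((h.hasDeriv hy).differentiableAt.hasDerivAt.comp t e2).const_mul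
      (2 * β * s ^ (2 * β - 1))
    have e4 := (h.hasDeriv2 hy).differentiableAt.hasDerivAt.comp t e2
    have e5 := ((hasDerivAt_id t).const_mul (s ^ (2 * β - 2))).mul e4
    refine HasDerivAt.congr_deriv (e3.sub e5) ?_
    have : s ^ (2 * β - 1) = s ^ (2 * β - 2) * s := by
      nth_rw 3 [← Real.rpow_one s]
      rw [← Real.rpow_add hs]; congr 1; ring
    simp only [Function.comp, id_eq]
    rw [this]
    field_simp
    ring
  obtain ⟨s, hs, hs'⟩ := exists_hasDerivAt_eq_slope
    (fun s : ℝ => s ^ (2 * β) * φ ((l + 1) / s) - s ^ (2 * β) * φ (l / s))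
    (fun s : ℝ => (2 * β * s ^ (2 * β - 1) * φ ((l + 1) / s) -
        s ^ (2 * β - 2) * (l + 1) * deriv φ ((l + 1) / s)) -
      (2 * β * s ^ (2 * β - 1) * φ (l / s) - s ^ (2 * β - 2) * l * deriv φ (l / s)))
    (a := k) (b := k + 1) (by linarith)
    (fun s hs => ((hD s (l + 1) (by linarith [hs.1]) (by linarith [hs.2])).sub
      (hD s l (by linarith [hs.1]) (by linarith [hs.2]))).continuousAt.continuousWithinAt)
    (fun s hs => ((hD s (l + 1) (by linarith [hs.1]) (by linarith [hs.2])).sub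
      (hD s l (by linarith [hs.1]) (by linarith [hs.2]))))
  have hs0 : 0 < s := by linarith [hs.1]
  obtain ⟨t, ht, ht'⟩ := exists_hasDerivAt_eq_slope
    (fun t => 2 * β * s ^ (2 * β - 1) * φ (t / s) - s ^ (2 * β - 2) * t * deriv φ (t / s))
    (fun t => s ^ (2 * β - 2) * ((2 * β - 1) * deriv φ (t / s) - (t / s) * deriv (deriv φ) (t / s)))
    (a := l) (b := l + 1) (by linarith)
    (fun t ht => (hD2 s t hs0 (by linarith [ht.1, hs.2])).continuousAt.continuousWithinAt)
    (fun t ht => (hD2 s t hs0 (by linarith [ht.1, hs.2])))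
  refine ⟨s, t, hs.1, hs.2, ht.1, ht.2, ?_⟩
  rw [ht']
  simp only [add_sub_cancel_left, div_one] at hs' ⊢
  rw [hs']
  unfold covΔ
  rw [covR_of_le (by linarith) (by linarith), covR_of_le (by linarith) (by linarith),
    covR_of_le (by linarith) (by linarith), covR_of_le (by linarith) (by linarith)]
  ring

lemma offdiag (h : H32 β lam φ ψ C₀ C₁) : ∃ C, 0 < C ∧ ∀ k l : ℕ, 1 ≤ k → k + 2 ≤ l →
    ∃ s t : ℝ, (k : ℝ) < s ∧ s < k + 1 ∧ (l : ℝ) < t ∧ t < l + 1 ∧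
    |covΔ β φ k l - 3 / 4 * lam * s ^ (2 * β - 3 / 2) / √(t - s)| ≤
      C * s ^ (2 * β - 3 / 2) / √t := by
  obtain ⟨C, hC, hK⟩ := h.kernel
  refine ⟨C, hC, fun k l hk hl => ?_⟩
  obtain ⟨s, t, h1, h2, h3, h4, e⟩ := h.offdiag_mvt k l hk hl
  have hk0 : (1 : ℝ) ≤ k := by exact_mod_cast hk
  have hkl : (k : ℝ) + 2 ≤ l := by exact_mod_cast hl
  refine ⟨s, t, h1, h2, h3, h4, ?_⟩
  have hs : 0 < s := by linarith
  have ht : 0 < t := by linarith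
  have hst : 0 < t - s := by linarith
  have hy : 1 < t / s := by rw [one_lt_div hs]; linarith
  have e0 : s ^ (2 * β - 3 / 2) = s ^ (2 * β - 2) * √s := by
    rw [Real.sqrt_eq_rpow, ← Real.rpow_add hs]; congr 1; ring
  have q1 : √(t / s - 1) = √(t - s) / √s := by
    rw [← Real.sqrt_div hst.le]; congr 1; field_simp
  have q2 : √(t / s) = √t / √s := Real.sqrt_div ht.le s
  have hss : 0 < √s := Real.sqrt_pos.2 hs
  have := hK _ hy
  rw [q1, q2] at this
  have e3 : covΔ β φ k l - 3 / 4 * lam * s ^ (2 * β - 3 / 2) / √(t - s) = s ^ (2 * β - 2) *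
    ((2 * β - 1) * deriv φ (t / s) - (t / s) * deriv (deriv φ) (t / s) -
      3 / 4 * lam / (√(t - s) / √s)) := by
    rw [e, e0, div_div_eq_mul_div]; ring
  rw [e3, abs_mul, abs_of_pos (by positivity)]
  refine (mul_le_mul_of_nonneg_left this (by positivity)).trans (le_of_eq ?_)
  rw [e0, div_div_eq_mul_div]; ring

lemma diag (h : H32 β lam φ ψ C₀ C₁) : ∃ C, 0 < C ∧ ∀ k : ℕ, 1 ≤ k →
    |covΔ β φ k k / (2 * lam * (k : ℝ) ^ (2 * β - 3 / 2)) - 1| ≤ C / √k := by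
  have hl := h.hlam
  have h0 := h.hC₀
  have hb0 := h.hβ0
  have hb1 := h.hβ1
  set F : ℝ → ℝ := fun y => ψ 1 * (y ^ (2 * β) + 1) - 2 * ψ y with hF
  set F1 : ℝ → ℝ := fun y => ψ 1 * (2 * β * y ^ (2 * β - 1)) - 2 * deriv ψ y with hF1
  set F2 : ℝ → ℝ := fun y => ψ 1 * (2 * β * ((2 * β - 1) * y ^ (2 * β - 1 - 1))) -
    2 * deriv (deriv ψ) y with hF2
  have d1 : ∀ y, 1 ≤ y → HasDerivAt F (F1 y) y := by
    intro y hy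
    have e1 := Real.hasDerivAt_rpow_const (x := y) (p := 2 * β) (Or.inl (by linarith))
    exact ((e1.add_const 1).const_mul (ψ 1)).sub ((h.hd1 y hy).hasDerivAt.const_mul 2)
  have d2 : ∀ y, 1 ≤ y → HasDerivAt F1 (F2 y) y := by
    intro y hy
    have e1 := Real.hasDerivAt_rpow_const (x := y) (p := 2 * β - 1) (Or.inl (by linarith))
    exact ((e1.const_mul (2 * β)).const_mul (ψ 1)).sub ((h.hd2 y hy).hasDerivAt.const_mul 2)
  set M := 2 * |ψ 1| + 2 * C₀ with hM
  have b2 : ∀ y, 1 < y → y ≤ 2 → |F2 y| ≤ M := by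
    intro y hy hy2
    have p0 : y ^ (2 * β - 1 - 1) ≤ 1 :=
      Real.rpow_le_one_of_one_le_of_nonpos hy.le (by linarith)
    have p1 : 0 ≤ y ^ (2 * β - 1 - 1) := by positivity
    have a1 : √(y - 1) ≤ 1 := Real.sqrt_le_one.2 (by linarith)
    have e3 : |deriv (deriv ψ) y| ≤ C₀ := by
      refine (h.hψ2 y hy).trans ?_
      have : y⁻¹ ≤ 1 := inv_le_one_of_one_le₀ hy.le
      calc C₀ * y⁻¹ * √(y - 1) ≤ C₀ * 1 * 1 := by gcongr
        _ = C₀ := by ring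
    have e4 : |ψ 1 * (2 * β * ((2 * β - 1) * y ^ (2 * β - 1 - 1)))| ≤ |ψ 1| * 2 := by
      rw [abs_mul]
      refine mul_le_mul_of_nonneg_left ?_ (abs_nonneg _)
      have : 0 ≤ 2 * β - 1 := by linarith
      rw [abs_of_nonneg (by positivity)]
      calc 2 * β * ((2 * β - 1) * y ^ (2 * β - 1 - 1)) ≤ 2 * (1 * 1) := by
            gcongr <;> linarith
        _ = 2 := by norm_num
    rw [hF2, hM]
    rw [abs_le] at *
    constructor <;> linarith [e3.1, e3.2, e4.1, e4.2]
  have z1 : F1 1 = 0 := by simp only [hF1, Real.one_rpow, h.h1]; ring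
  have z0 : F 1 = 0 := by simp only [hF, Real.one_rpow]; ring
  have bb1 : ∀ y, 1 < y → y ≤ 2 → |F1 y| ≤ M * (y - 1) := by
    intro y hy hy2
    obtain ⟨c, hc, hc'⟩ := exists_hasDerivAt_eq_slope F1 F2 hy
      (fun z hz => (d2 z hz.1).continuousAt.continuousWithinAt) (fun z hz => d2 z hz.1.le)
    rw [z1, sub_zero, eq_div_iff (by linarith)] at hc'
    rw [← hc', abs_mul, abs_of_pos (sub_pos.2 hy)]
    exact mul_le_mul_of_nonneg_right (b2 c hc.1 (by linarith [hc.2])) (by linarith)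
  have bb0 : ∀ y, 1 < y → y ≤ 2 → |F y| ≤ M * (y - 1) ^ 2 := by
    intro y hy hy2
    obtain ⟨c, hc, hc'⟩ := exists_hasDerivAt_eq_slope F F1 hy
      (fun z hz => (d1 z hz.1).continuousAt.continuousWithinAt) (fun z hz => d1 z hz.1.le)
    rw [z0, sub_zero, eq_div_iff (by linarith)] at hc'
    rw [← hc', abs_mul, abs_of_pos (sub_pos.2 hy), sq, ← mul_assoc]
    refine mul_le_mul_of_nonneg_right ((bb1 c hc.1 (by linarith [hc.2])).trans ?_) (by linarith)
    have : 0 ≤ M := by positivity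
    nlinarith [hc.2]
  refine ⟨M / (2 * lam) + 1, by positivity, fun k hk => ?_⟩
  have hk0 : (1 : ℝ) ≤ k := by exact_mod_cast hk
  have hkp : (0 : ℝ) < k := by linarith
  have hB := bb0 (1 + 1 / k) (by simp; positivity)
    (by have : 1 / (k : ℝ) ≤ 1 := by rw [div_le_one hkp]; exact hk0
        linarith)
  rw [add_sub_cancel_left] at hB
  have f1 : φ 1 = ψ 1 := by
    rw [h.hφ 1 le_rfl, sub_self, Real.zero_rpow (by norm_num)]; ring
  have hkk : (k : ℝ) ^ (2 * β) = (k : ℝ) ^ (2 * β - 3 / 2) * (k * √k) := by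
    have : (k : ℝ) * √k = (k : ℝ) ^ (3 / 2 : ℝ) := by
      rw [Real.sqrt_eq_rpow]
      nth_rw 1 [← Real.rpow_one (k : ℝ)]
      rw [← Real.rpow_add hkp]; norm_num
    rw [this, ← Real.rpow_add hkp]; congr 1; ring
  have hss : √(k : ℝ) * √k = k := Real.mul_self_sqrt hkp.le
  have hsk : 0 < √(k : ℝ) := Real.sqrt_pos.2 hkp
  have h32 : (1 / (k : ℝ)) ^ (3 / 2 : ℝ) = (k * √k)⁻¹ := by
    have : (k : ℝ) * √k = (k : ℝ) ^ (3 / 2 : ℝ) := by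
      rw [Real.sqrt_eq_rpow]
      nth_rw 1 [← Real.rpow_one (k : ℝ)]
      rw [← Real.rpow_add hkp]; norm_num
    rw [this, one_div, Real.inv_rpow hkp.le]
  have eΔ : covΔ β φ k k = (k : ℝ) ^ (2 * β) * F (1 + 1 / k) + 2 * lam * (k : ℝ) ^ (2 * β - 3 / 2) := by
    unfold covΔ
    rw [covR_of_le (by linarith) le_rfl, covR_of_le (by linarith) (by linarith),
      covR_symm ((k : ℝ) + 1), covR_of_le (by linarith) (by linarith),
      covR_of_le (by linarith) le_rfl, div_self (by linarith), div_self (by linarith), f1]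
    have g1 : ((k : ℝ) + 1) / k = 1 + 1 / k := by field_simp
    have g2 : ((k : ℝ) + 1) ^ (2 * β) = (k : ℝ) ^ (2 * β) * (1 + 1 / k) ^ (2 * β) := by
      rw [← Real.mul_rpow hkp.le (by positivity)]; congr 1; field_simp
    rw [g1, g2, h.hφ _ (by simp), add_sub_cancel_left, h32]
    simp only [hF]
    have : (k : ℝ) ^ (2 * β) * (k * √k)⁻¹ = (k : ℝ) ^ (2 * β - 3 / 2) := by
      rw [hkk]; field_simp
    rw [← this]
    ring
  have hpk : 0 < (k : ℝ) ^ (2 * β - 3 / 2) := by positivity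
  have e9 : covΔ β φ k k / (2 * lam * (k : ℝ) ^ (2 * β - 3 / 2)) - 1 =
      (k * √k) * F (1 + 1 / k) / (2 * lam) := by
    rw [eΔ, hkk]; field_simp; ring
  rw [e9, abs_div, abs_mul, abs_of_pos (by positivity : 0 < (k : ℝ) * √k),
    abs_of_pos (by positivity : 0 < 2 * lam)]
  calc (k * √k) * |F (1 + 1 / k)| / (2 * lam) ≤ (k * √k) * (M * (1 / k) ^ 2) / (2 * lam) := by gcongr
    _ = M / (2 * lam) / √k := by
      field_simp
      rw [sq, hss]
    _ ≤ _ := by gcongr; linarith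

lemma diag_lower (h : H32 β lam φ ψ C₀ C₁) (hpos : ∀ k : ℕ, 0 < covΔ β φ k k) :
    ∃ q, 0 < q ∧ ∀ k : ℕ, 1 ≤ k → q ≤ covΔ β φ k k / (2 * lam * (k : ℝ) ^ (2 * β - 3 / 2)) := by
  obtain ⟨C, hC, hd⟩ := h.diag
  have hl := h.hlam
  obtain ⟨N, hN⟩ := exists_nat_gt (4 * C ^ 2)
  obtain ⟨k0, hk0, hmin⟩ := Finset.exists_min_image (Finset.Icc 1 (N + 1))
    (fun k : ℕ => covΔ β φ k k / (2 * lam * (k : ℝ) ^ (2 * β - 3 / 2))) ⟨1, by simp⟩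
  have hk1 : (0 : ℝ) < k0 := by
    have := (Finset.mem_Icc.1 hk0).1
    exact_mod_cast this
  have hp := hpos k0
  refine ⟨min (1 / 2) (covΔ β φ k0 k0 / (2 * lam * (k0 : ℝ) ^ (2 * β - 3 / 2))),
    lt_min (by norm_num) (by positivity), fun k hk => ?_⟩
  rcases le_total k (N + 1) with h1 | h1
  · exact (min_le_right _ _).trans (hmin k (Finset.mem_Icc.2 ⟨hk, h1⟩))
  · refine (min_le_left _ _).trans ?_
    have h2 := hd k hk
    have h3 : C / √k ≤ 1 / 2 := by
      have hkN : (N : ℝ) ≤ k := by exact_mod_cast (by omega : N ≤ k)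
      have : 2 * C ≤ √(k : ℝ) := Real.le_sqrt_of_sq_le (by nlinarith)
      have hkp : 0 < √(k : ℝ) := by linarith
      rw [div_le_iff₀ hkp]; linarith
    rw [abs_le] at h2
    linarith [h2.1]

end H32

lemma key_ratio {p k l s : ℝ} (hp0 : 0 ≤ p) (hp1 : p ≤ 1) (hk : 1 ≤ k) (hs : k < s) (hs' : s < k + 1)
    (hl : k + 1 ≤ l) : |s ^ p / √(k ^ p * l ^ p) - 1| ≤ (l - k) / l + 1 / k := by
  have hk0 : 0 < k := by linarith
  have hl0 : 0 < l := by linarith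
  have hkp : 0 < k ^ p := by positivity
  have hlp : 0 < l ^ p := by positivity
  have hkl : k ^ p ≤ l ^ p := Real.rpow_le_rpow hk0.le (by linarith) hp0
  have hks : k ^ p ≤ s ^ p := Real.rpow_le_rpow hk0.le (by linarith) hp0
  have hA : 0 < √(k ^ p * l ^ p) := Real.sqrt_pos.2 (by positivity)
  have hu : √(k ^ p * l ^ p) ≤ l ^ p := by
    rw [Real.sqrt_le_left hlp.le]; nlinarith
  have hv : k ^ p ≤ √(k ^ p * l ^ p) := Real.le_sqrt_of_sq_le (by nlinarith)
  have h1 : k / l * l ^ p ≤ k ^ p := by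
    have : k / l ≤ (k / l) ^ p := by
      nth_rw 1 [← Real.rpow_one (k / l)]
      exact Real.rpow_le_rpow_of_exponent_ge (by positivity) (by rw [div_le_one hl0]; linarith) hp1
    calc k / l * l ^ p ≤ (k / l) ^ p * l ^ p := by gcongr
      _ = k ^ p := by rw [Real.div_rpow hk0.le hl0.le]; field_simp
  have h2 : s ^ p ≤ k ^ p * (1 + 1 / k) := by
    have e : s ^ p ≤ (k * (1 + 1 / k)) ^ p := by
      refine Real.rpow_le_rpow (by linarith) ?_ hp0
      have : k * (1 + 1 / k) = k + 1 := by field_simp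
      linarith
    rw [Real.mul_rpow hk0.le (by positivity)] at e
    refine e.trans ?_
    gcongr
    nth_rw 2 [← Real.rpow_one (1 + 1 / k)]
    refine Real.rpow_le_rpow_of_exponent_le ?_ hp1
    have : 0 < 1 / k := by positivity
    linarith
  have l1 : k / l ≤ s ^ p / √(k ^ p * l ^ p) := by
    rw [le_div_iff₀ hA]
    calc k / l * √(k ^ p * l ^ p) ≤ k / l * l ^ p := by gcongr
      _ ≤ _ := h1.trans hks
  have l2 : s ^ p / √(k ^ p * l ^ p) ≤ 1 + 1 / k := by
    rw [div_le_iff₀ hA]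
    refine h2.trans ?_
    rw [mul_comm]
    gcongr
  have l3 : (l - k) / l = 1 - k / l := by field_simp
  have l4 : 0 < 1 / k := by positivity
  have l5 : k / l ≤ 1 := by rw [div_le_one hl0]; linarith
  rw [l3, abs_le]
  constructor <;> linarith

lemma key_sqrt {q q1 q2 e C : ℝ} (hq : 0 < q) (h1 : q ≤ q1) (h2 : q ≤ q2) (he : 0 ≤ e) (he1 : e ≤ 1)
    (hC : 0 < C)
    (g1 : |q1 - 1| ≤ C * e) (g2 : |q2 - 1| ≤ C * e) :
    |1 / √(q1 * q2) - 1| ≤ (C + (1 + C) * C) / q * e ∧ 1 / √(q1 * q2) ≤ 1 / q := by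
  have hQ : q ≤ √(q1 * q2) := Real.le_sqrt_of_sq_le (by nlinarith)
  have hQ0 : 0 < √(q1 * q2) := by linarith
  have hqq : √(q1 * q2) * √(q1 * q2) = q1 * q2 := Real.mul_self_sqrt (by nlinarith)
  refine ⟨?_, by gcongr⟩
  have b1 : |q1 * q2 - 1| ≤ (C + (1 + C) * C) * e := by
    have : q1 * q2 - 1 = (q1 - 1) + q1 * (q2 - 1) := by ring
    rw [this]
    refine (abs_add_le _ _).trans ?_
    rw [abs_mul, abs_of_pos (by linarith : 0 < q1)]
    have hq1 : q1 ≤ 1 + C := by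
      have := (abs_le.1 g1).2
      nlinarith
    have : q1 * |q2 - 1| ≤ (1 + C) * (C * e) := mul_le_mul hq1 g2 (abs_nonneg _) (by linarith)
    linarith
  have b2 : |√(q1 * q2) - 1| ≤ |q1 * q2 - 1| := by
    have e9 : q1 * q2 - 1 = (√(q1 * q2) - 1) * (√(q1 * q2) + 1) := by linarith
    rw [e9, abs_mul]
    rw [abs_of_pos (by linarith : 0 < √(q1 * q2) + 1)]
    nlinarith [abs_nonneg (√(q1 * q2) - 1)]
  have : 1 / √(q1 * q2) - 1 = -(√(q1 * q2) - 1) / √(q1 * q2) := by field_simp; ring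
  rw [this, abs_div, abs_neg, abs_of_pos hQ0, div_mul_eq_mul_div]
  exact div_le_div₀ (by positivity) (b2.trans b1) hq hQ

lemma key_inv {u m : ℝ} (hm : 2 ≤ m) (h1 : m - 1 < u) (h2 : u < m + 1) :
    1 / √u ≤ 2 / √m ∧ |1 / √u - 1 / √m| ≤ 2 / (m * √m) := by
  have hu : 0 < √u := Real.sqrt_pos.2 (by linarith)
  have hm0 : 0 < √m := Real.sqrt_pos.2 (by linarith)
  have a1 : 1 / √u ≤ 2 / √m := by
    rw [div_le_div_iff₀ hu hm0]
    have : √m ≤ √(2 ^ 2 * u) := Real.sqrt_le_sqrt (by linarith)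
    rw [Real.sqrt_mul (by norm_num), Real.sqrt_sq (by norm_num)] at this
    linarith
  refine ⟨a1, ?_⟩
  have e1 : √u * √u = u := Real.mul_self_sqrt (by linarith)
  have e2 : √m * √m = m := Real.mul_self_sqrt (by linarith)
  have : 1 / √u - 1 / √m = (m - u) * (1 / √u) * (1 / (√m * (√u + √m))) := by
    rw [← e1, ← e2]
    have h1 : √(√u * √u) = √u := by rw [e1]
    have h2 : √(√m * √m) = √m := by rw [e2]
    rw [h1, h2]
    field_simp
    ring
  rw [this, abs_mul, abs_mul, abs_of_pos (by positivity : 0 < 1 / √u),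
    abs_of_pos (by positivity : 0 < 1 / (√m * (√u + √m)))]
  have b1 : |m - u| ≤ 1 := by rw [abs_le]; constructor <;> linarith
  have b2 : 1 / (√m * (√u + √m)) ≤ 1 / m := by
    apply one_div_le_one_div_of_le (by linarith)
    nlinarith [mul_pos hm0 hu]
  calc |m - u| * (1 / √u) * (1 / (√m * (√u + √m))) ≤ 1 * (2 / √m) * (1 / m) := by gcongr
    _ = 2 / (m * √m) := by field_simp

lemma key_km {k l : ℝ} (hk : 1 ≤ k) (hl : k + 2 ≤ l) :
    1 / √k * (1 / √(l - k)) ≤ 2 / √l ∧ ((l - k) / l + 1 / k) * (1 / √(l - k)) ≤ 3 / √l := by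
  have hk0 : 0 < √k := Real.sqrt_pos.2 (by linarith)
  have hl0 : 0 < √l := Real.sqrt_pos.2 (by linarith)
  have hm0 : 0 < √(l - k) := Real.sqrt_pos.2 (by linarith)
  have a1 : 1 / √k * (1 / √(l - k)) ≤ 2 / √l := by
    rw [div_mul_div_comm, one_mul, div_le_div_iff₀ (by positivity) hl0]
    have : √l ≤ √(2 ^ 2 * (k * (l - k))) := by
      apply Real.sqrt_le_sqrt; nlinarith
    rw [Real.sqrt_mul (by norm_num), Real.sqrt_sq (by norm_num), Real.sqrt_mul (by linarith)] at this
    linarith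
  refine ⟨a1, ?_⟩
  have e1 : √k * √k = k := Real.mul_self_sqrt (by linarith)
  have e2 : √l * √l = l := Real.mul_self_sqrt (by linarith)
  have e3 : √(l - k) * √(l - k) = l - k := Real.mul_self_sqrt (by linarith)
  have b1 : 1 / k ≤ 1 / √k := by
    apply one_div_le_one_div_of_le hk0
    rw [Real.sqrt_le_left (by linarith)]; nlinarith
  have b2 : (l - k) / l * (1 / √(l - k)) ≤ 1 / √l := by
    have : (l - k) / l * (1 / √(l - k)) = √(l - k) / l := by
      rw [div_mul_div_comm, mul_one, div_eq_div_iff (mul_pos (by linarith) hm0).ne' (by linarith)]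
      calc (l - k) * l = (√(l - k) * √(l - k)) * l := by rw [e3]
        _ = _ := by ring
    rw [this, div_le_div_iff₀ (by linarith) hl0, one_mul]
    have : √(l - k) ≤ √l := Real.sqrt_le_sqrt (by linarith)
    calc √(l - k) * √l ≤ √l * √l := by gcongr
      _ = l := e2
  have b3 : 1 / k * (1 / √(l - k)) ≤ 2 / √l := le_trans (by gcongr) a1
  rw [add_mul]
  have : 3 / √l = 1 / √l + 2 / √l := by ring
  linarith

namespace H32
variable {β lam : ℝ} {φ ψ : ℝ → ℝ} {C₀ C₁ : ℝ}

lemma key (h : H32 β lam φ ψ C₀ C₁) (hpos : ∀ k : ℕ, 0 < covΔ β φ k k) :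
    ∃ C, 0 < C ∧ ∀ k l : ℕ, 1 ≤ k → k + 2 ≤ l →
    |covδ β φ k l - 3 / 8 * (1 / √((l : ℝ) - k))| ≤
      C * (1 / √l + 1 / (((l : ℝ) - k) * √((l : ℝ) - k))) := by
  obtain ⟨Ca, hCa, ha⟩ := h.offdiag
  obtain ⟨Cb, hCb, hb⟩ := h.diag
  obtain ⟨q, hq, hq'⟩ := h.diag_lower hpos
  have hl := h.hlam
  have hp0 : 0 ≤ 2 * β - 3 / 2 := by linarith [h.hβ0]
  have hp1 : 2 * β - 3 / 2 ≤ 1 := by linarith [h.hβ1]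
  set D := (Cb + (1 + Cb) * Cb) / q with hD
  have hD0 : 0 < D := by positivity
  refine ⟨Ca / (2 * lam) * (1 + D + 2 / q) + 3 / 8 * (2 * (2 * D + 3 / q)) + 1, by positivity,
    fun k l hk hkl => ?_⟩
  obtain ⟨s, t, s1, s2, t1, t2, hst⟩ := ha k l hk hkl
  have hk1 : (1 : ℝ) ≤ k := by exact_mod_cast hk
  have hkl1 : (k : ℝ) + 2 ≤ l := by exact_mod_cast hkl
  have r1 := key_ratio hp0 hp1 hk1 s1 s2 (by linarith : (k : ℝ) + 1 ≤ l)
  have hsk : 0 < √(k : ℝ) := Real.sqrt_pos.2 (by linarith)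
  have hsl : 0 < √(l : ℝ) := Real.sqrt_pos.2 (by linarith)
  have hskl : √(k : ℝ) ≤ √l := Real.sqrt_le_sqrt (by linarith)
  have hsk1 : 1 ≤ √(k : ℝ) := Real.one_le_sqrt.2 hk1
  set qk := covΔ β φ k k / (2 * lam * (k : ℝ) ^ (2 * β - 3 / 2)) with hqk
  set ql := covΔ β φ l l / (2 * lam * (l : ℝ) ^ (2 * β - 3 / 2)) with hql
  have gk : |qk - 1| ≤ Cb * (1 / √k) := by rw [mul_one_div]; exact hb k hk
  have gl : |ql - 1| ≤ Cb * (1 / √k) := by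
    rw [mul_one_div]; refine (hb l (by omega)).trans ?_; gcongr
  obtain ⟨u1, u2⟩ := key_sqrt hq (hq' k hk) (hq' l (by omega)) (by positivity)
    (by rw [div_le_one hsk]; exact hsk1) hCb gk gl
  rw [← hD] at u1
  have hm2 : (2 : ℝ) ≤ (l : ℝ) - k := by linarith
  obtain ⟨v1, v2⟩ := key_inv hm2 (u := t - s) (by linarith) (by linarith)
  obtain ⟨w1, w2⟩ := key_km hk1 hkl1
  set p := 2 * β - 3 / 2 with hp
  have hkp : 0 < (k : ℝ) ^ p := by positivity
  have hlp : 0 < (l : ℝ) ^ p := Real.rpow_pos_of_pos (by linarith) _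
  have hqk0 : 0 < qk := lt_of_lt_of_le hq (hq' k hk)
  have hql0 : 0 < ql := lt_of_lt_of_le hq (hq' l (by omega))
  set r' := s ^ p / √((k : ℝ) ^ p * (l : ℝ) ^ p) with hr'
  set u := 1 / √(qk * ql) with hu
  have hs0 : 0 < s := by linarith
  have hA : 0 < √((k : ℝ) ^ p * (l : ℝ) ^ p) := Real.sqrt_pos.2 (by positivity)
  have hB : 0 < √(qk * ql) := Real.sqrt_pos.2 (by positivity)
  have hr0 : 0 < r' := by positivity
  have hu0 : 0 < u := by positivity
  -- normalisation
  have hN : √(covΔ β φ k k * covΔ β φ l l) = 2 * lam * (√((k : ℝ) ^ p * (l : ℝ) ^ p) * √(qk * ql)) := by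
    have e1 : covΔ β φ k k = 2 * lam * (k : ℝ) ^ p * qk := by rw [hqk]; field_simp
    have e2 : covΔ β φ l l = 2 * lam * (l : ℝ) ^ p * ql := by rw [hql]; field_simp
    rw [e1, e2, ← Real.sqrt_mul (by positivity)]
    rw [show 2 * lam * (k : ℝ) ^ p * qk * (2 * lam * (l : ℝ) ^ p * ql) =
      (2 * lam) ^ 2 * ((k : ℝ) ^ p * (l : ℝ) ^ p * (qk * ql)) by ring,
      Real.sqrt_mul (by positivity), Real.sqrt_sq (by positivity)]
  have hst0 : 0 < √(t - s) := Real.sqrt_pos.2 (by linarith)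
  have ht0 : 0 < √t := Real.sqrt_pos.2 (by linarith)
  have hN0 : 0 < √(covΔ β φ k k * covΔ β φ l l) := by rw [hN]; positivity
  have hρ : s ^ p / √(covΔ β φ k k * covΔ β φ l l) = r' * u / (2 * lam) := by
    rw [hN, hr', hu]; field_simp
  have main : |covδ β φ k l - 3 / 8 * (r' * u) * (1 / √(t - s))| ≤
      Ca / (2 * lam) * (r' * u) * (1 / √l) := by
    have e1 : covδ β φ k l - 3 / 8 * (r' * u) * (1 / √(t - s)) =
        (covΔ β φ k l - 3 / 4 * lam * s ^ p / √(t - s)) / √(covΔ β φ k k * covΔ β φ l l) := by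
      unfold covδ
      rw [sub_div]
      congr 1
      rw [show 3 / 4 * lam * s ^ p / √(t - s) / √(covΔ β φ k k * covΔ β φ l l) =
        3 / 4 * lam / √(t - s) * (s ^ p / √(covΔ β φ k k * covΔ β φ l l)) by ring, hρ]
      field_simp
      norm_num
    rw [e1, abs_div, abs_of_pos hN0]
    calc |covΔ β φ k l - 3 / 4 * lam * s ^ p / √(t - s)| / √(covΔ β φ k k * covΔ β φ l l)
        ≤ (Ca * s ^ p / √t) / √(covΔ β φ k k * covΔ β φ l l) := by gcongr
      _ = Ca / √t * (s ^ p / √(covΔ β φ k k * covΔ β φ l l)) := by ring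
      _ = Ca / (2 * lam) * (r' * u) * (1 / √t) := by rw [hρ]; ring
      _ ≤ _ := by
        gcongr
  have ru : |r' * u - 1| ≤ ((l - k) / l + 1 / k) * (1 / q) + D * (1 / √k) := by
    rw [show r' * u - 1 = (r' - 1) * u + (u - 1) by ring]
    refine (abs_add_le _ _).trans (add_le_add ?_ u1)
    rw [abs_mul, abs_of_pos hu0]
    exact mul_le_mul r1 u2 hu0.le ((abs_nonneg _).trans r1)
  have ru2 : r' * u ≤ 1 + D + 2 / q := by
    have c1 : ((l : ℝ) - k) / l ≤ 1 := by rw [div_le_one (by linarith)]; linarith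
    have c2 : 1 / (k : ℝ) ≤ 1 := by rw [div_le_one (by linarith)]; exact hk1
    have c3 : 1 / √(k : ℝ) ≤ 1 := by rw [div_le_one hsk]; exact hsk1
    have := (abs_le.1 ru).2
    have c4 : (((l : ℝ) - k) / l + 1 / k) * (1 / q) ≤ 2 * (1 / q) := by gcongr; linarith
    have c5 : D * (1 / √(k : ℝ)) ≤ D * 1 := by gcongr
    have : 2 / q = 2 * (1 / q) := by ring
    linarith
  set m := (l : ℝ) - k with hm
  have hm0 : 0 < √m := Real.sqrt_pos.2 (by linarith)
  have ru3 : |r' * u - 1| * (1 / √(t - s)) ≤ 2 * (2 * D + 3 / q) * (1 / √l) := by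
    calc |r' * u - 1| * (1 / √(t - s)) ≤ ((m / l + 1 / k) * (1 / q) + D * (1 / √k)) * (2 / √m) := by
          gcongr
      _ = 2 * ((1 / q) * ((m / l + 1 / k) * (1 / √m)) + D * (1 / √k * (1 / √m))) := by ring
      _ ≤ 2 * ((1 / q) * (3 / √l) + D * (2 / √l)) := by gcongr
      _ = _ := by ring
  have fin : covδ β φ k l - 3 / 8 * (1 / √m) =
      (covδ β φ k l - 3 / 8 * (r' * u) * (1 / √(t - s))) +
      3 / 8 * ((r' * u - 1) * (1 / √(t - s))) + 3 / 8 * (1 / √(t - s) - 1 / √m) := by ring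
  rw [fin]
  refine (abs_add_le _ _).trans ((add_le_add_left (abs_add_le _ _) _).trans ?_)
  rw [abs_mul (3 / 8), abs_mul (3 / 8), abs_mul (r' * u - 1), abs_of_pos (by norm_num : (0 : ℝ) < 3 / 8),
    abs_of_pos (by positivity : 0 < 1 / √(t - s))]
  have mm : |covδ β φ k l - 3 / 8 * (r' * u) * (1 / √(t - s))| ≤
      Ca / (2 * lam) * (1 + D + 2 / q) * (1 / √l) := main.trans (by gcongr)
  have z1 : 0 < 1 / √(l : ℝ) := by positivity
  have z2 : 0 < 1 / (m * √m) := by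
    have : 0 < m := by linarith
    positivity
  have z3 : 2 / (m * √m) = 2 * (1 / (m * √m)) := by ring
  rw [z3] at v2
  have z4 : 0 < Ca / (2 * lam) * (1 + D + 2 / q) + 3 / 8 * (2 * (2 * D + 3 / q)) := by positivity
  have z5 := mul_pos z4 z2
  have z6 := mul_pos z4 z1
  linarith

end H32

/-- auxiliary weights. -/
def om (m : ℕ) : ℝ := (max 1 (m : ℝ)) ^ (-(1 / 6) : ℝ)

lemma om_pos (m : ℕ) : 0 < om m := Real.rpow_pos_of_pos (by positivity) _

lemma om_three (m : ℕ) (hm : 1 ≤ m) : om m ^ 3 = 1 / √m := by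
  have hm1 : (1 : ℝ) ≤ m := by exact_mod_cast hm
  unfold om
  rw [max_eq_right hm1, ← Real.rpow_natCast, ← Real.rpow_mul (by linarith), Real.sqrt_eq_rpow,
    one_div ((m : ℝ) ^ _), ← Real.rpow_neg (by linarith)]
  norm_num

lemma om_sum (N : ℕ) : ∑ m ∈ Finset.range N, om m ^ 4 ≤ 6 * (N : ℝ) ^ (1 / 3 : ℝ) := by
  induction N with
  | zero => simp
  | succ N ih =>
    rw [Finset.sum_range_succ]
    rcases Nat.eq_zero_or_pos N with h0 | h0
    · subst h0; simp [om]
    have hN : (1 : ℝ) ≤ N := by exact_mod_cast h0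
    set b := (N : ℝ) ^ (1 / 3 : ℝ) with hb
    set a := ((N + 1 : ℕ) : ℝ) ^ (1 / 3 : ℝ) with ha
    have hb3 : b ^ 3 = N := by
      rw [hb, ← Real.rpow_natCast, ← Real.rpow_mul (by linarith)]; norm_num
    have ha3 : a ^ 3 = N + 1 := by
      rw [ha, ← Real.rpow_natCast, ← Real.rpow_mul (by positivity)]; norm_num
    have hb1 : 1 ≤ b := Real.one_le_rpow hN (by norm_num)
    have hab : b ≤ a := Real.rpow_le_rpow (by linarith) (by push_cast; linarith) (by norm_num)
    have ha2 : a ≤ 3 / 2 * b := by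
      by_contra hcon
      push Not at hcon
      have : (3 / 2 * b) ^ 3 < a ^ 3 := pow_lt_pow_left₀ hcon (by linarith) (by norm_num)
      nlinarith
    have hom : om N ^ 4 = 1 / b ^ 2 := by
      unfold om
      rw [max_eq_right hN, hb, ← Real.rpow_natCast, ← Real.rpow_mul (by linarith),
        ← Real.rpow_natCast, ← Real.rpow_mul (by linarith), one_div ((N : ℝ) ^ _), ← Real.rpow_neg (by linarith)]
      norm_num
    rw [hom]
    have : 1 / b ^ 2 ≤ 6 * (a - b) := by
      rw [div_le_iff₀ (by positivity)]
      have e : (a - b) * (a ^ 2 + a * b + b ^ 2) = 1 := by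
        have : (a - b) * (a ^ 2 + a * b + b ^ 2) = a ^ 3 - b ^ 3 := by ring
        rw [this, ha3, hb3]; ring
      rw [← e, mul_comm 6, mul_assoc]
      apply mul_le_mul_of_nonneg_left _ (by linarith)
      nlinarith
    linarith

lemma om_row (D k : ℕ) (hk : k ∈ Finset.Icc 1 D) :
    ∑ l ∈ Finset.Icc 1 D, om (Nat.dist k l) ^ 4 ≤ 12 * (D : ℝ) ^ (1 / 3 : ℝ) := by
  obtain ⟨h1, h2⟩ := Finset.mem_Icc.1 hk
  have e : Finset.Icc 1 D = Finset.Ico 1 (D + 1) := by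
    ext; simp only [Finset.mem_Icc, Finset.mem_Ico]; omega
  rw [e, ← Finset.sum_Ico_consecutive _ h1 (by omega : k ≤ D + 1)]
  have hs := om_sum D
  have p1 : ∑ l ∈ Finset.Ico 1 k, om (Nat.dist k l) ^ 4 ≤ ∑ m ∈ Finset.range D, om m ^ 4 := by
    have : ∑ l ∈ Finset.Ico 1 k, om (Nat.dist k l) ^ 4 = ∑ l ∈ Finset.Ico 1 k, om (k - l) ^ 4 := by
      refine Finset.sum_congr rfl fun l hl => ?_
      have := (Finset.mem_Ico.1 hl).2
      rw [Nat.dist_eq_sub_of_le_right this.le]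
    rw [this, Finset.sum_Ico_reflect (fun j => om j ^ 4) 1 (by omega : k ≤ k + 1)]
    refine Finset.sum_le_sum_of_subset_of_nonneg ?_ fun m _ _ => (pow_pos (om_pos m) 4).le
    intro m hm
    simp only [Finset.mem_Ico, Finset.mem_range] at hm ⊢
    omega
  have p2 : ∑ l ∈ Finset.Ico k (D + 1), om (Nat.dist k l) ^ 4 ≤ ∑ m ∈ Finset.range D, om m ^ 4 := by
    rw [Finset.sum_Ico_eq_sum_range]
    have : ∀ i, Nat.dist k (k + i) = i := fun i => by
      rw [Nat.dist_eq_sub_of_le (by omega)]; omega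
    simp only [this]
    refine Finset.sum_le_sum_of_subset_of_nonneg ?_ fun m _ _ => (pow_pos (om_pos m) 4).le
    intro m hm
    simp only [Finset.mem_range] at hm ⊢
    omega
  linarith

lemma amgm4 (a b c d : ℝ) : a * b * c * d ≤ (a ^ 4 + b ^ 4 + c ^ 4 + d ^ 4) / 4 := by
  nlinarith [sq_nonneg (a * b - c * d), sq_nonneg (a ^ 2 - b ^ 2), sq_nonneg (c ^ 2 - d ^ 2)]

lemma four_cycle {κ : Type} [Fintype κ] (g : κ → κ → ℝ) (hg : ∀ k l, 0 ≤ g k l)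
    (hs : ∀ k l, g k l = g l k) {S : ℝ} (hS0 : 0 ≤ S) (hS : ∀ k, ∑ l, g k l ≤ S) :
    ∑ k, ∑ l, ∑ k', ∑ l', (g k l * g k' l' * g k k' + g k l * g k k' * g l l' +
      g k l * g k' l' * g l l' + g k' l' * g k k' * g l l') ≤
      4 * (Fintype.card κ * S ^ 3) := by
  have hn : ∀ k, 0 ≤ ∑ l, g k l := fun k => Finset.sum_nonneg fun l _ => hg k l
  -- a path of three edges
  have path : ∑ a, ∑ b, ∑ c, ∑ d, g a b * (g b c * g c d) ≤ Fintype.card κ * S ^ 3 := by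
    have : ∀ a, ∑ b, ∑ c, ∑ d, g a b * (g b c * g c d) ≤ S ^ 3 := by
      intro a
      simp only [← Finset.mul_sum]
      have i1 : ∀ b, ∑ c, g b c * ∑ d, g c d ≤ S * S := by
        intro b
        calc ∑ c, g b c * ∑ d, g c d ≤ ∑ c, g b c * S :=
              Finset.sum_le_sum fun c _ => mul_le_mul_of_nonneg_left (hS c) (hg b c)
          _ = (∑ c, g b c) * S := by rw [Finset.sum_mul]
          _ ≤ S * S := mul_le_mul_of_nonneg_right (hS b) hS0
      calc ∑ b, g a b * ∑ c, g b c * ∑ d, g c d ≤ ∑ b, g a b * (S * S) :=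
            Finset.sum_le_sum fun b _ => mul_le_mul_of_nonneg_left (i1 b) (hg a b)
        _ = (∑ b, g a b) * (S * S) := by rw [Finset.sum_mul]
        _ ≤ S * (S * S) := mul_le_mul_of_nonneg_right (hS a) (by positivity)
        _ = S ^ 3 := by ring
    calc _ ≤ ∑ a : κ, S ^ 3 := Finset.sum_le_sum fun a _ => this a
      _ = _ := by simp
  simp only [Finset.sum_add_distrib]
  have q1 : ∑ k, ∑ l, ∑ k', ∑ l', g k l * g k' l' * g k k' =
      ∑ a, ∑ b, ∑ c, ∑ d, g a b * (g b c * g c d) := by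
    rw [Finset.sum_comm]
    refine Finset.sum_congr rfl fun a _ => Finset.sum_congr rfl fun b _ =>
      Finset.sum_congr rfl fun c _ => Finset.sum_congr rfl fun d _ => ?_
    rw [hs b a]; ring
  have q2 : ∑ k, ∑ l, ∑ k', ∑ l', g k l * g k k' * g l l' =
      ∑ a, ∑ b, ∑ c, ∑ d, g a b * (g b c * g c d) := by
    -- path k' - k - l - l'
    have : ∀ k, ∑ l, ∑ k', ∑ l', g k l * g k k' * g l l' =
        ∑ k', ∑ l, ∑ l', g k l * g k k' * g l l' := fun k => Finset.sum_comm
    simp only [this]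
    rw [Finset.sum_comm]
    refine Finset.sum_congr rfl fun a _ => Finset.sum_congr rfl fun b _ =>
      Finset.sum_congr rfl fun c _ => Finset.sum_congr rfl fun d _ => ?_
    rw [hs b a]; ring
  have q3 : ∑ k, ∑ l, ∑ k', ∑ l', g k l * g k' l' * g l l' =
      ∑ a, ∑ b, ∑ c, ∑ d, g a b * (g b c * g c d) := by
    -- path k - l - l' - k'
    refine Finset.sum_congr rfl fun a _ => Finset.sum_congr rfl fun b _ => ?_
    rw [Finset.sum_comm]
    refine Finset.sum_congr rfl fun c _ => Finset.sum_congr rfl fun d _ => ?_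
    rw [hs d c]; ring
  have q4 : ∑ k, ∑ l, ∑ k', ∑ l', g k' l' * g k k' * g l l' =
      ∑ a, ∑ b, ∑ c, ∑ d, g a b * (g b c * g c d) := by
    -- path k - k' - l' - l
    refine Finset.sum_congr rfl fun a _ => ?_
    rw [Finset.sum_comm]
    refine Finset.sum_congr rfl fun b _ => ?_
    rw [Finset.sum_comm]
    refine Finset.sum_congr rfl fun c _ => Finset.sum_congr rfl fun d _ => ?_
    rw [hs d c]; ring
  rw [q1, q2, q3, q4]
  linarith

lemma tau4_bound {δ : ℕ → ℕ → ℝ} {D : ℕ} {A : ℝ} (hA : 0 ≤ A)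
    (h : ∀ k ∈ Finset.Icc 1 D, ∀ l ∈ Finset.Icc 1 D, |δ k l| ≤ A * om (Nat.dist k l) ^ 3) :
    (tau4 fun k l : Finset.Icc 1 D => δ k l) ≤ A ^ 4 * 1728 * (D : ℝ) ^ 2 := by
  set o : Finset.Icc 1 D → Finset.Icc 1 D → ℝ := fun k l => om (Nat.dist k l) with ho
  have hop : ∀ k l, 0 < o k l := fun k l => om_pos _
  have hos : ∀ k l, o k l = o l k := fun k l => by simp only [ho, Nat.dist_comm]
  have hb : ∀ k l : Finset.Icc 1 D, |δ k l| ≤ A * o k l ^ 3 := fun k l => h k k.2 l l.2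
  have hc := four_cycle (fun k l => o k l ^ 4) (fun k l => (pow_pos (hop k l) 4).le)
    (fun k l => by rw [hos]) (S := 12 * (D : ℝ) ^ (1 / 3 : ℝ)) (by positivity) (by
      intro k
      have := om_row D k k.2
      rw [← Finset.sum_coe_sort] at this
      exact this)
  have e1 : (Fintype.card (Finset.Icc 1 D) : ℝ) = D := by simp
  have e2 : (12 * (D : ℝ) ^ (1 / 3 : ℝ)) ^ 3 = 1728 * D := by
    rw [mul_pow, ← Real.rpow_natCast ((D : ℝ) ^ (1 / 3 : ℝ)), ← Real.rpow_mul (by positivity)]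
    norm_num
  rw [e1, e2] at hc
  unfold tau4
  calc ∑ k : Finset.Icc 1 D, ∑ l : Finset.Icc 1 D, ∑ k' : Finset.Icc 1 D, ∑ l' : Finset.Icc 1 D,
        δ k l * δ k' l' * (δ k k' * δ l l')
      ≤ ∑ k, ∑ l, ∑ k', ∑ l', A ^ 4 / 4 * (o k l ^ 4 * o k' l' ^ 4 * o k k' ^ 4 +
        o k l ^ 4 * o k k' ^ 4 * o l l' ^ 4 +
        o k l ^ 4 * o k' l' ^ 4 * o l l' ^ 4 + o k' l' ^ 4 * o k k' ^ 4 * o l l' ^ 4) := by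
        refine Finset.sum_le_sum fun k _ => Finset.sum_le_sum fun l _ =>
          Finset.sum_le_sum fun k' _ => Finset.sum_le_sum fun l' _ => ?_
        refine (le_abs_self _).trans ?_
        rw [abs_mul, abs_mul, abs_mul]
        have hh := amgm4 (o k l * o k' l' * o k k') (o k l * o k k' * o l l')
          (o k l * o k' l' * o l l') (o k' l' * o k k' * o l l')
        have x1 := hop k l
        have x2 := hop k' l'
        have x3 := hop k k'
        have x4 := hop l l'
        calc |δ k l| * |δ k' l'| * (|δ k k'| * |δ l l'|)
            ≤ (A * o k l ^ 3) * (A * o k' l' ^ 3) * ((A * o k k' ^ 3) * (A * o l l' ^ 3)) := by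
              gcongr <;> exact hb _ _
          _ = A ^ 4 * ((o k l * o k' l' * o k k') * (o k l * o k k' * o l l') *
            (o k l * o k' l' * o l l') * (o k' l' * o k k' * o l l')) := by ring
          _ ≤ A ^ 4 * (((o k l * o k' l' * o k k') ^ 4 + (o k l * o k k' * o l l') ^ 4 +
            (o k l * o k' l' * o l l') ^ 4 + (o k' l' * o k k' * o l l') ^ 4) / 4) := by gcongr
          _ = _ := by ring
    _ = A ^ 4 / 4 * ∑ k, ∑ l, ∑ k', ∑ l', (o k l ^ 4 * o k' l' ^ 4 * o k k' ^ 4 +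
        o k l ^ 4 * o k k' ^ 4 * o l l' ^ 4 +
        o k l ^ 4 * o k' l' ^ 4 * o l l' ^ 4 + o k' l' ^ 4 * o k k' ^ 4 * o l l' ^ 4) := by
        simp only [Finset.mul_sum]
    _ ≤ A ^ 4 / 4 * (4 * (D * (1728 * D))) := by gcongr
    _ = _ := by ring

lemma sym_sum (f : ℕ → ℕ → ℝ) (hf : ∀ k l, f k l = f l k) (D : ℕ) :
    ∑ k ∈ Finset.Icc 1 D, ∑ l ∈ Finset.Icc 1 D, f k l =
      ∑ l ∈ Finset.Icc 1 D, (f l l + 2 * ∑ k ∈ Finset.Ico 1 l, f k l) := by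
  induction D with
  | zero => simp
  | succ D ih =>
    have hI : Finset.Ico 1 (D + 1) = Finset.Icc 1 D := by
      ext; simp only [Finset.mem_Icc, Finset.mem_Ico]; omega
    simp only [Finset.sum_Icc_succ_top (by omega : 1 ≤ D + 1), Finset.sum_add_distrib, hI]
    rw [Finset.sum_add_distrib] at ih
    have : ∑ l ∈ Finset.Icc 1 D, f (D + 1) l = ∑ l ∈ Finset.Icc 1 D, f l (D + 1) :=
      Finset.sum_congr rfl fun l _ => hf _ _
    rw [ih, this]
    ring

lemma sum_inv_sqrt (N : ℕ) : ∑ m ∈ Finset.range N, 1 / √((m : ℝ) + 1) ≤ 2 * √N := by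
  induction N with
  | zero => simp
  | succ N ih =>
    rw [Finset.sum_range_succ]
    have h1 : 0 < √((N : ℝ) + 1) := Real.sqrt_pos.2 (by positivity)
    have h2 : 0 ≤ √(N : ℝ) := Real.sqrt_nonneg _
    have e1 : √((N : ℝ) + 1) * √((N : ℝ) + 1) = N + 1 := Real.mul_self_sqrt (by positivity)
    have e2 : √(N : ℝ) * √(N : ℝ) = N := Real.mul_self_sqrt (by positivity)
    have : 1 / √((N : ℝ) + 1) ≤ 2 * (√((N : ℝ) + 1) - √N) := by
      rw [div_le_iff₀ h1]
      nlinarith [sq_nonneg (√((N : ℝ) + 1) - √N)]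
    push_cast
    linarith

lemma sum_inv_sq (N : ℕ) : ∑ m ∈ Finset.range N, 1 / ((m : ℝ) + 1) ^ 2 ≤ (2 : ℝ) - 1 / (N : ℝ) := by
  induction N with
  | zero => simp
  | succ N ih =>
    rw [Finset.sum_range_succ]
    rcases Nat.eq_zero_or_pos N with h0 | h0
    · subst h0; norm_num
    have hN : (0 : ℝ) < N := by exact_mod_cast h0
    have : 1 / ((N : ℝ) + 1) ^ 2 ≤ 1 / N - 1 / (N + 1) := by
      rw [div_sub_div _ _ (by positivity) (by positivity), div_le_div_iff₀ (by positivity) (by positivity)]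
      nlinarith
    push_cast
    linarith

lemma sum_harm (N : ℕ) : |∑ m ∈ Finset.range N, 1 / ((m : ℝ) + 1) - Real.log (N + 1)| ≤ 1 := by
  have e : ∑ m ∈ Finset.range N, 1 / ((m : ℝ) + 1) = (harmonic N : ℝ) := by
    unfold harmonic
    push_cast
    simp
  rw [e, abs_le]
  have h1 := log_add_one_le_harmonic N
  have h2 := harmonic_le_one_add_log N
  have h3 : Real.log N ≤ Real.log (N + 1) := by
    rcases Nat.eq_zero_or_pos N with h0 | h0
    · subst h0; simp
    · exact Real.log_le_log (by exact_mod_cast h0) (by linarith)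
  push_cast at h1
  constructor <;> linarith

lemma sum_log (D : ℕ) : |∑ l ∈ Finset.Icc 1 D, Real.log l - D * Real.log D| ≤ D := by
  rw [abs_le]
  constructor
  · induction D with
    | zero => simp
    | succ D ih =>
      rw [Finset.sum_Icc_succ_top (by omega)]
      rcases Nat.eq_zero_or_pos D with h0 | h0
      · subst h0; simp
      have hD : (0 : ℝ) < D := by exact_mod_cast h0
      have : Real.log (D + 1) - Real.log D ≤ 1 / D := by
        rw [← Real.log_div (by positivity) (by positivity)]
        refine (Real.log_le_sub_one_of_pos (by positivity)).trans (le_of_eq ?_)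
        field_simp; ring
      have h2 : D * (Real.log (D + 1) - Real.log D) ≤ 1 := by
        calc D * (Real.log (D + 1) - Real.log D) ≤ D * (1 / D) := by gcongr
          _ = 1 := by field_simp
      push_cast
      linarith
  · have : ∑ l ∈ Finset.Icc 1 D, Real.log l ≤ ∑ l ∈ Finset.Icc 1 D, Real.log D := by
      refine Finset.sum_le_sum fun l hl => ?_
      obtain ⟨h1, h2⟩ := Finset.mem_Icc.1 hl
      exact Real.log_le_log (by exact_mod_cast h1) (by exact_mod_cast h2)
    simp only [Finset.sum_const, Nat.card_Icc, add_tsub_cancel_right, nsmul_eq_mul] at this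
    have hD : (0 : ℝ) ≤ D := by positivity
    linarith

lemma reflect_sum (F : ℝ → ℝ) (l : ℕ) (hl : 1 ≤ l) : ∑ k ∈ Finset.Ico 1 l, F ((l : ℝ) - k) =
    ∑ m ∈ Finset.range (l - 1), F ((m : ℝ) + 1) := by
  have : ∑ k ∈ Finset.Ico 1 l, F ((l : ℝ) - k) = ∑ k ∈ Finset.Ico 1 l, F ((l - k : ℕ) : ℝ) := by
    refine Finset.sum_congr rfl fun k hk => ?_
    rw [Nat.cast_sub (Finset.mem_Ico.1 hk).2.le]
  rw [this, Finset.sum_Ico_reflect (fun j => F ((j : ℕ) : ℝ)) 1 (by omega : l ≤ l + 1)]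
  rw [show l + 1 - l = 1 by omega, Nat.add_sub_cancel, Finset.sum_Ico_eq_sum_range]
  refine Finset.sum_congr rfl fun k hk => ?_
  push_cast
  rw [add_comm]

lemma tau2_bound {δ : ℕ → ℕ → ℝ} {D : ℕ} {C : ℝ} (hC : 0 < C) (hd : ∀ k, δ k k = 1)
    (hs : ∀ k l, δ k l = δ l k)
    (h : ∀ k ∈ Finset.Icc 1 D, ∀ l ∈ Finset.Icc 1 D, k < l →
      |δ k l - 3 / 8 * (1 / √((l : ℝ) - k))| ≤
      C * (1 / √l + 1 / (((l : ℝ) - k) * √((l : ℝ) - k)))) :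
    |(tau2 fun k l : Finset.Icc 1 D => δ k l) - 9 / 32 * (D * Real.log D)| ≤
      (2 + 8 * (C * (1 + 2 * C))) * D := by
  have e0 : (tau2 fun k l : Finset.Icc 1 D => δ k l) =
      ∑ l ∈ Finset.Icc 1 D, (1 + 2 * ∑ k ∈ Finset.Ico 1 l, δ k l ^ 2) := by
    unfold tau2
    have := sym_sum (fun k l => δ k l ^ 2) (fun k l => by rw [hs]) D
    simp only [hd, one_pow] at this
    rw [← this, ← Finset.sum_coe_sort (Finset.Icc 1 D) (fun k => ∑ l ∈ Finset.Icc 1 D, δ k l ^ 2)]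
    exact Finset.sum_congr rfl fun k _ => Finset.sum_coe_sort (Finset.Icc 1 D) (fun l => δ k l ^ 2)
  set E := C * (1 + 2 * C) with hE
  have hE0 : 0 < E := by positivity
  have row : ∀ l ∈ Finset.Icc 1 D,
      |∑ k ∈ Finset.Ico 1 l, δ k l ^ 2 - 9 / 64 * Real.log l| ≤ 4 * E + 9 / 64 := by
    intro l hl
    obtain ⟨hl1, hl2⟩ := Finset.mem_Icc.1 hl
    have hlr : (1 : ℝ) ≤ l := by exact_mod_cast hl1
    have hsl : 0 < √(l : ℝ) := Real.sqrt_pos.2 (by linarith)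
    have t1 : ∀ k ∈ Finset.Ico 1 l, |δ k l ^ 2 - 9 / 64 * (1 / ((l : ℝ) - k))| ≤
        E * (1 / √l * (1 / √((l : ℝ) - k)) + 1 / ((l : ℝ) - k) ^ 2) := by
      intro k hk
      obtain ⟨hk1, hk2⟩ := Finset.mem_Ico.1 hk
      have hkl := h k (Finset.mem_Icc.2 ⟨hk1, by omega⟩) l hl hk2
      have hm1 : (1 : ℝ) ≤ (l : ℝ) - k := by
        have : (k : ℝ) + 1 ≤ l := by exact_mod_cast hk2
        linarith
      set m := (l : ℝ) - k with hm
      have hml : m ≤ l := by rw [hm]; have : (0 : ℝ) ≤ k := by positivity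
                             linarith
      have hsm : 0 < √m := Real.sqrt_pos.2 (by linarith)
      have hmm : √m * √m = m := Real.mul_self_sqrt (by linarith)
      set x := 1 / √m with hx
      have hx0 : 0 < x := by positivity
      have hxx : x * x = 1 / m := by rw [hx, div_mul_div_comm, hmm, one_mul]
      have hll : 1 / √(l : ℝ) ≤ x := by
        rw [hx]; exact one_div_le_one_div_of_le hsm (Real.sqrt_le_sqrt hml)
      have hmx : 1 / (m * √m) = 1 / m * x := by rw [hx, div_mul_div_comm, one_mul]
      have hm2 : 1 / m ^ 2 = 1 / m * (x * x) := by rw [hxx]; field_simp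
      have hm3 : 1 / m ≤ 1 := by rw [div_le_one (by linarith)]; exact hm1
      have hm4 : 0 < 1 / m := by positivity
      rw [hmx] at hkl
      have hl0 : 0 < 1 / √(l : ℝ) := by positivity
      set y := 1 / √(l : ℝ) with hy
      have hmx0 : 0 < 1 / m * x := by positivity
      have g1 : |δ k l + 3 / 8 * x| ≤ (1 + 2 * C) * x := by
        have : C * (y + 1 / m * x) ≤ C * (x + 1 * x) := by gcongr
        rw [abs_le] at hkl ⊢
        constructor <;> nlinarith [hkl.1, hkl.2]
      have : δ k l ^ 2 - 9 / 64 * (1 / m) = (δ k l - 3 / 8 * x) * (δ k l + 3 / 8 * x) := by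
        rw [← hxx]; ring
      rw [this, abs_mul]
      calc _ ≤ C * (y + 1 / m * x) * ((1 + 2 * C) * x) :=
            mul_le_mul hkl g1 (abs_nonneg _) (by positivity)
        _ = E * (y * x + 1 / m * (x * x)) := by rw [hE]; ring
        _ = _ := by rw [hm2]
    have s1 := reflect_sum (fun x => 1 / √x) l hl1
    have s2 := reflect_sum (fun x => 1 / x ^ 2) l hl1
    have s3 := reflect_sum (fun x => 1 / x) l hl1
    have b1 := sum_inv_sqrt (l - 1)
    have b2 := sum_inv_sq (l - 1)
    have b3 := sum_harm (l - 1)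
    have b2' : (0 : ℝ) ≤ 1 / ((l - 1 : ℕ) : ℝ) := by positivity
    have hcast : ((l - 1 : ℕ) : ℝ) + 1 = l := by rw [Nat.cast_sub hl1]; simp
    rw [hcast] at b3
    have b1' : √((l - 1 : ℕ) : ℝ) ≤ √l := Real.sqrt_le_sqrt (by linarith)
    have t2 : |∑ k ∈ Finset.Ico 1 l, (δ k l ^ 2 - 9 / 64 * (1 / ((l : ℝ) - k)))| ≤ 4 * E := by
      refine (Finset.abs_sum_le_sum_abs _ _).trans ((Finset.sum_le_sum t1).trans ?_)
      rw [← Finset.mul_sum, Finset.sum_add_distrib, ← Finset.mul_sum, s1, s2]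
      have c1 : 1 / √(l : ℝ) * ∑ m ∈ Finset.range (l - 1), 1 / √((m : ℝ) + 1) ≤ 2 := by
        calc _ ≤ 1 / √(l : ℝ) * (2 * √l) := by gcongr; linarith
          _ = 2 := by field_simp
      nlinarith
    rw [Finset.sum_sub_distrib, ← Finset.mul_sum, s3] at t2
    rw [abs_le] at *
    constructor <;> linarith [t2.1, t2.2, b3.1, b3.2]
  have hl := sum_log D
  have tot : |∑ l ∈ Finset.Icc 1 D, (1 + 2 * ∑ k ∈ Finset.Ico 1 l, δ k l ^ 2 - 9 / 32 * Real.log l)| ≤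
      (1 + 2 * (4 * E + 9 / 64)) * D := by
    refine (Finset.abs_sum_le_sum_abs _ _).trans ?_
    calc _ ≤ ∑ l ∈ Finset.Icc 1 D, (1 + 2 * (4 * E + 9 / 64)) := by
          refine Finset.sum_le_sum fun l hl => ?_
          have := row l hl
          rw [abs_le] at *
          constructor <;> linarith [this.1, this.2]
      _ = _ := by simp; ring
  rw [Finset.sum_sub_distrib, ← Finset.mul_sum, ← e0] at tot
  have hD : (0 : ℝ) ≤ D := by positivity
  rw [abs_le] at *
  constructor <;> nlinarith [tot.1, tot.2, hl.1, hl.2]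

lemma dlog {x : ℝ} (hx : 0 < x) {d : ℕ} (hd : 3 ≤ d) :
    |(⌊(d : ℝ) * x⌋₊ : ℝ) * Real.log ⌊(d : ℝ) * x⌋₊ - d * x * Real.log d| ≤
      (1 + x * (1 + |Real.log x|)) * d := by
  have hd3 : (3 : ℝ) ≤ d := by exact_mod_cast hd
  have hlogd : 0 < Real.log d := Real.log_pos (by linarith)
  have hlogd' : Real.log d ≤ d := (Real.log_le_sub_one_of_pos (by linarith)).trans (by linarith)
  set u := (d : ℝ) * x with hu
  have hu0 : 0 < u := by positivity
  have f1 : (⌊u⌋₊ : ℝ) ≤ u := Nat.floor_le hu0.le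
  have f2 : u < ⌊u⌋₊ + 1 := Nat.lt_floor_add_one u
  set D := ⌊u⌋₊ with hD
  have hab : 0 ≤ |Real.log x| := abs_nonneg _
  have hR : (1 + x * (1 + |Real.log x|)) * d = d + u + u * |Real.log x| := by rw [hu]; ring
  rw [hR]
  have hux : 0 ≤ u * |Real.log x| := by positivity
  rcases Nat.eq_zero_or_pos D with h0 | h0
  · rw [h0] at f2 ⊢
    simp only [Nat.cast_zero, zero_mul, zero_sub, abs_neg, zero_add] at f2 ⊢
    rw [abs_of_pos (by positivity)]
    nlinarith
  · have hD1 : (1 : ℝ) ≤ D := by exact_mod_cast h0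
    have hlu : Real.log u = Real.log d + Real.log x := Real.log_mul (by linarith) hx.ne'
    have hlu2 : Real.log u ≤ u - 1 := Real.log_le_sub_one_of_pos hu0
    have hlu0 : 0 ≤ Real.log u := Real.log_nonneg (by linarith)
    have hlD : Real.log D ≤ Real.log u := Real.log_le_log (by linarith) f1
    have hlD0 : 0 ≤ Real.log D := Real.log_nonneg hD1
    have g1 : D * (Real.log u - Real.log D) ≤ 1 := by
      rw [← Real.log_div (by linarith) (by linarith)]
      have : Real.log (u / D) ≤ u / D - 1 := Real.log_le_sub_one_of_pos (by positivity)
      calc D * Real.log (u / D) ≤ D * (u / D - 1) := by gcongr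
        _ = u - D := by field_simp
        _ ≤ 1 := by linarith
    have g2 : u * Real.log u - D * Real.log D ≤ u := by
      have : (u - D) * Real.log u ≤ 1 * Real.log u := by gcongr; linarith
      nlinarith
    have g3 : 0 ≤ u * Real.log u - D * Real.log D := by nlinarith
    have g4 : |u * Real.log x| = u * |Real.log x| := by rw [abs_mul, abs_of_pos hu0]
    have g5 := abs_le.1 g4.le
    have g6 : D * Real.log D - u * Real.log d =
        -(u * Real.log u - D * Real.log D) + u * Real.log x := by rw [hlu]; ring
    rw [g6, abs_le]
    constructor <;> linarith [g5.1, g5.2]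

lemma key_all {δ : ℕ → ℕ → ℝ} {D : ℕ} {C : ℝ} (hC : 0 < C)
    (h1 : ∀ k ∈ Finset.Icc 1 D, ∀ l ∈ Finset.Icc 1 D, |δ k l| ≤ 1)
    (h : ∀ k l : ℕ, 1 ≤ k → k + 2 ≤ l → |δ k l - 3 / 8 * (1 / √((l : ℝ) - k))| ≤
      C * (1 / √l + 1 / (((l : ℝ) - k) * √((l : ℝ) - k)))) :
    ∀ k ∈ Finset.Icc 1 D, ∀ l ∈ Finset.Icc 1 D, k < l →
      |δ k l - 3 / 8 * (1 / √((l : ℝ) - k))| ≤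
      (C + 2) * (1 / √l + 1 / (((l : ℝ) - k) * √((l : ℝ) - k))) := by
  intro k hk l hl hkl
  have hk1 := (Finset.mem_Icc.1 hk).1
  have hm : (1 : ℝ) ≤ (l : ℝ) - k := by
    have : (k : ℝ) + 1 ≤ l := by exact_mod_cast hkl
    linarith
  have hsl : 0 ≤ 1 / √(l : ℝ) := by positivity
  have hm0 : (0 : ℝ) < (l : ℝ) - k := by linarith
  rcases Nat.lt_or_ge l (k + 2) with h2 | h2
  · have e : l = k + 1 := by omega
    subst e
    have := h1 k hk _ hl
    push_cast at *
    simp only [add_sub_cancel_left, Real.sqrt_one, mul_one, div_one]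
    rw [abs_le] at *
    constructor <;> nlinarith [this.1, this.2]
  · refine (h k l hk1 h2).trans ?_
    have : 0 ≤ 1 / (((l : ℝ) - k) * √((l : ℝ) - k)) := by positivity
    gcongr
    linarith

lemma key_abs {δ : ℕ → ℕ → ℝ} {D : ℕ} {C : ℝ} (hC : 0 < C) (hd : ∀ k, δ k k = 1)
    (hs : ∀ k l, δ k l = δ l k)
    (h : ∀ k ∈ Finset.Icc 1 D, ∀ l ∈ Finset.Icc 1 D, k < l →
      |δ k l - 3 / 8 * (1 / √((l : ℝ) - k))| ≤
      C * (1 / √l + 1 / (((l : ℝ) - k) * √((l : ℝ) - k)))) :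
    ∀ k ∈ Finset.Icc 1 D, ∀ l ∈ Finset.Icc 1 D, |δ k l| ≤ (1 + 2 * C) * om (Nat.dist k l) ^ 3 := by
  have main : ∀ k ∈ Finset.Icc 1 D, ∀ l ∈ Finset.Icc 1 D, k < l →
      |δ k l| ≤ (1 + 2 * C) * om (Nat.dist k l) ^ 3 := by
    intro k hk l hl hkl
    have hm : (1 : ℝ) ≤ (l : ℝ) - k := by
      have : (k : ℝ) + 1 ≤ l := by exact_mod_cast hkl
      linarith
    rw [Nat.dist_eq_sub_of_le hkl.le, om_three _ (by omega), Nat.cast_sub hkl.le]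
    have := h k hk l hl hkl
    have hk0 : (0 : ℝ) ≤ k := by positivity
    set m := (l : ℝ) - k
    have hsm : 0 < √m := Real.sqrt_pos.2 (by linarith)
    have b1 : 1 / √(l : ℝ) ≤ 1 / √m :=
      one_div_le_one_div_of_le hsm (Real.sqrt_le_sqrt (by simp only [m]; linarith))
    have b2 : 1 / (m * √m) ≤ 1 / √m := one_div_le_one_div_of_le hsm (by nlinarith)
    have b3 : 0 < 1 / √m := by positivity
    have b4 : C * (1 / √l + 1 / (m * √m)) ≤ C * (1 / √m + 1 / √m) := by gcongr
    rw [abs_le] at *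
    constructor <;> linarith [this.1, this.2]
  intro k hk l hl
  rcases lt_trichotomy k l with h1 | h1 | h1
  · exact main k hk l hl h1
  · subst h1
    rw [hd, Nat.dist_self]
    simp [om]; positivity
  · rw [hs, Nat.dist_comm]; exact main l hl k hk h1

lemma final_num {n d : ℕ} (hn : 1 ≤ n) (hd : 3 ≤ d) {r x T4 T2 K4 K2 : ℝ} (hr : 0 < r) (hx : 0 < x)
    (hK4 : 0 ≤ K4) (hK2 : 0 ≤ K2)
    (h4 : T4 ≤ K4 * (d : ℝ) ^ 2) (h2 : |T2 - r * (d * Real.log d)| ≤ K2 * d) :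
    Real.pi / 2 * (r⁻¹ * Real.sqrt (r * (n + 1) *
      ((√((d : ℝ) * Real.log d))⁻¹ ^ 4 * ((n : ℝ) ^ 2 + n) * T4 +
        n * ((√((d : ℝ) * Real.log d))⁻¹ ^ 2 * T2 - r) ^ 2))) ≤
    (Real.pi / 2 * (r⁻¹ * √(2 * r * (2 * K4 + K2 ^ 2))) + 1) * (n : ℝ) ^ ((3 : ℝ) / 2) /
      Real.log d := by
  have hd3 : (3 : ℝ) ≤ d := by exact_mod_cast hd
  have hn1 : (1 : ℝ) ≤ n := by exact_mod_cast hn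
  have hL : 0 < Real.log d := Real.log_pos (by linarith)
  set L := Real.log d with hLd
  set M := 2 * r * (2 * K4 + K2 ^ 2) with hM
  have hM0 : 0 ≤ M := by positivity
  have c2 : (√((d : ℝ) * L))⁻¹ ^ 2 = 1 / (d * L) := by
    rw [inv_pow, Real.sq_sqrt (by positivity), one_div]
  have c4 : (√((d : ℝ) * L))⁻¹ ^ 4 = 1 / (d * L) ^ 2 := by
    rw [show (√((d : ℝ) * L))⁻¹ ^ 4 = ((√((d : ℝ) * L))⁻¹ ^ 2) ^ 2 by ring, c2]
    rw [div_pow, one_pow]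
  rw [c2, c4]
  have i1 : 1 / ((d : ℝ) * L) ^ 2 * T4 ≤ K4 / L ^ 2 := by
    calc 1 / ((d : ℝ) * L) ^ 2 * T4 ≤ 1 / ((d : ℝ) * L) ^ 2 * (K4 * (d : ℝ) ^ 2) := by gcongr
      _ = K4 / L ^ 2 := by field_simp
  have i2 : (1 / (d * L) * T2 - r) ^ 2 ≤ K2 ^ 2 / L ^ 2 := by
    have e : 1 / (d * L) * T2 - r = (T2 - r * (d * L)) / (d * L) := by field_simp
    rw [e, div_pow, ← sq_abs]
    calc |T2 - r * (d * L)| ^ 2 / (d * L) ^ 2 ≤ (K2 * d) ^ 2 / (d * L) ^ 2 := by gcongr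
      _ = _ := by field_simp
  have hn3 : ((n : ℝ) ^ ((3 : ℝ) / 2)) ^ 2 = (n : ℝ) ^ 3 := by
    rw [← Real.rpow_natCast, ← Real.rpow_mul (by positivity), ← Real.rpow_natCast]; norm_num
  have hs : Real.sqrt (r * (n + 1) * (1 / ((d : ℝ) * L) ^ 2 * ((n : ℝ) ^ 2 + n) * T4 +
        n * (1 / (d * L) * T2 - r) ^ 2)) ≤ √M * (n : ℝ) ^ ((3 : ℝ) / 2) / L := by
    apply Real.sqrt_le_iff.2
    refine ⟨by positivity, ?_⟩
    have e7 : (√M * (n : ℝ) ^ ((3 : ℝ) / 2) / L) ^ 2 = M * (n : ℝ) ^ 3 / L ^ 2 := by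
      rw [div_pow, mul_pow, hn3, Real.sq_sqrt hM0]
    rw [e7]
    have a1 : 1 / ((d : ℝ) * L) ^ 2 * ((n : ℝ) ^ 2 + n) * T4 ≤ 2 * n ^ 2 * (K4 / L ^ 2) := by
      calc 1 / ((d : ℝ) * L) ^ 2 * ((n : ℝ) ^ 2 + n) * T4 =
          ((n : ℝ) ^ 2 + n) * (1 / ((d : ℝ) * L) ^ 2 * T4) := by ring
        _ ≤ ((n : ℝ) ^ 2 + n) * (K4 / L ^ 2) := by gcongr
        _ ≤ _ := by
          gcongr
          nlinarith
    have a2 : n * (1 / (d * L) * T2 - r) ^ 2 ≤ n ^ 2 * (K2 ^ 2 / L ^ 2) := by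
      calc n * (1 / (d * L) * T2 - r) ^ 2 ≤ n * (K2 ^ 2 / L ^ 2) := by gcongr
        _ ≤ _ := by
          gcongr
          nlinarith
    calc _ ≤ r * (n + 1) * (2 * n ^ 2 * (K4 / L ^ 2) + n ^ 2 * (K2 ^ 2 / L ^ 2)) := by gcongr
      _ ≤ r * (2 * n) * (2 * n ^ 2 * (K4 / L ^ 2) + n ^ 2 * (K2 ^ 2 / L ^ 2)) := by
        gcongr; linarith
      _ = _ := by rw [hM]; field_simp
  have hpi := Real.pi_pos
  calc _ ≤ Real.pi / 2 * (r⁻¹ * (√M * (n : ℝ) ^ ((3 : ℝ) / 2) / L)) := by gcongr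
    _ = (Real.pi / 2 * (r⁻¹ * √M)) * (n : ℝ) ^ ((3 : ℝ) / 2) / L := by ring
    _ ≤ _ := by gcongr; linarith

/-- for `α = 3/2` (so `β ∈ [3/4,1)`) there is a constant `C > 0`,
depending only on `φ, ψ, β, λ, a, b, x` (not on `n` or `d`), such that for all
`n ≥ 1`, `d ≥ 3`, `d_W(W̃_{n,⌊dx⌋}, Z̃_n) ≤ C n^{3/2} / ln d`, where `W̃` has
entries `(d ln d)^{−1/2} Σ_{k=1}^{⌊dx⌋}(Y^i_k Y^j_k − 1_{i=j})` and `Z̃_n` is the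
GOE matrix with entry variances `ρ² = 9x/32` (resp. `2ρ²` on the diagonal). -/
theorem wishart_central_convergence_threehalf (β lam α ν : ℝ) (φ ψ : ℝ → ℝ)
    (hyp : SelfSimilarHyp β lam α ν φ ψ)
    (hΔpos : ∀ k : ℕ, 0 < covΔ β φ k k)
    (hα : α = 3 / 2)
    (a b x : ℝ) (ha : 0 < a) (hab : a < b) (hx : x ∈ Set.Icc a b) :
    ∃ C : ℝ, 0 < C ∧
      ∀ (n d : ℕ), 1 ≤ n → 3 ≤ d →
      ∀ (Ω₁ Ω₂ : Type) (_ : MeasurableSpace Ω₁) (_ : MeasurableSpace Ω₂)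
        (P₁ : Measure Ω₁) (P₂ : Measure Ω₂),
        IsProbabilityMeasure P₁ → IsProbabilityMeasure P₂ →
      -- the underlying Gaussian entries `Y^i_k`
      ∀ Y : Fin n → ℕ → Ω₁ → ℝ,
        (∀ (i : Fin n) (k : ℕ), Measurable (Y i k)) →
        IsCenteredGaussianFamily P₁ (fun p : Fin n × ℕ => Y p.1 p.2) →
        (∀ (i j : Fin n) (k l : ℕ),
          k ∈ Finset.Icc 1 ⌊(d : ℝ) * x⌋₊ → l ∈ Finset.Icc 1 ⌊(d : ℝ) * x⌋₊ →
          ∫ ω, Y i k ω * Y j l ω ∂P₁ = if i = j then covδ β φ k l else 0) →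
      -- a GOE matrix `Z̃_n` with entry variances `ρ² = 9x/32` (resp. `2ρ²`)
      ∀ Z : Ω₂ → Matrix (Fin n) (Fin n) ℝ,
        (∀ i j : Fin n, Measurable fun ω => Z ω i j) →
        (∀ (ω : Ω₂) (i j : Fin n), Z ω i j = Z ω j i) →
        (∀ i : Fin n, P₂.map (fun ω => Z ω i i)
          = gaussianReal 0 (Real.toNNReal (2 * (9 * x / 32)))) →
        (∀ i j : Fin n, i ≠ j → P₂.map (fun ω => Z ω i j)
          = gaussianReal 0 (Real.toNNReal (9 * x / 32))) →
        iIndepFun (m := fun _ => (inferInstance : MeasurableSpace ℝ))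
          (fun (p : {p : Fin n × Fin n // p.1 ≤ p.2}) ω => Z ω p.1.1 p.1.2) P₂ →
        wassersteinDist P₁ P₂
          (fun ω => Matrix.of fun i j : Fin n =>
            (Real.sqrt ((d : ℝ) * Real.log d))⁻¹ * ∑ k ∈ Finset.Icc 1 ⌊(d : ℝ) * x⌋₊,
              (Y i k ω * Y j k ω - if i = j then 1 else 0))
          Z
        ≤ C * (n : ℝ) ^ ((3 : ℝ) / 2) / Real.log d := by
  have hx0 : 0 < x := lt_of_lt_of_le ha hx.1
  obtain ⟨C₀, C₁, h⟩ := H32.of_hyp hyp hα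
  obtain ⟨C, hC, hkey⟩ := h.key hΔpos
  have hr : 0 < 9 * x / 32 := by positivity
  have hdd : ∀ k, covδ β φ k k = 1 := by
    intro k
    have := hΔpos k
    unfold covδ
    rw [Real.sqrt_mul_self this.le, div_self this.ne']
  have hds : ∀ k l, covδ β φ k l = covδ β φ l k := covδ_symm
  set A := 1 + 2 * (C + 2) with hA
  have hA0 : 0 < A := by positivity
  set E := 2 + 8 * ((C + 2) * (1 + 2 * (C + 2))) with hE
  have hE0 : 0 < E := by positivity
  set K4 := A ^ 4 * 1728 * x ^ 2 with hK4
  set K2 := E * x + 9 / 32 * (1 + x * (1 + |Real.log x|)) with hK2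
  have hK40 : 0 ≤ K4 := by positivity
  have hK20 : 0 ≤ K2 := by positivity
  have hpi := Real.pi_pos
  refine ⟨Real.pi / 2 * ((9 * x / 32)⁻¹ * √(2 * (9 * x / 32) * (2 * K4 + K2 ^ 2))) + 1,
    by positivity, ?_⟩
  intro n d hn hd Ω₁ Ω₂ _ _ P₁ P₂ _ _ Y hYm hYg hYc Z hZm hZs hZd hZo hZi
  refine (wass_bound (covδ β φ) hdd hds hr _ Y hYm hYg hYc Z hZm hZs hZd hZo hZi).trans ?_
  have hle := cov_le_one hn (covδ β φ) hdd Y hYm hYc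
  have k1 := key_all hC hle hkey
  have k2 := key_abs (by linarith : 0 < C + 2) hdd hds k1
  have t4 := tau4_bound hA0.le k2
  have t2 := tau2_bound (by linarith : 0 < C + 2) hdd hds k1
  have hdl := dlog hx0 hd
  have hfl : (⌊(d : ℝ) * x⌋₊ : ℝ) ≤ d * x := Nat.floor_le (by positivity)
  refine final_num hn hd hr hx0 hK40 hK20 (t4.trans ?_) ?_
  · rw [hK4]
    calc A ^ 4 * 1728 * (⌊(d : ℝ) * x⌋₊ : ℝ) ^ 2 ≤ A ^ 4 * 1728 * ((d : ℝ) * x) ^ 2 := by gcongr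
      _ = _ := by ring
  · have b1 : E * (⌊(d : ℝ) * x⌋₊ : ℝ) ≤ E * (d * x) := by gcongr
    rw [← hE] at t2
    rw [hK2]
    rw [abs_le] at *
    constructor <;> linarith [t2.1, t2.2, hdl.1, hdl.2]
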